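/- arXiv:math/9510203 — 3 statements merged into one kernel-verified Lean document; each statement's English description precedes it below -/
import Mathlib

section
/- There exists a universal constant c > 0 with the following property. Let ρ ∈ (0,1), let n be a positive integer, and let A, B ⊂ ℝⁿ be measurable sets with 0 < λ(A) < ∞, 0 < λ(B) < ∞ and ρ ≤ (λ(B)/λ(A))^{1/n} ≤ ρ⁻¹. Let Θ ⊂ A × B be a measurable set with λ(Θ) ≥ (1 − c·min{ρ√n, 1})·λ(A)·λ(B). Then λ(A +_Θ B)^{2/n} ≥ λ(A)^{2/n} + λ(B)^{2/n}. -/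
open MeasureTheory

/-- The restricted (to `Θ`) Minkowski sum `A +_Θ B = { x + y : (x, y) ∈ Θ }`. -/
def restrictedSum {n : ℕ} (Θ : Set (EuclideanSpace ℝ (Fin n) × EuclideanSpace ℝ (Fin n))) :
    Set (EuclideanSpace ℝ (Fin n)) :=
  (fun p => p.1 + p.2) '' Θ

section

open Set Filter Topology ProbabilityTheory
open scoped ENNReal

/-- The distribution function of the standard Gaussian measure. -/
noncomputable def gaussCDF (t : ℝ) : ℝ := ∫ x in Iic t, gaussianPDFReal 0 1 x

lemma setIntegral_Iic_eq_add_intervalIntegral {f : ℝ → ℝ} (hf : Integrable f) (t : ℝ) :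
    ∫ x in Iic t, f x = (∫ x in Iic 0, f x) + ∫ x in (0 : ℝ)..t, f x := by
  rw [← intervalIntegral.integral_Iic_sub_Iic hf.integrableOn hf.integrableOn]
  ring

lemma hasDerivAt_gaussCDF (t : ℝ) : HasDerivAt gaussCDF (gaussianPDFReal 0 1 t) t := by
  have hc : Continuous (gaussianPDFReal 0 1) := by
    rw [gaussianPDFReal_def]; fun_prop
  have h : gaussCDF = fun t => (∫ x in Iic 0, gaussianPDFReal 0 1 x) +
      ∫ x in (0 : ℝ)..t, gaussianPDFReal 0 1 x :=
    funext (setIntegral_Iic_eq_add_intervalIntegral (integrable_gaussianPDFReal 0 1))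
  rw [h]
  exact (intervalIntegral.integral_hasDerivAt_right (hc.intervalIntegrable _ _)
    hc.stronglyMeasurable.stronglyMeasurableAtFilter hc.continuousAt).const_add _

lemma strictMono_gaussCDF : StrictMono gaussCDF :=
  strictMono_of_hasDerivAt_pos hasDerivAt_gaussCDF
    fun t => gaussianPDFReal_pos 0 1 t one_ne_zero

lemma continuous_gaussCDF : Continuous gaussCDF :=
  continuous_iff_continuousAt.2 fun t => (hasDerivAt_gaussCDF t).continuousAt

lemma gaussCDF_eq_cdf : gaussCDF = cdf (gaussianReal 0 1) := by
  ext t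
  rw [cdf_eq_real, measureReal_def, gaussianReal_apply_eq_integral 0 one_ne_zero,
    ENNReal.toReal_ofReal, gaussCDF]
  exact integral_nonneg fun x => gaussianPDFReal_nonneg 0 1 x

lemma range_gaussCDF : range gaussCDF = Ioo 0 1 := by
  apply Subset.antisymm
  · rintro _ ⟨t, rfl⟩
    have h1 := strictMono_gaussCDF (show t - 1 < t by linarith)
    have h2 := strictMono_gaussCDF (show t < t + 1 by linarith)
    rw [gaussCDF_eq_cdf] at *
    exact ⟨(cdf_nonneg _ _).trans_lt h1, h2.trans_le (cdf_le_one _ _)⟩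
  · intro u hu
    have h0 := tendsto_cdf_atBot (gaussianReal 0 1)
    have h1 := tendsto_cdf_atTop (gaussianReal 0 1)
    rw [← gaussCDF_eq_cdf] at h0 h1
    obtain ⟨a, ha⟩ := (h0.eventually (gt_mem_nhds hu.1)).exists
    obtain ⟨b, hb⟩ := (h1.eventually (lt_mem_nhds hu.2)).exists
    exact mem_range_of_exists_le_of_exists_ge continuous_gaussCDF ⟨a, ha.le⟩ ⟨b, hb.le⟩

/-- The quantile function of the standard Gaussian measure (junk outside of `(0, 1)`). -/
noncomputable def gaussQuantile : ℝ → ℝ := Function.invFun gaussCDF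

lemma gaussQuantile_gaussCDF (t : ℝ) : gaussQuantile (gaussCDF t) = t :=
  Function.leftInverse_invFun strictMono_gaussCDF.injective t

lemma gaussCDF_gaussQuantile {u : ℝ} (hu : u ∈ Ioo (0 : ℝ) 1) : gaussCDF (gaussQuantile u) = u :=
  Function.invFun_eq (by rwa [← range_gaussCDF] at hu)

lemma strictMonoOn_gaussQuantile : StrictMonoOn gaussQuantile (Ioo 0 1) := by
  intro u hu v hv huv
  rwa [← strictMono_gaussCDF.lt_iff_lt, gaussCDF_gaussQuantile hu, gaussCDF_gaussQuantile hv]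

lemma measurable_gaussQuantile : Measurable gaussQuantile := by
  refine measurable_of_restrict_of_restrict_compl (measurableSet_Ioo (a := (0 : ℝ)) (b := 1)) ?_ ?_
  · refine Monotone.measurable fun u v huv => ?_
    exact strictMonoOn_gaussQuantile.monotoneOn u.2 v.2 huv
  · have : (Ioo (0 : ℝ) 1)ᶜ.domRestrict gaussQuantile = fun _ => Classical.choice ⟨(0 : ℝ)⟩ := by
      ext u
      have : ¬ ∃ t, gaussCDF t = u := fun h => u.2 (range_gaussCDF.subset h)
      exact Function.invFun_neg this
    rw [this]
    exact measurable_const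

lemma hasDerivAt_gaussQuantile {u : ℝ} (hu : u ∈ Ioo (0 : ℝ) 1) :
    HasDerivAt gaussQuantile (gaussianPDFReal 0 1 (gaussQuantile u))⁻¹ u := by
  have hn : Ioo (0 : ℝ) 1 ∈ 𝓝 u := isOpen_Ioo.mem_nhds hu
  refine HasDerivAt.of_local_left_inverse ?_ (hasDerivAt_gaussCDF _)
    (gaussianPDFReal_pos 0 1 _ one_ne_zero).ne' ?_
  · refine strictMonoOn_gaussQuantile.continuousAt_of_image_mem_nhds hn ?_
    have : gaussQuantile '' Ioo 0 1 = univ := by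
      rw [← range_gaussCDF, ← range_comp]
      exact eq_univ_of_forall fun t => ⟨t, gaussQuantile_gaussCDF t⟩
    rw [this]; exact univ_mem
  · filter_upwards [hn] with v hv using gaussCDF_gaussQuantile hv

/-- The expectation of `exp (t X Y)` for independent standard Gaussian variables `X`, `Y`. -/
lemma lintegral_lintegral_exp_mul_gaussianReal {t : ℝ} (ht : t ^ 2 < 1) :
    ∫⁻ u, ∫⁻ v, ENNReal.ofReal (Real.exp (t * (u * v))) ∂(gaussianReal 0 1) ∂(gaussianReal 0 1)
      = ENNReal.ofReal (√(1 - t ^ 2))⁻¹ := by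
  have h1 : ∀ u : ℝ, ∫⁻ v, ENNReal.ofReal (Real.exp (t * (u * v))) ∂(gaussianReal 0 1)
      = ENNReal.ofReal (Real.exp (t ^ 2 * u ^ 2 / 2)) := by
    intro u
    have h := congrFun (mgf_id_gaussianReal (μ := 0) (v := 1)) (t * u)
    rw [← ofReal_integral_eq_lintegral_ofReal]
    · congr 1
      simp only [mgf, id, zero_mul, NNReal.coe_one, one_mul, zero_add] at h
      simp only [← mul_assoc, h]
      ring_nf
    · have := integrable_exp_mul_gaussianReal (μ := 0) (v := 1) (t * u)
      simpa only [← mul_assoc] using this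
    · exact ae_of_all _ fun v => (Real.exp_pos _).le
  simp only [h1]
  rw [gaussianReal_of_var_ne_zero _ one_ne_zero,
    lintegral_withDensity_eq_lintegral_mul _ (measurable_gaussianPDF 0 1) (by fun_prop)]
  have h2 : ∀ u : ℝ, (gaussianPDF 0 1 * fun u => ENNReal.ofReal (Real.exp (t ^ 2 * u ^ 2 / 2))) u
      = ENNReal.ofReal ((√(2 * Real.pi))⁻¹ * Real.exp (-((1 - t ^ 2) / 2) * u ^ 2)) := by
    intro u
    rw [Pi.mul_apply, gaussianPDF, ← ENNReal.ofReal_mul (gaussianPDFReal_nonneg _ _ _),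
      gaussianPDFReal, mul_assoc, ← Real.exp_add]
    simp only [NNReal.coe_one, mul_one, sub_zero]
    congr 3
    ring
  have hb : 0 < (1 - t ^ 2) / 2 := by linarith
  rw [lintegral_congr h2, ← ofReal_integral_eq_lintegral_ofReal
    ((integrable_exp_neg_mul_sq hb).const_mul _) (ae_of_all _ fun u => by positivity),
    integral_const_mul, integral_gaussian]
  congr 1
  rw [← Real.sqrt_inv, ← Real.sqrt_mul (by positivity), ← Real.sqrt_inv]
  congr 1
  have := Real.pi_pos
  have : 1 - t ^ 2 ≠ 0 := by linarith
  field_simp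

/-- The monotone map which transports a density on `ℝ` to the standard Gaussian density. -/
noncomputable def gaussTransport (f : ℝ → ℝ≥0∞) (x : ℝ) : ℝ :=
  gaussQuantile ((∫⁻ t in Iic x, f t) / ∫⁻ t, f t).toReal

/-- The transport map `gaussTransport f` is strictly increasing and satisfies the Monge-Ampère
equation on a set which carries the whole mass of `f`. -/
lemma exists_gaussTransport_regular {f : ℝ → ℝ≥0∞} (hf : Measurable f)
    (h0 : ∫⁻ t, f t ≠ 0) (htop : ∫⁻ t, f t ≠ ∞) :
    ∃ (s : Set ℝ) (d : ℝ → ℝ), MeasurableSet s ∧ StrictMonoOn (gaussTransport f) s ∧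
      (∀ x ∈ s, 0 < d x ∧ HasDerivAt (gaussTransport f) (d x) x ∧
        f x = (∫⁻ t, f t) * ENNReal.ofReal (gaussianPDFReal 0 1 (gaussTransport f x) * d x)) ∧
      ∀ᵐ x, x ∉ s → f x = 0 := by
  set I := ∫⁻ t, f t with hI
  set F : ℝ → ℝ := fun x => ((∫⁻ t in Iic x, f t) / I).toReal with hF
  set r : ℝ → ℝ := fun x => (f x / I).toReal with hr
  have hfin : ∀ᵐ x, f x < ∞ := ae_lt_top hf htop
  have hrI : Integrable r := by
    refine integrable_toReal_of_lintegral_ne_top (hf.div_const I).aemeasurable ?_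
    simp only [div_eq_mul_inv]
    rw [lintegral_mul_const _ hf, ← hI, ENNReal.mul_inv_cancel h0 htop]
    exact ENNReal.one_ne_top
  have hFr : ∀ x, F x = ∫ t in Iic x, r t := by
    intro x
    rw [integral_toReal (hf.div_const I).aemeasurable]
    · simp only [hF, div_eq_mul_inv]
      rw [lintegral_mul_const _ hf]
    · filter_upwards [ae_restrict_of_ae hfin] with t ht using ENNReal.div_lt_top ht.ne h0
  have hderiv : ∀ᵐ x, HasDerivAt F (r x) x := by
    filter_upwards [LocallyIntegrable.ae_hasDerivAt_integral hrI.locallyIntegrable] with x hx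
    rw [show F = _ from funext fun x =>
      (hFr x).trans (setIntegral_Iic_eq_add_intervalIntegral hrI x)]
    exact (hx 0).const_add _
  have hmono : Monotone F := by
    intro x y hxy
    refine ENNReal.toReal_mono ?_ (ENNReal.div_le_div_right
      (lintegral_mono_set (Iic_subset_Iic.2 hxy)) _)
    exact (ENNReal.div_lt_top ((setLIntegral_le_lintegral _ _).trans_lt htop.lt_top).ne h0).ne
  have hF0 : ∀ x, 0 ≤ F x := fun x => ENNReal.toReal_nonneg
  have hF1 : ∀ x, F x ≤ 1 := by
    intro x
    refine ENNReal.toReal_le_of_le_ofReal zero_le_one ?_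
    rw [ENNReal.ofReal_one]
    exact ENNReal.div_le_of_le_mul (by rw [one_mul]; exact setLIntegral_le_lintegral _ _)
  set s : Set ℝ := {x | 0 < r x} ∩ ({x | DifferentiableAt ℝ F x} ∩ {x | deriv F x = r x}) with hs
  have hrm : Measurable r := (hf.div_const I).ennreal_toReal
  have hsd : ∀ x ∈ s, HasDerivAt F (r x) x := by
    rintro x ⟨-, h1, h2⟩
    rw [← show deriv F x = r x from h2]
    exact h1.hasDerivAt
  have hlt : ∀ x ∈ s, ∀ y, x < y → F x < F y := by
    intro x hx y hxy
    refine lt_of_le_of_ne (hmono hxy.le) fun heq => ?_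
    have hc : HasDerivWithinAt F 0 (Ioi x) x := by
      refine (hasDerivWithinAt_const x (Ioi x) (F x)).congr_of_eventuallyEq ?_ rfl
      filter_upwards [Ioo_mem_nhdsGT hxy] with z hz
      exact le_antisymm (heq ▸ hmono hz.2.le) (hmono hz.1.le)
    have := (uniqueDiffWithinAt_Ioi x).eq_deriv _ hc (hsd x hx).hasDerivWithinAt
    exact hx.1.ne this
  have hgt : ∀ x ∈ s, ∀ y, y < x → F y < F x := by
    intro x hx y hxy
    refine lt_of_le_of_ne (hmono hxy.le) fun heq => ?_
    have hc : HasDerivWithinAt F 0 (Iio x) x := by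
      refine (hasDerivWithinAt_const x (Iio x) (F x)).congr_of_eventuallyEq ?_ rfl
      filter_upwards [Ioo_mem_nhdsLT hxy] with z hz
      exact le_antisymm (hmono hz.2.le) (heq ▸ hmono hz.1.le)
    have := (uniqueDiffWithinAt_Iio x).eq_deriv _ hc (hsd x hx).hasDerivWithinAt
    exact hx.1.ne this
  have hIoo : ∀ x ∈ s, F x ∈ Ioo (0 : ℝ) 1 := fun x hx =>
    ⟨(hF0 _).trans_lt (hgt x hx (x - 1) (by linarith)),
      (hlt x hx (x + 1) (by linarith)).trans_le (hF1 _)⟩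
  refine ⟨s, fun x => (gaussianPDFReal 0 1 (gaussTransport f x))⁻¹ * r x, ?_, ?_, ?_, ?_⟩
  · exact (measurableSet_lt measurable_const hrm).inter
      ((measurableSet_of_differentiableAt ℝ F).inter
        (measurableSet_eq_fun (measurable_deriv F) hrm))
  · intro x hx y hy hxy
    exact strictMonoOn_gaussQuantile (hIoo x hx) (hIoo y hy) (hlt x hx y hxy)
  · intro x hx
    have hpos := gaussianPDFReal_pos 0 1 (gaussTransport f x) one_ne_zero
    refine ⟨mul_pos (inv_pos.2 hpos) hx.1,
      (hasDerivAt_gaussQuantile (hIoo x hx)).comp x (hsd x hx), ?_⟩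
    have hne : f x / I ≠ ∞ := fun h => by
      have h' : 0 < (f x / I).toReal := hx.1
      rw [h, ENNReal.toReal_top] at h'
      exact h'.false
    rw [mul_inv_cancel_left₀ hpos.ne', ENNReal.ofReal_toReal hne, ENNReal.mul_div_cancel h0 htop]
  · filter_upwards [hderiv, hfin] with x hx hx' hxs
    by_contra hne
    refine hxs ⟨ENNReal.toReal_pos (ENNReal.div_pos hne htop).ne' ?_, hx.differentiableAt, hx.deriv⟩
    exact (ENNReal.div_lt_top hx'.ne h0).ne

/-- `gaussTransport f` pushes the measure with density `f` to a multiple of the Gaussian. -/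
lemma lintegral_mul_comp_gaussTransport {f : ℝ → ℝ≥0∞} (hf : Measurable f)
    (htop : ∫⁻ t, f t ≠ ∞) {k : ℝ → ℝ≥0∞} (hk : Measurable k) :
    ∫⁻ x, f x * k (gaussTransport f x) = (∫⁻ t, f t) * ∫⁻ u, k u ∂(gaussianReal 0 1) := by
  rcases eq_or_ne (∫⁻ t, f t) 0 with h0 | h0
  · rw [h0, zero_mul]
    rw [lintegral_eq_zero_iff hf] at h0
    refine lintegral_eq_zero_of_ae_eq_zero ?_
    filter_upwards [h0] with x hx
    simp [hx]
  obtain ⟨s, d, hs, hmono, hd, hae⟩ := exists_gaussTransport_regular hf h0 htop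
  set T := gaussTransport f '' s with hT
  have hTm : MeasurableSet T := measurable_image_of_fderivWithin hs
    (fun x hx => (hd x hx).2.1.hasDerivWithinAt.hasFDerivWithinAt) hmono.injOn
  have key : ∀ k : ℝ → ℝ≥0∞, Measurable k → ∫⁻ x, f x * k (gaussTransport f x)
      = (∫⁻ t, f t) * ∫⁻ u in T, k u ∂(gaussianReal 0 1) := by
    intro k hk
    have h1 : ∫⁻ x, f x * k (gaussTransport f x)
        = ∫⁻ x in s, f x * k (gaussTransport f x) := by
      rw [← lintegral_indicator hs]
      refine lintegral_congr_ae ?_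
      filter_upwards [hae] with x hx
      by_cases hxs : x ∈ s
      · rw [indicator_of_mem hxs]
      · rw [indicator_of_notMem hxs, hx hxs, zero_mul]
    have h2 : ∫⁻ x in s, f x * k (gaussTransport f x) = ∫⁻ x in s, ENNReal.ofReal |d x| *
        ((∫⁻ t, f t) * (gaussianPDF 0 1 (gaussTransport f x) * k (gaussTransport f x))) := by
      refine setLIntegral_congr_fun hs fun x hx => ?_
      obtain ⟨hd0, -, hfx⟩ := hd x hx
      rw [hfx, abs_of_pos hd0, ENNReal.ofReal_mul (gaussianPDFReal_nonneg _ _ _), gaussianPDF]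
      ring
    rw [h1, h2, ← lintegral_image_eq_lintegral_abs_deriv_mul hs
      (fun x hx => (hd x hx).2.1.hasDerivWithinAt) hmono.injOn
      (fun u => (∫⁻ t, f t) * (gaussianPDF 0 1 u * k u)),
      lintegral_const_mul _ (by fun_prop),
      gaussianReal_of_var_ne_zero _ one_ne_zero,
      setLIntegral_withDensity_eq_setLIntegral_mul _ (measurable_gaussianPDF 0 1) hk hTm]
    rfl
  have hT1 : gaussianReal 0 1 T = 1 := by
    have h := key (fun _ => 1) measurable_const
    simp only [mul_one, lintegral_const, Measure.restrict_apply MeasurableSet.univ, univ_inter,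
      one_mul] at h
    exact (ENNReal.mul_left_inj h0 htop).1 (by rw [one_mul, mul_comm]; exact h.symm)
  have hTae : ∀ᵐ u ∂(gaussianReal 0 1), u ∈ T := (mem_ae_iff_prob_eq_one hTm).2 hT1
  rw [key k hk, Measure.restrict_eq_self_of_ae_mem hTae]

/-- The one-dimensional case of the main estimate. -/
lemma lintegral_rpow_mul_rpow_mul_exp_gaussTransport_le {p q : ℝ} (hp : 0 < p) (hq : 0 < q)
    (hpq : p + q = 1) {f g : ℝ → ℝ≥0∞} (hf : Measurable f) (hg : Measurable g)
    (hftop : ∫⁻ t, f t ≠ ∞) (hgtop : ∫⁻ t, g t ≠ ∞) (z : ℝ) :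
    ∫⁻ x, f x ^ q * g (z - x) ^ p *
        ENNReal.ofReal (Real.exp (√(p * q) * (gaussTransport f x * gaussTransport g (z - x))))
      ≤ ENNReal.ofReal (√p ^ p * √q ^ q) * ((∫⁻ t, f t) ^ q * (∫⁻ t, g t) ^ p) := by
  rcases eq_or_ne (∫⁻ t, f t) 0 with hf0 | hf0
  · rw [lintegral_eq_zero_iff hf] at hf0
    refine (lintegral_eq_zero_of_ae_eq_zero ?_).trans_le zero_le
    filter_upwards [hf0] with x hx
    simp [hx, hq]
  rcases eq_or_ne (∫⁻ t, g t) 0 with hg0 | hg0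
  · rw [lintegral_eq_zero_iff hg] at hg0
    refine (lintegral_eq_zero_of_ae_eq_zero ?_).trans_le zero_le
    filter_upwards [(Measure.measurePreserving_sub_left volume z).quasiMeasurePreserving.ae hg0]
      with x hx
    simp [hx, hp]
  obtain ⟨s, d, hs, hsmono, hd, hsae⟩ := exists_gaussTransport_regular hf hf0 hftop
  obtain ⟨t, e, ht, htmono, he, htae⟩ := exists_gaussTransport_regular hg hg0 hgtop
  set P := gaussTransport f
  set Q := gaussTransport g
  set I := ∫⁻ t, f t
  set J := ∫⁻ t, g t
  set γ := gaussianPDFReal 0 1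
  set D := √p ^ p * √q ^ q with hD
  have hDpos : 0 < D := by positivity
  set r := s ∩ (fun x => z - x) ⁻¹' t
  have hr : MeasurableSet r := hs.inter ((measurable_const.sub measurable_id) ht)
  set w : ℝ → ℝ := fun x => √q * P x - √p * Q (z - x)
  have hw : ∀ x ∈ r, HasDerivAt w (√q * d x + √p * e (z - x)) x := by
    intro x hx
    have h1 := (he _ hx.2).2.1.comp x ((hasDerivAt_id x).const_sub z)
    have h2 := ((hd _ hx.1).2.1.const_mul √q).sub (h1.const_mul √p)
    convert! h2 using 1
    simp only
    ring
  have hwmono : StrictMonoOn w r := by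
    intro x hx y hy hxy
    have h1 := mul_lt_mul_of_pos_left (hsmono hx.1 hy.1 hxy) (Real.sqrt_pos.2 hq)
    have h2 := mul_lt_mul_of_pos_left (htmono hy.2 hx.2 (sub_lt_sub_left hxy z))
      (Real.sqrt_pos.2 hp)
    simp only [w]
    linarith
  have hpt : ∀ x ∈ r, f x ^ q * g (z - x) ^ p *
      ENNReal.ofReal (Real.exp (√(p * q) * (P x * Q (z - x)))) ≤
      ENNReal.ofReal |√q * d x + √p * e (z - x)| *
        (ENNReal.ofReal D * (I ^ q * J ^ p) * ENNReal.ofReal (γ (w x))) := by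
    intro x hx
    obtain ⟨hd0, -, hfx⟩ := hd x hx.1
    obtain ⟨he0, -, hgx⟩ : 0 < e (z - x) ∧ HasDerivAt Q (e (z - x)) (z - x) ∧
        g (z - x) = J * ENNReal.ofReal (γ (Q (z - x)) * e (z - x)) := he _ hx.2
    have hγP : 0 < γ (P x) := gaussianPDFReal_pos 0 1 (P x) one_ne_zero
    have hγQ : 0 < γ (Q (z - x)) := gaussianPDFReal_pos 0 1 (Q (z - x)) one_ne_zero
    have hγ : γ (P x) ^ q * γ (Q (z - x)) ^ p * Real.exp (√(p * q) * (P x * Q (z - x)))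
        = γ (w x) := by
      simp only [γ, gaussianPDFReal, NNReal.coe_one, mul_one, sub_zero, w]
      have hc : 0 < (√(2 * Real.pi))⁻¹ := by positivity
      rw [Real.mul_rpow hc.le (Real.exp_pos _).le, Real.mul_rpow hc.le (Real.exp_pos _).le,
        ← Real.exp_mul, ← Real.exp_mul, mul_mul_mul_comm, ← Real.rpow_add hc, add_comm q p, hpq,
        Real.rpow_one, mul_assoc, ← Real.exp_add, ← Real.exp_add, Real.sqrt_mul hp.le]
      congr 2
      have h1 := Real.sq_sqrt hp.le
      have h2 := Real.sq_sqrt hq.le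
      linear_combination ((P x) ^ 2 / 2) * h2 + ((Q (z - x)) ^ 2 / 2) * h1
    have hamgm : d x ^ q * e (z - x) ^ p ≤ (√q * d x + √p * e (z - x)) * D := by
      have h := Real.geom_mean_le_arith_mean2_weighted hq.le hp.le
        (div_nonneg hd0.le (Real.sqrt_nonneg q)) (div_nonneg he0.le (Real.sqrt_nonneg p))
        (by rw [add_comm]; exact hpq)
      have hsp := Real.sqrt_pos.2 hp
      have hsq := Real.sqrt_pos.2 hq
      rw [Real.div_rpow hd0.le hsq.le, Real.div_rpow he0.le hsp.le, div_mul_div_comm,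
        div_le_iff₀ (by positivity)] at h
      calc d x ^ q * e (z - x) ^ p ≤ _ := h
        _ = _ := by
          have h1 : q * (d x / √q) = √q * d x := by
            rw [mul_div_assoc', div_eq_iff hsq.ne']
            nlinarith [Real.sq_sqrt hq.le]
          have h2 : p * (e (z - x) / √p) = √p * e (z - x) := by
            rw [mul_div_assoc', div_eq_iff hsp.ne']
            nlinarith [Real.sq_sqrt hp.le]
          rw [h1, h2, hD]
          ring
    have hsum : 0 < √q * d x + √p * e (z - x) := by positivity
    rw [hfx, hgx, ENNReal.mul_rpow_of_nonneg _ _ hq.le, ENNReal.mul_rpow_of_nonneg _ _ hp.le,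
      ENNReal.ofReal_rpow_of_pos (by positivity), ENNReal.ofReal_rpow_of_pos (by positivity),
      abs_of_pos hsum]
    calc _ = I ^ q * J ^ p * ENNReal.ofReal ((γ (P x) * d x) ^ q * (γ (Q (z - x)) * e (z - x)) ^ p *
            Real.exp (√(p * q) * (P x * Q (z - x)))) := by
          rw [ENNReal.ofReal_mul (by positivity), ENNReal.ofReal_mul (by positivity)]
          ring
      _ ≤ I ^ q * J ^ p * ENNReal.ofReal ((√q * d x + √p * e (z - x)) * D * γ (w x)) := by
          gcongr I ^ q * J ^ p * ENNReal.ofReal ?_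
          rw [Real.mul_rpow hγP.le hd0.le, Real.mul_rpow hγQ.le he0.le, ← hγ]
          calc _ = d x ^ q * e (z - x) ^ p * (γ (P x) ^ q * γ (Q (z - x)) ^ p *
                  Real.exp (√(p * q) * (P x * Q (z - x)))) := by ring
            _ ≤ _ := mul_le_mul_of_nonneg_right hamgm (by positivity)
      _ = _ := by
          rw [ENNReal.ofReal_mul (by positivity), ENNReal.ofReal_mul (by positivity)]
          ring
  calc _ = ∫⁻ x in r, f x ^ q * g (z - x) ^ p *
        ENNReal.ofReal (Real.exp (√(p * q) * (P x * Q (z - x)))) := by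
        rw [← lintegral_indicator hr]
        refine lintegral_congr_ae ?_
        filter_upwards [hsae,
          (Measure.measurePreserving_sub_left volume z).quasiMeasurePreserving.ae htae]
        with x hx hx'
        by_cases hxr : x ∈ r
        · rw [indicator_of_mem hxr]
        · rw [indicator_of_notMem hxr]
          by_cases hxs : x ∈ s
          · rw [hx' fun h => hxr ⟨hxs, h⟩]
            simp [hp]
          · rw [hx hxs]
            simp [hq]
    _ ≤ ∫⁻ x in r, ENNReal.ofReal |√q * d x + √p * e (z - x)| *
        (ENNReal.ofReal D * (I ^ q * J ^ p) * ENNReal.ofReal (γ (w x))) :=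
        setLIntegral_mono' hr hpt
    _ = ∫⁻ u in w '' r, ENNReal.ofReal D * (I ^ q * J ^ p) * ENNReal.ofReal (γ u) :=
        (lintegral_image_eq_lintegral_abs_deriv_mul hr
          (fun x hx => (hw x hx).hasDerivWithinAt) hwmono.injOn
          (fun u => ENNReal.ofReal D * (I ^ q * J ^ p) * ENNReal.ofReal (γ u))).symm
    _ ≤ ∫⁻ u, ENNReal.ofReal D * (I ^ q * J ^ p) * ENNReal.ofReal (γ u) :=
        setLIntegral_le_lintegral _ _
    _ = _ := by
        rw [lintegral_const_mul _ (measurable_gaussianPDFReal 0 1).ennreal_ofReal,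
          lintegral_gaussianPDFReal_eq_one 0 one_ne_zero, mul_one]

/-- Any two (measurably parametrised) finite densities `f`, `g` on `E` admit a weight `exp L` such
that the weighted convolution of `f ^ q` and `g ^ p` is bounded by the sharp constant to the power
`N`, while the law of `L` under `f ⊗ g` is that of `√(p q) * ⟪X, Y⟫` for independent standard
Gaussian vectors `X`, `Y` in `ℝ^N`, as far as exponential moments are concerned. -/
def HasGaussianWeights (E : Type) [MeasureSpace E] [AddGroup E] (N : ℕ) (p q : ℝ) : Prop :=
  ∀ (Ω : Type) [MeasurableSpace Ω] (f g : Ω × E → ℝ≥0∞), Measurable f → Measurable g →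
    ∃ L : Ω × E × E → ℝ, Measurable L ∧
      ∀ ω, ∫⁻ x, f (ω, x) ≠ ∞ → ∫⁻ y, g (ω, y) ≠ ∞ →
        (∀ z, ∫⁻ x, f (ω, x) ^ q * g (ω, z - x) ^ p * ENNReal.ofReal (Real.exp (L (ω, x, z - x)))
          ≤ ENNReal.ofReal (√p ^ p * √q ^ q) ^ N *
            ((∫⁻ x, f (ω, x)) ^ q * (∫⁻ y, g (ω, y)) ^ p)) ∧
        ∀ s : ℝ, 0 ≤ s → s ≤ 1 →
          ∫⁻ x, ∫⁻ y, f (ω, x) * g (ω, y) * ENNReal.ofReal (Real.exp (s * L (ω, x, y)))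
            = ENNReal.ofReal (√(1 - s ^ 2 * (p * q)))⁻¹ ^ N *
              ((∫⁻ x, f (ω, x)) * ∫⁻ y, g (ω, y))

lemma measurable_gaussTransport_uncurry {α : Type*} [MeasurableSpace α] {f : α × ℝ → ℝ≥0∞}
    (hf : Measurable f) {u : α → ℝ} (hu : Measurable u) :
    Measurable fun a => gaussTransport (fun t => f (a, t)) (u a) := by
  refine measurable_gaussQuantile.comp (Measurable.ennreal_toReal (Measurable.div ?_ ?_))
  · have h : ∀ a, ∫⁻ t in Iic (u a), f (a, t)
        = ∫⁻ t, {b : α × ℝ | b.2 ≤ u b.1}.indicator f (a, t) := by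
      intro a
      rw [← lintegral_indicator measurableSet_Iic]
      rfl
    simp only [h]
    exact Measurable.lintegral_prod_right'
      (hf.indicator (measurableSet_le measurable_snd (hu.comp measurable_fst)))
  · exact hf.lintegral_prod_right'

lemma hasGaussianWeights_real {p q : ℝ} (hp : 0 < p) (hq : 0 < q) (hpq : p + q = 1) :
    HasGaussianWeights ℝ 1 p q := by
  intro Ω _ f g hf hg
  refine ⟨fun a => √(p * q) * (gaussTransport (fun t => f (a.1, t)) a.2.1 *
    gaussTransport (fun t => g (a.1, t)) a.2.2), ?_, fun ω hfω hgω => ⟨fun z => ?_, ?_⟩⟩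
  · have hP : Measurable fun a : Ω × ℝ × ℝ => gaussTransport (fun t => f (a.1, t)) a.2.1 :=
      measurable_gaussTransport_uncurry
        (f := fun b : (Ω × ℝ × ℝ) × ℝ => f (b.1.1, b.2)) (by fun_prop) (by fun_prop)
    have hQ : Measurable fun a : Ω × ℝ × ℝ => gaussTransport (fun t => g (a.1, t)) a.2.2 :=
      measurable_gaussTransport_uncurry
        (f := fun b : (Ω × ℝ × ℝ) × ℝ => g (b.1.1, b.2)) (by fun_prop) (by fun_prop)
    exact measurable_const.mul (hP.mul hQ)
  · rw [pow_one]
    exact lintegral_rpow_mul_rpow_mul_exp_gaussTransport_le hp hq hpq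
      (hf.comp measurable_prodMk_left) (hg.comp measurable_prodMk_left) hfω hgω z
  · intro s hs0 hs1
    set P := gaussTransport (fun t => f (ω, t))
    set Q := gaussTransport (fun t => g (ω, t))
    have hfm : Measurable fun x => f (ω, x) := hf.comp measurable_prodMk_left
    have hgm : Measurable fun x => g (ω, x) := hg.comp measurable_prodMk_left
    have hQm : Measurable Q := measurable_gaussTransport_uncurry
      (f := fun b : ℝ × ℝ => g (ω, b.2)) (by fun_prop) measurable_id
    have hinner : ∀ x, ∫⁻ y, f (ω, x) * g (ω, y) *
        ENNReal.ofReal (Real.exp (s * (√(p * q) * (P x * Q y)))) = (∫⁻ y, g (ω, y)) *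
          (f (ω, x) * ∫⁻ v, ENNReal.ofReal (Real.exp (s * √(p * q) * (P x * v)))
            ∂(gaussianReal 0 1)) := by
      intro x
      simp only [mul_assoc]
      rw [lintegral_const_mul _ (by fun_prop),
        lintegral_mul_comp_gaussTransport hgm hgω
          (k := fun v => ENNReal.ofReal (Real.exp (s * (√(p * q) * (P x * v))))) (by fun_prop)]
      ring
    have hsq : (s * √(p * q)) ^ 2 = s ^ 2 * (p * q) := by
      rw [mul_pow, Real.sq_sqrt (by positivity)]
    have hlt : (s * √(p * q)) ^ 2 < 1 := by
      rw [hsq]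
      have h1 : s ^ 2 ≤ 1 := pow_le_one₀ hs0 hs1
      have h2 : p * q < 1 := by nlinarith
      nlinarith [mul_pos hp hq]
    have hkm : Measurable fun u : ℝ => ∫⁻ v, ENNReal.ofReal (Real.exp (s * √(p * q) * (u * v)))
        ∂(gaussianReal 0 1) :=
      Measurable.lintegral_prod_right'
        (f := fun b : ℝ × ℝ => ENNReal.ofReal (Real.exp (s * √(p * q) * (b.1 * b.2)))) (by fun_prop)
    have hPm : Measurable P := measurable_gaussTransport_uncurry
      (f := fun b : ℝ × ℝ => f (ω, b.2)) (by fun_prop) measurable_id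
    have hm : Measurable fun x => f (ω, x) * ∫⁻ v,
        ENNReal.ofReal (Real.exp (s * √(p * q) * (P x * v))) ∂(gaussianReal 0 1) :=
      hfm.mul (hkm.comp hPm)
    refine (lintegral_congr hinner).trans ?_
    rw [lintegral_const_mul _ hm,
      lintegral_mul_comp_gaussTransport hfm hfω hkm,
      lintegral_lintegral_exp_mul_gaussianReal hlt, pow_one, hsq]
    ring

lemma lintegral_lintegral_prod_swap {G E : Type*} [MeasureSpace G] [MeasureSpace E]
    [SFinite (volume : Measure G)] [SFinite (volume : Measure E)]
    {F : (G × E) × (G × E) → ℝ≥0∞} (hF : Measurable F) :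
    ∫⁻ a, ∫⁻ b, F (a, b) = ∫⁻ s, ∫⁻ t, ∫⁻ x, ∫⁻ y, F ((s, x), (t, y)) := by
  have hin : ∀ a, ∫⁻ b, F (a, b) = ∫⁻ t, ∫⁻ y, F (a, (t, y)) := fun a => by
    rw [Measure.volume_eq_prod, lintegral_prod _ (by fun_prop)]
  have hm : Measurable fun a => ∫⁻ b, F (a, b) := hF.lintegral_prod_right'
  refine (lintegral_prod _ hm.aemeasurable).trans ?_
  refine lintegral_congr fun s => ?_
  simp only [hin]
  refine lintegral_lintegral_swap (Measurable.aemeasurable ?_)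
  exact Measurable.lintegral_prod_right'
    (f := fun b : (E × G) × E => F ((s, b.1.1), (b.1.2, b.2))) (by fun_prop)

lemma HasGaussianWeights.prod {E : Type} [MeasureSpace E] [AddGroup E] [MeasurableSub₂ E]
    [SFinite (volume : Measure E)] {M N : ℕ} {p q : ℝ}
    {G : Type} [MeasureSpace G] [AddGroup G] [MeasurableSub₂ G] [SFinite (volume : Measure G)]
    [(volume : Measure G).IsAddLeftInvariant] [(volume : Measure G).IsNegInvariant]
    [MeasurableAdd₂ G] [MeasurableNeg G]
    (hG : HasGaussianWeights G M p q) (hE : HasGaussianWeights E N p q) :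
    HasGaussianWeights (G × E) (M + N) p q := by
  intro Ω _ f g hf hg
  obtain ⟨L₁, hL₁m, hL₁⟩ := hG Ω (fun a => ∫⁻ x, f (a.1, a.2, x)) (fun a => ∫⁻ y, g (a.1, a.2, y))
    (Measurable.lintegral_prod_right' (f := fun b : (Ω × G) × E => f (b.1.1, b.1.2, b.2))
      (by fun_prop))
    (Measurable.lintegral_prod_right' (f := fun b : (Ω × G) × E => g (b.1.1, b.1.2, b.2))
      (by fun_prop))
  obtain ⟨L₂, hL₂m, hL₂⟩ := hE (Ω × G × G) (fun a => f (a.1.1, a.1.2.1, a.2))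
    (fun a => g (a.1.1, a.1.2.2, a.2)) (by fun_prop) (by fun_prop)
  refine ⟨fun a => L₁ (a.1, a.2.1.1, a.2.2.1) + L₂ ((a.1, a.2.1.1, a.2.2.1), a.2.1.2, a.2.2.2),
    by fun_prop, fun ω hfω hgω => ?_⟩
  have hfeq : ∫⁻ x, f (ω, x) = ∫⁻ s, ∫⁻ x, f (ω, s, x) := by
    rw [Measure.volume_eq_prod, lintegral_prod _ (by fun_prop)]
  have hgeq : ∫⁻ x, g (ω, x) = ∫⁻ s, ∫⁻ x, g (ω, s, x) := by
    rw [Measure.volume_eq_prod, lintegral_prod _ (by fun_prop)]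
  rw [hfeq] at hfω ⊢
  rw [hgeq] at hgω ⊢
  have hfm : Measurable fun s => ∫⁻ x, f (ω, s, x) :=
    Measurable.lintegral_prod_right' (f := fun b : G × E => f (ω, b.1, b.2)) (by fun_prop)
  have hgm : Measurable fun s => ∫⁻ x, g (ω, s, x) :=
    Measurable.lintegral_prod_right' (f := fun b : G × E => g (ω, b.1, b.2)) (by fun_prop)
  have hfae := ae_lt_top hfm hfω
  have hgae := ae_lt_top hgm hgω
  obtain ⟨hconv, hlaw⟩ := hL₁ ω hfω hgω
  constructor
  · rintro ⟨z₁, z₂⟩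
    set D := ENNReal.ofReal (√p ^ p * √q ^ q)
    calc _ = ∫⁻ s, ∫⁻ x, ENNReal.ofReal (Real.exp (L₁ (ω, s, z₁ - s))) *
          (f (ω, s, x) ^ q * g (ω, z₁ - s, z₂ - x) ^ p *
            ENNReal.ofReal (Real.exp (L₂ ((ω, s, z₁ - s), x, z₂ - x)))) := by
          have hm : Measurable fun b : G × E => f (ω, b) ^ q * g (ω, z₁ - b.1, z₂ - b.2) ^ p *
              ENNReal.ofReal (Real.exp (L₁ (ω, b.1, z₁ - b.1) +
                L₂ ((ω, b.1, z₁ - b.1), b.2, z₂ - b.2))) := by fun_prop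
          rw [Measure.volume_eq_prod]
          refine (lintegral_prod _ hm.aemeasurable).trans ?_
          refine lintegral_congr fun s => lintegral_congr fun x => ?_
          rw [Real.exp_add, ENNReal.ofReal_mul (Real.exp_pos _).le]
          ring
      _ ≤ ∫⁻ s, D ^ N * ((∫⁻ x, f (ω, s, x)) ^ q * (∫⁻ x, g (ω, z₁ - s, x)) ^ p *
            ENNReal.ofReal (Real.exp (L₁ (ω, s, z₁ - s)))) := by
          refine lintegral_mono_ae ?_
          filter_upwards [hfae,
            (Measure.measurePreserving_sub_left volume z₁).quasiMeasurePreserving.ae hgae]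
            with s hs hs'
          rw [lintegral_const_mul _ (by fun_prop)]
          calc _ ≤ ENNReal.ofReal (Real.exp (L₁ (ω, s, z₁ - s))) * (D ^ N *
                ((∫⁻ x, f (ω, s, x)) ^ q * (∫⁻ x, g (ω, z₁ - s, x)) ^ p)) := by
                gcongr
                exact (hL₂ (ω, s, z₁ - s) hs.ne hs'.ne).1 z₂
            _ = _ := by ring
      _ = D ^ N * ∫⁻ s, ((∫⁻ x, f (ω, s, x)) ^ q * (∫⁻ x, g (ω, z₁ - s, x)) ^ p *
            ENNReal.ofReal (Real.exp (L₁ (ω, s, z₁ - s)))) := by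
          rw [lintegral_const_mul]
          have := hgm.comp (measurable_const.sub measurable_id : Measurable fun s => z₁ - s)
          exact ((hfm.pow_const q).mul (this.pow_const p)).mul (by fun_prop)
      _ ≤ D ^ N * (D ^ M * ((∫⁻ s, ∫⁻ x, f (ω, s, x)) ^ q * (∫⁻ s, ∫⁻ x, g (ω, s, x)) ^ p)) := by
          gcongr
          exact hconv z₁
      _ = _ := by rw [pow_add]; ring
  · intro σ hσ0 hσ1
    set m := ENNReal.ofReal (√(1 - σ ^ 2 * (p * q)))⁻¹
    calc _ = ∫⁻ s, ∫⁻ t, ∫⁻ x, ∫⁻ y, ENNReal.ofReal (Real.exp (σ * L₁ (ω, s, t))) *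
          (f (ω, s, x) * g (ω, t, y) *
            ENNReal.ofReal (Real.exp (σ * L₂ ((ω, s, t), x, y)))) := by
          rw [lintegral_lintegral_prod_swap (F := fun b : (G × E) × (G × E) =>
            f (ω, b.1) * g (ω, b.2) * ENNReal.ofReal (Real.exp (σ * (L₁ (ω, b.1.1, b.2.1) +
              L₂ ((ω, b.1.1, b.2.1), b.1.2, b.2.2))))) (by fun_prop)]
          refine lintegral_congr fun s => lintegral_congr fun t => lintegral_congr fun x =>
            lintegral_congr fun y => ?_
          simp only [mul_add]
          rw [Real.exp_add, ENNReal.ofReal_mul (Real.exp_pos _).le]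
          ring
      _ = ∫⁻ s, ∫⁻ t, m ^ N * ((∫⁻ x, f (ω, s, x)) * (∫⁻ y, g (ω, t, y)) *
            ENNReal.ofReal (Real.exp (σ * L₁ (ω, s, t)))) := by
          refine lintegral_congr_ae ?_
          filter_upwards [hfae] with s hs
          refine lintegral_congr_ae ?_
          filter_upwards [hgae] with t ht
          have h := (hL₂ (ω, s, t) hs.ne ht.ne).2 σ hσ0 hσ1
          simp only at h
          have hin : ∀ x, ∫⁻ y, ENNReal.ofReal (Real.exp (σ * L₁ (ω, s, t))) *
              (f (ω, s, x) * g (ω, t, y) * ENNReal.ofReal (Real.exp (σ * L₂ ((ω, s, t), x, y))))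
              = ENNReal.ofReal (Real.exp (σ * L₁ (ω, s, t))) * ∫⁻ y, f (ω, s, x) * g (ω, t, y) *
                ENNReal.ofReal (Real.exp (σ * L₂ ((ω, s, t), x, y))) := fun x =>
            lintegral_const_mul _ (by fun_prop)
          simp only [hin]
          rw [lintegral_const_mul, h]
          · ring
          · exact Measurable.lintegral_prod_right' (f := fun b : E × E =>
              f (ω, s, b.1) * g (ω, t, b.2) *
              ENNReal.ofReal (Real.exp (σ * L₂ ((ω, s, t), b.1, b.2)))) (by fun_prop)
      _ = m ^ N * ∫⁻ s, ∫⁻ t, (∫⁻ x, f (ω, s, x)) * (∫⁻ y, g (ω, t, y)) *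
            ENNReal.ofReal (Real.exp (σ * L₁ (ω, s, t))) := by
          have hmN : m ^ N ≠ ∞ := ENNReal.pow_ne_top ENNReal.ofReal_ne_top
          simp only [lintegral_const_mul' _ _ hmN]
      _ = m ^ N * (m ^ M * ((∫⁻ s, ∫⁻ x, f (ω, s, x)) * ∫⁻ s, ∫⁻ x, g (ω, s, x))) := by
          rw [← hlaw σ hσ0 hσ1]
      _ = _ := by rw [pow_add]; ring

lemma HasGaussianWeights.of_measurableEquiv {E F : Type} [MeasureSpace E] [AddGroup E]
    [MeasureSpace F] [AddGroup F] {N : ℕ} {p q : ℝ} (hE : HasGaussianWeights E N p q)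
    (e : F ≃ᵐ E) (he : MeasurePreserving e) (hadd : ∀ x y, e (x - y) = e x - e y) :
    HasGaussianWeights F N p q := by
  intro Ω _ f g hf hg
  obtain ⟨L, hLm, hL⟩ := hE Ω (fun a => f (a.1, e.symm a.2)) (fun a => g (a.1, e.symm a.2))
    (by fun_prop) (by fun_prop)
  have hint : ∀ φ : F → ℝ≥0∞, ∫⁻ a, φ (e.symm a) = ∫⁻ x, φ x := fun φ => by
    rw [← he.lintegral_comp_emb e.measurableEmbedding]
    simp
  refine ⟨fun a => L (a.1, e a.2.1, e a.2.2), by fun_prop, fun ω hfω hgω => ?_⟩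
  have hf' := hint fun x => f (ω, x)
  have hg' := hint fun x => g (ω, x)
  obtain ⟨h1, h2⟩ := hL ω (by rwa [hf']) (by rwa [hg'])
  simp only [hf', hg'] at h1 h2
  refine ⟨fun z => ?_, fun s hs0 hs1 => ?_⟩
  · refine le_trans (le_of_eq ?_) (h1 (e z))
    rw [← he.lintegral_comp_emb e.measurableEmbedding]
    simp only [MeasurableEquiv.symm_apply_apply, ← hadd]
  · rw [← h2 s hs0 hs1, ← he.lintegral_comp_emb e.measurableEmbedding]
    refine lintegral_congr fun x => ?_
    rw [← he.lintegral_comp_emb e.measurableEmbedding]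
    simp

lemma hasGaussianWeights_pi {p q : ℝ} (hp : 0 < p) (hq : 0 < q) (hpq : p + q = 1) (n : ℕ) :
    HasGaussianWeights (Fin n → ℝ) n p q := by
  induction n with
  | zero =>
    intro Ω _ f g hf hg
    have hv : (volume : Measure (Fin 0 → ℝ)) univ = 1 := by simp [volume_pi]
    refine ⟨fun _ => 0, measurable_const, fun ω _ _ => ⟨fun z => ?_, fun s _ _ => ?_⟩⟩
    · have hg₀ : ∀ w w', g (ω, w) ≤ g (ω, w') := fun w w' => by rw [Subsingleton.elim w w']
      simp only [lintegral_unique, hv, Real.exp_zero, ENNReal.ofReal_one, mul_one, pow_zero,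
        one_mul]
      gcongr
      exact hg₀ _ _
    · simp [lintegral_unique, hv]
  | succ n ih =>
    have h := (hasGaussianWeights_real hp hq hpq).prod ih
    rw [add_comm] at h
    exact h.of_measurableEquiv (MeasurableEquiv.piFinSuccAbove (fun _ => ℝ) 0)
      (volume_preserving_piFinSuccAbove (fun _ => ℝ) 0) fun x y => rfl

lemma hasGaussianWeights_euclideanSpace {p q : ℝ} (hp : 0 < p) (hq : 0 < q) (hpq : p + q = 1)
    (n : ℕ) : HasGaussianWeights (EuclideanSpace ℝ (Fin n)) n p q :=
  (hasGaussianWeights_pi hp hq hpq n).of_measurableEquiv (MeasurableEquiv.toLp 2 (Fin n → ℝ)).symm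
    (EuclideanSpace.volume_preserving_symm_measurableEquiv_toLp (Fin n)) fun _ _ => rfl

lemma one_add_half_le_inv_sqrt_pow {t : ℝ} {n : ℕ} (hn : 0 < n) (ht0 : 0 ≤ t) (ht1 : t < 1) :
    1 + t / 2 ≤ (√(1 - t / n))⁻¹ ^ n := by
  have hn' : (1 : ℝ) ≤ n := by exact_mod_cast hn
  have hu0 : 0 ≤ t / n := by positivity
  have hu1 : t / n < 1 := (div_le_self ht0 hn').trans_lt ht1
  have hpos : 0 < √(1 - t / n) := Real.sqrt_pos.2 (by linarith)
  have h1 : √(1 - t / n) ≤ 1 - t / n / 2 :=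
    Real.sqrt_le_iff.2 ⟨by linarith, by nlinarith [sq_nonneg (t / n)]⟩
  have h2 : 1 + t / n / 2 ≤ (√(1 - t / n))⁻¹ := by
    rw [le_inv_comm₀ (by positivity) hpos]
    refine h1.trans ?_
    rw [← one_div, le_div_iff₀ (by positivity)]
    nlinarith [sq_nonneg (t / n)]
  calc 1 + t / 2 = 1 + n * (t / n / 2) := by field_simp
    _ ≤ (1 + t / n / 2) ^ n := one_add_mul_le_pow (by linarith) n
    _ ≤ _ := by gcongr

lemma inv_sqrt_pow_le_two {t : ℝ} {n : ℕ} (hn : 0 < n) (ht0 : 0 ≤ t) (ht1 : t ≤ 1 / 2) :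
    (√(1 - t / n))⁻¹ ^ n ≤ 2 := by
  have hn' : (1 : ℝ) ≤ n := by exact_mod_cast hn
  have hu0 : 0 ≤ t / n := by positivity
  have hu1 : t / n ≤ 1 / 2 := (div_le_self ht0 hn').trans ht1
  have h1 : 1 - t / n ≤ √(1 - t / n) := Real.le_sqrt_of_sq_le (by nlinarith)
  have h2 : 1 - t ≤ √(1 - t / n) ^ n := by
    calc 1 - t = 1 + n * (-(t / n)) := by field_simp; ring
      _ ≤ (1 + -(t / n)) ^ n := one_add_mul_le_pow (by linarith) n
      _ ≤ _ := by
        refine pow_le_pow_left₀ (by linarith) ?_ n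
        linarith
  rw [inv_pow]
  exact inv_le_of_inv_le₀ (by norm_num) (by linarith)

lemma measure_univ_le_setLIntegral_exp {α : Type*} [MeasurableSpace α] {ν : Measure α}
    [IsFiniteMeasure ν] {L : α → ℝ} (hL : Measurable L) {Θ : Set α} (hΘ : MeasurableSet Θ)
    {s κ : ℝ} (hs0 : 0 < s) (hs1 : s ≤ 1) (hκ : 0 < κ)
    (hlow : ENNReal.ofReal (1 + κ ^ 2 / 2) * ν univ ≤ ∫⁻ x, ENNReal.ofReal (Real.exp (s * L x)) ∂ν)
    (hup : ∫⁻ x, ENNReal.ofReal (Real.exp (2 * s * L x)) ∂ν ≤ 2 * ν univ)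
    (hΘc : ν Θᶜ ≤ ENNReal.ofReal (κ ^ 4 / 8) * ν univ) :
    ν univ ≤ ∫⁻ x in Θ, ENNReal.ofReal (Real.exp (L x)) ∂ν := by
  set I := ∫⁻ x in Θ, ENNReal.ofReal (Real.exp (L x)) ∂ν
  by_cases hI : I = ∞
  · simp [hI]
  have h1 : ∫⁻ x in Θ, ENNReal.ofReal (Real.exp (s * L x)) ∂ν
      ≤ ENNReal.ofReal (1 - s) * ν univ + ENNReal.ofReal s * I := by
    calc _ ≤ ∫⁻ x in Θ, (ENNReal.ofReal (1 - s) +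
          ENNReal.ofReal s * ENNReal.ofReal (Real.exp (L x))) ∂ν := by
          refine lintegral_mono fun x => ?_
          rw [← ENNReal.ofReal_mul hs0.le, ← ENNReal.ofReal_add (by linarith) (by positivity)]
          refine ENNReal.ofReal_le_ofReal ?_
          have h := convexOn_exp.2 (mem_univ (0 : ℝ)) (mem_univ (L x)) (by linarith : 0 ≤ 1 - s)
            hs0.le (by ring)
          simpa using h
      _ = ENNReal.ofReal (1 - s) * ν Θ + ENNReal.ofReal s * I := by
          rw [lintegral_add_left measurable_const, lintegral_const_mul _ (by fun_prop),
            lintegral_const, Measure.restrict_apply_univ]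
      _ ≤ _ := by gcongr; exact subset_univ _
  have h2 : ∫⁻ x in Θᶜ, ENNReal.ofReal (Real.exp (s * L x)) ∂ν
      ≤ ENNReal.ofReal (κ ^ 2 / 2) * ν univ := by
    calc _ ≤ ∫⁻ x in Θᶜ, (ENNReal.ofReal (κ ^ 2 / 8) * ENNReal.ofReal (Real.exp (2 * s * L x)) +
          ENNReal.ofReal (2 / κ ^ 2)) ∂ν := by
          refine lintegral_mono fun x => ?_
          rw [← ENNReal.ofReal_mul (by positivity), ← ENNReal.ofReal_add (by positivity)
            (by positivity)]
          refine ENNReal.ofReal_le_ofReal ?_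
          have h : Real.exp (2 * s * L x) = Real.exp (s * L x) ^ 2 := by
            rw [← Real.exp_nat_mul]
            push_cast
            ring_nf
          rw [h, ← sub_nonneg]
          have h' : κ ^ 2 / 8 * Real.exp (s * L x) ^ 2 + 2 / κ ^ 2 - Real.exp (s * L x)
              = 2 * (κ / 4 * Real.exp (s * L x) - 1 / κ) ^ 2 := by
            field_simp
            ring
          rw [h']
          positivity
      _ = ENNReal.ofReal (κ ^ 2 / 8) * ∫⁻ x in Θᶜ, ENNReal.ofReal (Real.exp (2 * s * L x)) ∂ν +
          ENNReal.ofReal (2 / κ ^ 2) * ν Θᶜ := by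
          rw [lintegral_add_right _ measurable_const, lintegral_const_mul _ (by fun_prop),
            lintegral_const, Measure.restrict_apply_univ]
      _ ≤ ENNReal.ofReal (κ ^ 2 / 8) * (2 * ν univ) +
          ENNReal.ofReal (2 / κ ^ 2) * (ENNReal.ofReal (κ ^ 4 / 8) * ν univ) := by
          gcongr
          exact (setLIntegral_le_lintegral _ _).trans hup
      _ = _ := by
          rw [← mul_assoc, ← mul_assoc, ← add_mul, ← ENNReal.ofReal_mul (by positivity),
            (by simp : (2 : ℝ≥0∞) = ENNReal.ofReal 2), ← ENNReal.ofReal_mul (by positivity),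
            ← ENNReal.ofReal_add (by positivity) (by positivity)]
          congr 2
          field_simp
          ring
  rw [← lintegral_add_compl _ hΘ] at hlow
  have h3 := hlow.trans (add_le_add h1 h2)
  lift I to NNReal using hI with i
  obtain ⟨m, hm⟩ : ∃ m : NNReal, ν univ = m := ⟨_, (ENNReal.coe_toNNReal (measure_ne_top ν _)).symm⟩
  have hm0 : 0 ≤ (1 - s) * (m : ℝ) := mul_nonneg (by linarith) m.coe_nonneg
  rw [hm] at h3 ⊢
  simp only [← ENNReal.ofReal_coe_nnreal] at h3 ⊢
  rw [← ENNReal.ofReal_mul (by positivity), ← ENNReal.ofReal_mul (by linarith),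
    ← ENNReal.ofReal_mul (by positivity), ← ENNReal.ofReal_mul (by positivity),
    ← ENNReal.ofReal_add hm0 (by positivity), ← ENNReal.ofReal_add (by positivity) (by positivity),
    ENNReal.ofReal_le_ofReal_iff (by positivity)] at h3
  refine ENNReal.ofReal_le_ofReal (le_of_mul_le_mul_left ?_ hs0)
  nlinarith

/-- If the fibres over `z` of a weight on `Θ` have mass at most `K`, then the total mass is at most
`K` times the measure of the restricted sum. -/
lemma setLIntegral_le_mul_volume_restrictedSum {n : ℕ}
    {Θ : Set (EuclideanSpace ℝ (Fin n) × EuclideanSpace ℝ (Fin n))} (hΘ : MeasurableSet Θ)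
    {w : EuclideanSpace ℝ (Fin n) × EuclideanSpace ℝ (Fin n) → ℝ≥0∞} (hw : Measurable w) {K : ℝ≥0∞}
    (hK : ∀ z, ∫⁻ x, Θ.indicator w (x, z - x) ≤ K) :
    ∫⁻ a in Θ, w a ≤ K * volume (restrictedSum Θ) := by
  have hm : Measurable (Θ.indicator w) := hw.indicator hΘ
  calc ∫⁻ a in Θ, w a = ∫⁻ x, ∫⁻ y, Θ.indicator w (x, y) := by
        rw [← lintegral_indicator hΘ, Measure.volume_eq_prod, lintegral_prod _ hm.aemeasurable]
    _ = ∫⁻ x, ∫⁻ z, Θ.indicator w (x, z - x) :=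
        lintegral_congr fun x =>
          (lintegral_sub_right_eq_self (fun y => Θ.indicator w (x, y)) x).symm
    _ = ∫⁻ z, ∫⁻ x, Θ.indicator w (x, z - x) :=
        lintegral_lintegral_swap (Measurable.aemeasurable (hm.comp
          (by fun_prop : Measurable fun b : EuclideanSpace ℝ (Fin n) × EuclideanSpace ℝ (Fin n) =>
            (b.1, b.2 - b.1))))
    _ ≤ ∫⁻ z, (toMeasurable volume (restrictedSum Θ)).indicator (fun _ => K) z := by
        refine lintegral_mono fun z => ?_
        by_cases hz : z ∈ toMeasurable volume (restrictedSum Θ)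
        · rw [indicator_of_mem hz]
          exact hK z
        · rw [indicator_of_notMem hz]
          refine (lintegral_eq_zero_of_ae_eq_zero (ae_of_all _ fun x => ?_)).le
          refine indicator_of_notMem (fun hx => hz (subset_toMeasurable _ _ ⟨_, hx, ?_⟩)) _
          simp
    _ = K * volume (restrictedSum Θ) := by
        rw [lintegral_indicator (measurableSet_toMeasurable _ _), setLIntegral_const,
          measure_toMeasurable]

/-- If `Θ` has almost full measure in `A × B`, where `A` and `B` have the volume of cubes of side
lengths `a` and `b`, then its restricted sum has at least the volume of a cube of side length
`√(a ^ 2 + b ^ 2)`. -/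
lemma le_volume_restrictedSum {n : ℕ} (hn : 0 < n) {A B : Set (EuclideanSpace ℝ (Fin n))}
    (hA : MeasurableSet A) (hB : MeasurableSet B) {a b κ : ℝ} (ha : 0 < a) (hb : 0 < b)
    (hAa : volume A = ENNReal.ofReal (a ^ n)) (hBb : volume B = ENNReal.ofReal (b ^ n))
    (hκ0 : 0 < κ) (hκ1 : κ ≤ 1 / 4) (hκ : 2 * κ * (a ^ 2 + b ^ 2) ≤ √n * (a * b))
    {Θ : Set (EuclideanSpace ℝ (Fin n) × EuclideanSpace ℝ (Fin n))} (hΘ : MeasurableSet Θ)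
    (hΘAB : Θ ⊆ A ×ˢ B)
    (hΘc : volume ((A ×ˢ B) \ Θ) ≤ ENNReal.ofReal (κ ^ 4 / 8) * (volume A * volume B)) :
    ENNReal.ofReal (√(a ^ 2 + b ^ 2) ^ n) ≤ volume (restrictedSum Θ) := by
  set h := √(a ^ 2 + b ^ 2) with hh
  have hpos : 0 < a ^ 2 + b ^ 2 := by positivity
  have hh0 : 0 < h := Real.sqrt_pos.2 hpos
  have hh2 : h ^ 2 = a ^ 2 + b ^ 2 := Real.sq_sqrt hpos.le
  set p := (a / h) ^ 2 with hp
  set q := (b / h) ^ 2 with hq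
  have hp0 : 0 < p := by positivity
  have hq0 : 0 < q := by positivity
  have hpq : p + q = 1 := by
    rw [hp, hq, div_pow, div_pow, ← add_div, hh2, div_self hpos.ne']
  have hsp : √p = a / h := Real.sqrt_sq (by positivity)
  have hsq : √q = b / h := Real.sqrt_sq (by positivity)
  have hn0 : (0 : ℝ) < n := by exact_mod_cast hn
  have hAm : Measurable
      (fun x : Unit × EuclideanSpace ℝ (Fin n) => A.indicator (fun _ => (1 : ℝ≥0∞)) x.2) :=
    (measurable_const.indicator hA).comp measurable_snd
  have hBm : Measurable
      (fun x : Unit × EuclideanSpace ℝ (Fin n) => B.indicator (fun _ => (1 : ℝ≥0∞)) x.2) :=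
    (measurable_const.indicator hB).comp measurable_snd
  obtain ⟨L, hLm, hL⟩ := hasGaussianWeights_euclideanSpace hp0 hq0 hpq n Unit _ _ hAm hBm
  have hL := hL ()
  simp only [lintegral_indicator_const hA, lintegral_indicator_const hB, one_mul] at hL
  obtain ⟨hconv, hlaw⟩ := hL (by simp [hAa]) (by simp [hBb])
  set K := ENNReal.ofReal (√p ^ p * √q ^ q) ^ n * (volume A ^ q * volume B ^ p) with hK
  have hKeq : K = ENNReal.ofReal ((a * b / h) ^ n) := by
    rw [hK, hAa, hBb, ENNReal.ofReal_rpow_of_pos (by positivity),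
      ENNReal.ofReal_rpow_of_pos (by positivity), ← ENNReal.ofReal_mul (by positivity),
      ← ENNReal.ofReal_pow (by positivity), ← ENNReal.ofReal_mul (by positivity), hsp, hsq]
    congr 1
    rw [← Real.rpow_natCast_mul ha.le, ← Real.rpow_natCast_mul hb.le, mul_comm (n : ℝ) q,
      mul_comm (n : ℝ) p, Real.rpow_mul_natCast ha.le, Real.rpow_mul_natCast hb.le, ← mul_pow,
      ← mul_pow, Real.div_rpow ha.le hh0.le, Real.div_rpow hb.le hh0.le]
    congr 1
    have h1 : a ^ p * a ^ q = a := by rw [← Real.rpow_add ha, hpq, Real.rpow_one]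
    have h2 : b ^ p * b ^ q = b := by rw [← Real.rpow_add hb, hpq, Real.rpow_one]
    have h3 : h ^ p * h ^ q = h := by rw [← Real.rpow_add hh0, hpq, Real.rpow_one]
    calc _ = (a ^ p * a ^ q) * (b ^ p * b ^ q) / (h ^ p * h ^ q) := by ring
      _ = _ := by rw [h1, h2, h3]
  set ν := (volume : Measure (EuclideanSpace ℝ (Fin n) × EuclideanSpace ℝ (Fin n))).restrict
    (A ×ˢ B) with hν
  have hνuniv : ν univ = volume A * volume B := by
    rw [hν, Measure.restrict_apply_univ, Measure.volume_eq_prod, Measure.prod_prod]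
  have : IsFiniteMeasure ν := ⟨by rw [hνuniv, hAa, hBb]; finiteness⟩
  set W : EuclideanSpace ℝ (Fin n) × EuclideanSpace ℝ (Fin n) → ℝ := fun x => L ((), x)
  have hWm : Measurable W := hLm.comp measurable_prodMk_left
  have hmom : ∀ s : ℝ, 0 ≤ s → s ≤ 1 → ∫⁻ x, ENNReal.ofReal (Real.exp (s * W x)) ∂ν
      = ENNReal.ofReal (√(1 - s ^ 2 * (p * q)))⁻¹ ^ n * ν univ := by
    intro s hs0 hs1
    rw [hνuniv, ← hlaw s hs0 hs1, hν, ← lintegral_indicator (hA.prod hB), Measure.volume_eq_prod,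
      lintegral_prod _ (Measurable.aemeasurable (Measurable.indicator (by fun_prop) (hA.prod hB)))]
    refine lintegral_congr fun x => lintegral_congr fun y => ?_
    by_cases hx : x ∈ A <;> by_cases hy : y ∈ B <;> simp [hx, hy, W]
  have hτ : p * q = (a * b / h ^ 2) ^ 2 := by rw [hp, hq]; field_simp
  set s := κ * h ^ 2 / (√n * (a * b)) with hs
  have hs0 : 0 < s := by positivity
  have hs1 : 2 * s ≤ 1 := by
    rw [hs, ← mul_div_assoc, div_le_one (by positivity), ← mul_assoc, hh2]
    exact hκ
  have hspq : s ^ 2 * (p * q) = κ ^ 2 / n := by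
    rw [hτ, hs, ← mul_pow, ← Real.sq_sqrt hn0.le, ← div_pow]
    congr 1
    rw [Real.sqrt_sq (Real.sqrt_nonneg _)]
    field_simp
  have hκsq : κ ^ 2 ≤ 1 / 16 := by nlinarith
  have key : ν univ ≤ ∫⁻ x in Θ, ENNReal.ofReal (Real.exp (W x)) ∂ν := by
    refine measure_univ_le_setLIntegral_exp hWm hΘ hs0 (by linarith) hκ0 ?_ ?_ ?_
    · rw [hmom s hs0.le (by linarith), hspq, ← ENNReal.ofReal_pow (by positivity)]
      gcongr
      exact one_add_half_le_inv_sqrt_pow hn (by positivity) (by linarith)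
    · rw [hmom (2 * s) (by positivity) hs1, ← ENNReal.ofReal_pow (by positivity),
        (by linear_combination 4 * hspq : (2 * s) ^ 2 * (p * q) = (4 * κ ^ 2) / n)]
      gcongr
      rw [(by simp : (2 : ℝ≥0∞) = ENNReal.ofReal 2)]
      exact ENNReal.ofReal_le_ofReal (inv_sqrt_pow_le_two hn (by positivity) (by linarith))
    · rw [hνuniv, hν, Measure.restrict_apply hΘ.compl, inter_comm, ← sdiff_eq]
      exact hΘc
  have hfin := setLIntegral_le_mul_volume_restrictedSum hΘ
    (w := fun x => ENNReal.ofReal (Real.exp (W x))) (by fun_prop) (K := K) fun z => by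
      refine (lintegral_mono fun x => ?_).trans (hconv z)
      by_cases hx : (x, z - x) ∈ Θ
      · obtain ⟨hxA, hxB⟩ := hΘAB hx
        simp [hx, hxA, hxB, W]
      · simp [hx]
  rw [hν, Measure.restrict_restrict hΘ, inter_eq_left.2 hΘAB, ← hν, hνuniv] at key
  have hab := key.trans hfin
  rw [hKeq, hAa, hBb] at hab
  have hc0 : ENNReal.ofReal ((a * b / h) ^ n) ≠ 0 := by
    rw [Ne, ENNReal.ofReal_eq_zero, not_le]
    positivity
  rw [← ENNReal.mul_le_mul_iff_right hc0 ENNReal.ofReal_ne_top]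
  refine le_trans (le_of_eq ?_) hab
  rw [← ENNReal.ofReal_mul (by positivity), ← ENNReal.ofReal_mul (by positivity), ← mul_pow,
    ← mul_pow, div_mul_cancel₀ _ hh0.ne']

section Translates

variable {n : ℕ} {A : Set (EuclideanSpace ℝ (Fin n))}

lemma volume_mem_and_add_nsmul_notMem_le (k : ℕ) (v : EuclideanSpace ℝ (Fin n)) :
    volume {x | x ∈ A ∧ x + k • v ∉ A} ≤ k * volume {x | x ∈ A ∧ x + v ∉ A} := by
  induction k with
  | zero =>
    simp only [zero_smul, add_zero, and_not_self, ofPred_false, measure_empty]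
    simp
  | succ k ih =>
    have hsub : {x | x ∈ A ∧ x + (k + 1) • v ∉ A} ⊆ {x | x ∈ A ∧ x + k • v ∉ A} ∪
        (fun x => x + k • v) ⁻¹' {x | x ∈ A ∧ x + v ∉ A} := by
      rintro x ⟨hx, hxv⟩
      by_cases h : x + k • v ∈ A
      · right
        refine ⟨h, ?_⟩
        rwa [add_assoc, ← succ_nsmul]
      · exact Or.inl ⟨hx, h⟩
    refine (measure_mono hsub).trans ((measure_union_le _ _).trans ?_)
    rw [measure_preimage_add_right]
    push_cast
    rw [add_mul, one_mul]
    gcongr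

/-- Two almost full fibres of `Θ` over `y` and `y'` force the restricted sum to almost cover two
translates of `A`. -/
lemma volume_add_volume_le_volume_restrictedSum_add
    {Θ : Set (EuclideanSpace ℝ (Fin n) × EuclideanSpace ℝ (Fin n))} (hΘ : MeasurableSet Θ)
    (hΘA : ∀ x ∈ Θ, x.1 ∈ A) (y y' : EuclideanSpace ℝ (Fin n)) :
    volume A + volume {x | x ∈ A ∧ x + (y' - y) ∉ A} ≤ volume (restrictedSum Θ) +
      (volume {x | x ∈ A ∧ (x, y) ∉ Θ} + volume {x | x ∈ A ∧ (x, y') ∉ Θ}) := by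
  have h1 : volume A ≤ volume {x | (x, y) ∈ Θ} + volume {x | x ∈ A ∧ (x, y) ∉ Θ} := by
    refine (measure_mono fun x hx => ?_).trans (measure_union_le _ _)
    by_cases h : (x, y) ∈ Θ
    exacts [Or.inl h, Or.inr ⟨hx, h⟩]
  have h2 : volume {x | x ∈ A ∧ x + (y' - y) ∉ A} ≤
      volume {x | (x, y') ∈ Θ ∧ x + (y' - y) ∉ A} + volume {x | x ∈ A ∧ (x, y') ∉ Θ} := by
    refine (measure_mono fun x hx => ?_).trans (measure_union_le _ _)
    by_cases h : (x, y') ∈ Θ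
    exacts [Or.inl ⟨h, hx.2⟩, Or.inr ⟨hx.1, h⟩]
  have hm : MeasurableSet {x | (x, y) ∈ Θ} := measurable_prodMk_right hΘ
  have h3 : volume {x | (x, y) ∈ Θ} + volume {x | (x, y') ∈ Θ ∧ x + (y' - y) ∉ A} ≤
      volume (restrictedSum Θ) := by
    rw [← measure_preimage_add_right volume (-y) {x | (x, y) ∈ Θ},
      ← measure_preimage_add_right volume (-y') {x | (x, y') ∈ Θ ∧ x + (y' - y) ∉ A},
      ← measure_union' _ (measurable_add_const (-y) hm)]
    · refine measure_mono (union_subset ?_ ?_)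
      · exact fun z hz => ⟨(z + -y, y), hz, by simp⟩
      · exact fun z hz => ⟨(z + -y', y'), hz.1, by simp⟩
    · rw [disjoint_left]
      rintro z hz ⟨-, hz'⟩
      refine hz' ?_
      rw [show z + -y' + (y' - y) = z + -y by abel]
      exact hΘA _ hz
  calc _ ≤ (volume {x | (x, y) ∈ Θ} + volume {x | x ∈ A ∧ (x, y) ∉ Θ}) +
        (volume {x | (x, y') ∈ Θ ∧ x + (y' - y) ∉ A} + volume {x | x ∈ A ∧ (x, y') ∉ Θ}) :=
        add_le_add h1 h2
    _ = (volume {x | (x, y) ∈ Θ} + volume {x | (x, y') ∈ Θ ∧ x + (y' - y) ∉ A}) +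
        (volume {x | x ∈ A ∧ (x, y) ∉ Θ} + volume {x | x ∈ A ∧ (x, y') ∉ Θ}) := by ring
    _ ≤ _ := by gcongr

/-- Most fibres of `Θ` are almost full. -/
lemma exists_measurableSet_fibres_almost_full {B : Set (EuclideanSpace ℝ (Fin n))}
    (hA : MeasurableSet A) (hB : MeasurableSet B) (hA0 : volume A ≠ 0) (hAt : volume A ≠ ∞)
    (hBt : volume B ≠ ∞)
    {Θ : Set (EuclideanSpace ℝ (Fin n) × EuclideanSpace ℝ (Fin n))} (hΘ : MeasurableSet Θ)
    {ε : ℝ≥0∞} (hε0 : ε ≠ 0) (hεt : ε ≠ ∞)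
    (hΘc : volume ((A ×ˢ B) \ Θ) ≤ ε * (volume A * volume B)) :
    ∃ G ⊆ B, MeasurableSet G ∧ volume B ≤ 2 * volume G ∧
      ∀ y ∈ G, volume {x | x ∈ A ∧ (x, y) ∉ Θ} ≤ 2 * ε * volume A := by
  set φ : EuclideanSpace ℝ (Fin n) → ℝ≥0∞ := fun y => volume {x | x ∈ A ∧ (x, y) ∉ Θ}
  have hmeas : MeasurableSet ((A ×ˢ univ) \ Θ) := (hA.prod .univ).diff hΘ
  have hφeq : ∀ y, φ y = volume ((fun x => (x, y)) ⁻¹' ((A ×ˢ univ) \ Θ)) := fun y => by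
    refine congrArg volume ?_
    ext x
    simp
  have hφ : Measurable φ := by
    rw [funext hφeq]
    exact measurable_measure_prodMk_right hmeas
  have hint : ∫⁻ y in B, φ y = volume ((A ×ˢ B) \ Θ) := by
    rw [Measure.volume_eq_prod, Measure.prod_apply_symm ((hA.prod hB).diff hΘ),
      ← lintegral_indicator hB]
    refine lintegral_congr fun y => ?_
    by_cases hy : y ∈ B
    · rw [indicator_of_mem hy, hφeq]
      congr 1
      ext x
      simp [hy]
    · rw [indicator_of_notMem hy]
      symm
      convert measure_empty (μ := volume) using 2
      ext x
      simp [hy]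
  refine ⟨B ∩ {y | φ y ≤ 2 * ε * volume A}, inter_subset_left,
    hB.inter (measurableSet_le hφ measurable_const), ?_, fun y hy => hy.2⟩
  have hbad : 2 * volume (B ∩ {y | 2 * ε * volume A < φ y}) ≤ volume B := by
    have h := mul_meas_ge_le_lintegral (μ := volume.restrict B) hφ (2 * ε * volume A)
    rw [hint] at h
    have h' : volume (B ∩ {y | 2 * ε * volume A < φ y}) ≤
        (volume.restrict B) {y | 2 * ε * volume A ≤ φ y} := by
      rw [Measure.restrict_apply (measurableSet_le measurable_const hφ), inter_comm]
      exact measure_mono (inter_subset_inter_left _ fun y hy => le_of_lt hy.out)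
    have hc0 : ε * volume A ≠ 0 := mul_ne_zero hε0 hA0
    have hct : ε * volume A ≠ ∞ := ENNReal.mul_ne_top hεt hAt
    rw [← ENNReal.mul_le_mul_iff_right hc0 hct]
    calc _ = 2 * ε * volume A * volume (B ∩ {y | 2 * ε * volume A < φ y}) := by ring
      _ ≤ ε * (volume A * volume B) := (mul_le_mul_right h' _).trans (h.trans hΘc)
      _ = _ := by ring
  have hsplit : volume B ≤ volume (B ∩ {y | φ y ≤ 2 * ε * volume A}) +
      volume (B ∩ {y | 2 * ε * volume A < φ y}) := by
    refine (measure_mono fun y hy => ?_).trans (measure_union_le _ _)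
    rcases le_or_gt (φ y) (2 * ε * volume A) with h | h
    exacts [Or.inl ⟨hy, h⟩, Or.inr ⟨hy, h⟩]
  have h2 : volume B + volume B ≤ 2 * volume (B ∩ {y | φ y ≤ 2 * ε * volume A}) + volume B := by
    calc volume B + volume B = 2 * volume B := (two_mul _).symm
      _ ≤ 2 * (volume (B ∩ {y | φ y ≤ 2 * ε * volume A}) +
          volume (B ∩ {y | 2 * ε * volume A < φ y})) := by gcongr
      _ ≤ _ := by
        rw [mul_add]
        gcongr
  exact (ENNReal.add_le_add_iff_right hBt).1 h2

end Translates

lemma sqrt_add_sq_pow_le {a b : ℝ} {n : ℕ} (ha : 0 < a) (hr : b / a * √n ≤ 1) (hb : 0 < b) :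
    √(a ^ 2 + b ^ 2) ^ n ≤ a ^ n * (1 + (b / a * √n) ^ 2) := by
  set β := b / a with hβ
  have hβ0 : 0 < β := by positivity
  have h1 : √(a ^ 2 + b ^ 2) ≤ a * Real.exp (β ^ 2 / 2) := by
    refine Real.sqrt_le_iff.2 ⟨by positivity, ?_⟩
    have hab : b = β * a := by rw [hβ]; field_simp
    have hexp : Real.exp (β ^ 2 / 2) ^ 2 = Real.exp (β ^ 2) := by
      rw [← Real.exp_nat_mul]
      push_cast
      ring_nf
    rw [mul_pow, hexp, hab]
    nlinarith [Real.add_one_le_exp (β ^ 2), pow_pos ha 2]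
  have hr2 : (β * √n) ^ 2 = n * β ^ 2 := by
    rw [mul_pow, Real.sq_sqrt (Nat.cast_nonneg n), mul_comm]
  have hr1 : (β * √n) ^ 2 ≤ 1 := pow_le_one₀ (by positivity) hr
  have h2 : Real.exp ((β * √n) ^ 2 / 2) ≤ 1 + (β * √n) ^ 2 := by
    have h := Real.abs_exp_sub_one_le (x := (β * √n) ^ 2 / 2)
      (by rw [abs_of_nonneg (by positivity)]; linarith)
    rw [abs_of_nonneg (by positivity : 0 ≤ (β * √n) ^ 2 / 2)] at h
    linarith [le_abs_self (Real.exp ((β * √n) ^ 2 / 2) - 1)]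
  calc √(a ^ 2 + b ^ 2) ^ n ≤ (a * Real.exp (β ^ 2 / 2)) ^ n := by gcongr
    _ = a ^ n * Real.exp ((β * √n) ^ 2 / 2) := by
      rw [mul_pow, ← Real.exp_nat_mul, hr2]
      ring_nf
    _ ≤ _ := by gcongr

lemma exists_pos_volume_eq_ofReal_pow {n : ℕ} (hn : 0 < n) {A : Set (EuclideanSpace ℝ (Fin n))}
    (h0 : volume A ≠ 0) (ht : volume A ≠ ∞) : ∃ a : ℝ, 0 < a ∧ volume A = ENNReal.ofReal (a ^ n) :=
  ⟨(volume A).toReal ^ (n⁻¹ : ℝ), Real.rpow_pos_of_pos (ENNReal.toReal_pos h0 ht) _, by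
    rw [Real.rpow_inv_natCast_pow ENNReal.toReal_nonneg hn.ne', ENNReal.ofReal_toReal ht]⟩

/-- A set of positive measure cannot be almost invariant under most translations from a set of
volume comparable to `(a / √n) ^ n`. -/
lemma not_almost_invariant {n : ℕ} (hn : 0 < n) {A V : Set (EuclideanSpace ℝ (Fin n))}
    (hA : MeasurableSet A) (hV : MeasurableSet V) {a b : ℝ} (ha : 0 < a)
    (hAa : volume A = ENNReal.ofReal (a ^ n)) (hVb : volume V = ENNReal.ofReal (b ^ n))
    (hb1 : a / 2 ≤ b * √n) (hb2 : b * √n ≤ 2 * a)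
    (hδ : ∀ v ∈ V, volume {x | x ∈ A ∧ x + v ∉ A} ≤ ENNReal.ofReal ((1 / 8) ^ 4 / 8) * volume A) :
    False := by
  have hn1 : (1 : ℝ) ≤ √n := Real.one_le_sqrt.2 (by exact_mod_cast hn)
  have hb : 0 < b := pos_of_mul_pos_left (lt_of_lt_of_le (by positivity) hb1) (by positivity)
  set Θ : Set (EuclideanSpace ℝ (Fin n) × EuclideanSpace ℝ (Fin n)) :=
    (A ×ˢ V) ∩ (fun x => x.1 + x.2) ⁻¹' A
  have hΘ : MeasurableSet Θ := (hA.prod hV).inter (measurable_add hA)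
  have hΘc : volume ((A ×ˢ V) \ Θ) ≤
      ENNReal.ofReal ((1 / 8) ^ 4 / 8) * (volume A * volume V) := by
    rw [Measure.volume_eq_prod, Measure.prod_apply_symm ((hA.prod hV).diff hΘ), ← mul_assoc,
      ← setLIntegral_const, ← lintegral_indicator hV]
    refine lintegral_mono fun v => ?_
    by_cases hv : v ∈ V
    · rw [indicator_of_mem hv]
      refine (measure_mono fun x hx => ?_).trans (hδ v hv)
      exact ⟨hx.1.1, fun h => hx.2 ⟨hx.1, h⟩⟩
    · rw [indicator_of_notMem hv, nonpos_iff_eq_zero]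
      exact measure_mono_null (fun x hx => hv hx.1.2) measure_empty
  have hbb : b ^ 2 ≤ (b * √n) ^ 2 := by
    gcongr
    exact le_mul_of_one_le_right hb.le hn1
  have key := le_volume_restrictedSum hn hA hV ha hb hAa hVb (κ := 1 / 8) (by norm_num)
    (by norm_num) (by nlinarith) hΘ inter_subset_left hΘc
  have hsub : restrictedSum Θ ⊆ A := by
    rintro _ ⟨x, hx, rfl⟩
    exact hx.2
  have h := key.trans (measure_mono hsub)
  rw [hAa, ENNReal.ofReal_le_ofReal_iff (by positivity)] at h
  have h' := le_of_pow_le_pow_left₀ hn.ne' ha.le h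
  rw [Real.sqrt_le_iff] at h'
  nlinarith [pow_pos hb 2]

/-- The case of the main inequality in which `B` is much smaller than `A`. -/
lemma le_volume_restrictedSum_of_small {n : ℕ} (hn : 0 < n) {A B : Set (EuclideanSpace ℝ (Fin n))}
    (hA : MeasurableSet A) (hB : MeasurableSet B) {a b c : ℝ} (ha : 0 < a) (hb : 0 < b)
    (hAa : volume A = ENNReal.ofReal (a ^ n)) (hBb : volume B = ENNReal.ofReal (b ^ n))
    (hc0 : 0 < c) (hc : c ≤ (1 / 2) ^ 20) (hr : b / a * √n ≤ (1 / 2) ^ 17)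
    {Θ : Set (EuclideanSpace ℝ (Fin n) × EuclideanSpace ℝ (Fin n))} (hΘ : MeasurableSet Θ)
    (hΘAB : Θ ⊆ A ×ˢ B)
    (hΘc : volume ((A ×ˢ B) \ Θ) ≤ ENNReal.ofReal (c * (b / a * √n)) * (volume A * volume B)) :
    ENNReal.ofReal (√(a ^ 2 + b ^ 2) ^ n) ≤ volume (restrictedSum Θ) := by
  by_contra! hlt
  have hn1 : (1 : ℝ) ≤ √n := Real.one_le_sqrt.2 (by exact_mod_cast hn)
  set r := b / a * √n with hrdef
  have hr0 : 0 < r := by positivity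
  have hra : b * √n = r * a := by rw [hrdef]; field_simp
  have hA0 : volume A ≠ 0 := by
    rw [hAa, Ne, ENNReal.ofReal_eq_zero, not_le]
    positivity
  have hAt : volume A ≠ ∞ := by rw [hAa]; exact ENNReal.ofReal_ne_top
  have hBt : volume B ≠ ∞ := by rw [hBb]; exact ENNReal.ofReal_ne_top
  obtain ⟨G, hGB, hG, hBG, hGfib⟩ := exists_measurableSet_fibres_almost_full hA hB hA0 hAt hBt hΘ
    (ENNReal.ofReal_pos.2 (by positivity : 0 < c * r)).ne' ENNReal.ofReal_ne_top hΘc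
  have hG0 : volume G ≠ 0 := by
    intro h
    rw [h, mul_zero, hBb, nonpos_iff_eq_zero, ENNReal.ofReal_eq_zero] at hBG
    exact absurd hBG (not_le.2 (by positivity))
  have hGt : volume G ≠ ∞ := ne_top_of_le_ne_top hBt (measure_mono hGB)
  obtain ⟨g, hg0, hGg⟩ := exists_pos_volume_eq_ofReal_pow hn hG0 hGt
  have hgb : g ≤ b := by
    have h := measure_mono (μ := volume) hGB
    rw [hGg, hBb, ENNReal.ofReal_le_ofReal_iff (by positivity)] at h
    exact le_of_pow_le_pow_left₀ hn.ne' hb.le h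
  have hbg : b / 2 ≤ g := by
    rw [hBb, hGg, (by simp : (2 : ℝ≥0∞) = ENNReal.ofReal 2), ← ENNReal.ofReal_mul (by positivity),
      ENNReal.ofReal_le_ofReal_iff (by positivity)] at hBG
    refine le_of_pow_le_pow_left₀ hn.ne' hg0.le ?_
    have h2 : (2 : ℝ) ≤ 2 ^ n := by
      simpa using pow_le_pow_right₀ (by norm_num : (1 : ℝ) ≤ 2) hn
    rw [div_pow, div_le_iff₀ (by positivity)]
    nlinarith [pow_pos hg0 n]
  obtain ⟨y₀, hy₀⟩ : G.Nonempty := nonempty_of_measure_ne_zero hG0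
  have hS : volume (restrictedSum Θ) ≤ ENNReal.ofReal (1 + r ^ 2) * volume A := by
    refine hlt.le.trans ?_
    rw [hAa, ← ENNReal.ofReal_mul (by positivity), mul_comm]
    exact ENNReal.ofReal_le_ofReal (sqrt_add_sq_pow_le ha (hr.trans (by norm_num)) hb)
  have hshift : ∀ y ∈ G, volume {x | x ∈ A ∧ x + (y - y₀) ∉ A} ≤
      ENNReal.ofReal (r ^ 2 + 4 * (c * r)) * volume A := by
    intro y hy
    refine (ENNReal.add_le_add_iff_left hAt).1 ?_
    calc _ ≤ _ := volume_add_volume_le_volume_restrictedSum_add hΘ (fun x hx => (hΘAB hx).1) y₀ y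
      _ ≤ ENNReal.ofReal (1 + r ^ 2) * volume A + (2 * ENNReal.ofReal (c * r) * volume A +
          2 * ENNReal.ofReal (c * r) * volume A) :=
        add_le_add hS (add_le_add (hGfib y₀ hy₀) (hGfib y hy))
      _ = volume A + ENNReal.ofReal (r ^ 2 + 4 * (c * r)) * volume A := by
        rw [ENNReal.ofReal_add zero_le_one (by positivity),
          ENNReal.ofReal_add (by positivity) (by positivity), ENNReal.ofReal_one,
          ENNReal.ofReal_mul (by norm_num : (0 : ℝ) ≤ 4),
          (by simp : ENNReal.ofReal 4 = (4 : ℝ≥0∞))]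
        ring
  obtain ⟨k, hk1, hk2⟩ : ∃ k : ℕ, 1 ≤ k * r ∧ k * r ≤ 2 := by
    refine ⟨⌈1 / r⌉₊, ?_, ?_⟩
    · rw [← div_le_iff₀ hr0]
      exact Nat.le_ceil _
    · have h := (Nat.ceil_lt_add_one (by positivity : 0 ≤ 1 / r)).le
      have h' := mul_le_mul_of_nonneg_right h hr0.le
      rw [add_mul, div_mul_cancel₀ _ hr0.ne'] at h'
      linarith [hr.trans (by norm_num : ((1 : ℝ) / 2) ^ 17 ≤ 1)]
  have hk0 : (0 : ℝ) < k := pos_of_mul_pos_left (by linarith) hr0.le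
  set V : Set (EuclideanSpace ℝ (Fin n)) := (fun v => (k : ℝ)⁻¹ • v) ⁻¹' ((fun v => v + y₀) ⁻¹' G)
  have hV : MeasurableSet V := measurable_const_smul _ (measurable_add_const _ hG)
  have hVvol : volume V = ENNReal.ofReal ((k * g) ^ n) := by
    rw [Measure.addHaar_preimage_smul _ (by positivity), measure_preimage_add_right, hGg,
      ← ENNReal.ofReal_mul (by positivity), finrank_euclideanSpace_fin, inv_pow, inv_inv,
      abs_of_nonneg (by positivity), mul_pow]
  refine not_almost_invariant hn hA hV ha hAa hVvol ?_ ?_ fun v hv => ?_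
  · have : b / 2 * √n ≤ g * √n := by gcongr
    nlinarith
  · have : g * √n ≤ b * √n := by gcongr
    nlinarith
  · have h := hshift _ hv
    have hkv : v = k • ((k : ℝ)⁻¹ • v + y₀ - y₀) := by
      rw [add_sub_cancel_right, ← Nat.cast_smul_eq_nsmul ℝ, smul_smul, mul_inv_cancel₀ hk0.ne',
        one_smul]
    rw [hkv]
    refine (volume_mem_and_add_nsmul_notMem_le k _).trans ?_
    calc _ ≤ (k : ℝ≥0∞) * (ENNReal.ofReal (r ^ 2 + 4 * (c * r)) * volume A) := by gcongr
      _ = ENNReal.ofReal (k * (r ^ 2 + 4 * (c * r))) * volume A := by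
        rw [ENNReal.ofReal_mul hk0.le, ENNReal.ofReal_natCast, mul_assoc]
      _ ≤ _ := by
        gcongr
        calc _ = (k * r) * (r + 4 * c) := by ring
          _ ≤ 2 * ((1 / 2) ^ 17 + 4 * (1 / 2) ^ 20) := by gcongr
          _ ≤ _ := by norm_num

lemma le_volume_restrictedSum_of_le {n : ℕ} (hn : 0 < n) {A B : Set (EuclideanSpace ℝ (Fin n))}
    (hA : MeasurableSet A) (hB : MeasurableSet B) {a b : ℝ} (ha : 0 < a) (hb : 0 < b)
    (hAa : volume A = ENNReal.ofReal (a ^ n)) (hBb : volume B = ENNReal.ofReal (b ^ n))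
    (hba : b ≤ a) {Θ : Set (EuclideanSpace ℝ (Fin n) × EuclideanSpace ℝ (Fin n))}
    (hΘ : MeasurableSet Θ) (hΘAB : Θ ⊆ A ×ˢ B)
    (hΘc : volume ((A ×ˢ B) \ Θ) ≤
      ENNReal.ofReal ((1 / 2) ^ 79 * min (b / a * √n) 1) * (volume A * volume B)) :
    ENNReal.ofReal (√(a ^ 2 + b ^ 2) ^ n) ≤ volume (restrictedSum Θ) := by
  rcases le_total (b / a * √n) ((1 / 2) ^ 17) with hr | hr
  · refine le_volume_restrictedSum_of_small hn hA hB ha hb hAa hBb (c := (1 / 2) ^ 79)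
      (by positivity) (by norm_num) hr hΘ hΘAB (hΘc.trans ?_)
    gcongr
    exact min_le_left _ _
  · refine le_volume_restrictedSum hn hA hB ha hb hAa hBb (κ := (1 / 2) ^ 19)
      (by positivity) (by norm_num) ?_ hΘ hΘAB (hΘc.trans ?_)
    · have h : (1 / 2) ^ 17 * a ^ 2 ≤ √n * (a * b) := by
        calc _ ≤ b / a * √n * a ^ 2 := by gcongr
          _ = _ := by field_simp
      have hb2 : b ^ 2 ≤ a ^ 2 := by gcongr
      norm_num at h ⊢
      linarith
    · gcongr
      calc (1 / 2 : ℝ) ^ 79 * min (b / a * √n) 1 ≤ (1 / 2) ^ 79 * 1 := by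
            gcongr
            exact min_le_right _ _
        _ ≤ _ := by norm_num

lemma restrictedSum_preimage_swap {n : ℕ}
    (Θ : Set (EuclideanSpace ℝ (Fin n) × EuclideanSpace ℝ (Fin n))) :
    restrictedSum (Prod.swap ⁻¹' Θ) = restrictedSum Θ := by
  ext z
  constructor
  · rintro ⟨x, hx, rfl⟩
    exact ⟨x.swap, hx, add_comm _ _⟩
  · rintro ⟨x, hx, rfl⟩
    exact ⟨x.swap, by simpa using hx, add_comm _ _⟩

lemma volume_prod_sdiff_le {n : ℕ} {A B : Set (EuclideanSpace ℝ (Fin n))} {ε : ℝ}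
    {Θ : Set (EuclideanSpace ℝ (Fin n) × EuclideanSpace ℝ (Fin n))}
    (hΘ : MeasurableSet Θ) (hΘAB : Θ ⊆ A ×ˢ B) (hA : volume A ≠ ∞) (hB : volume B ≠ ∞)
    (h : ENNReal.ofReal (1 - ε) * (volume A * volume B) ≤ volume Θ) :
    volume ((A ×ˢ B) \ Θ) ≤ ENNReal.ofReal ε * (volume A * volume B) := by
  have hAB : volume (A ×ˢ B) = volume A * volume B := by
    rw [Measure.volume_eq_prod, Measure.prod_prod]
  have hABt : volume A * volume B ≠ ∞ := ENNReal.mul_ne_top hA hB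
  rw [measure_sdiff hΘAB hΘ.nullMeasurableSet (ne_top_of_le_ne_top (hAB ▸ hABt)
    (measure_mono hΘAB)), hAB, tsub_le_iff_right]
  calc volume A * volume B = ENNReal.ofReal (ε + (1 - ε)) * (volume A * volume B) := by simp
    _ ≤ (ENNReal.ofReal ε + ENNReal.ofReal (1 - ε)) * (volume A * volume B) := by
      gcongr
      exact ENNReal.ofReal_add_le
    _ ≤ _ := by
      rw [add_mul]
      gcongr

lemma ofReal_pow_rpow_two_div {a : ℝ} {n : ℕ} (hn : 0 < n) (ha : 0 < a) :
    ENNReal.ofReal (a ^ n) ^ ((2 : ℝ) / n) = ENNReal.ofReal (a ^ 2) := by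
  have hn0 : (n : ℝ) ≠ 0 := by exact_mod_cast hn.ne'
  rw [ENNReal.ofReal_rpow_of_pos (by positivity), ← Real.rpow_natCast_mul ha.le,
    mul_div_cancel₀ _ hn0, Real.rpow_two]

end

/-- Theorem 1.2: if `Θ ⊂ A × B` occupies a proportion at least
`1 - c·min{ρ√n, 1}` of `A × B`, then
`λ(A +_Θ B)^{2/n} ≥ λ(A)^{2/n} + λ(B)^{2/n}`. -/
theorem restricted_minkowski_sum_inequality :
    ∃ c : ℝ, 0 < c ∧
      ∀ (ρ : ℝ), ρ ∈ Set.Ioo (0 : ℝ) 1 →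
      ∀ (n : ℕ), 0 < n →
      ∀ (A B : Set (EuclideanSpace ℝ (Fin n))),
        MeasurableSet A → MeasurableSet B →
        0 < volume A → volume A < ⊤ → 0 < volume B → volume B < ⊤ →
        ENNReal.ofReal ρ ≤ (volume B / volume A) ^ ((1 : ℝ) / n) →
        (volume B / volume A) ^ ((1 : ℝ) / n) ≤ ENNReal.ofReal ρ⁻¹ →
      ∀ (Θ : Set (EuclideanSpace ℝ (Fin n) × EuclideanSpace ℝ (Fin n))),
        MeasurableSet Θ → Θ ⊆ A ×ˢ B →
        ENNReal.ofReal (1 - c * min (ρ * Real.sqrt n) 1) * (volume A * volume B)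
          ≤ volume Θ →
        volume A ^ ((2 : ℝ) / n) + volume B ^ ((2 : ℝ) / n)
          ≤ volume (restrictedSum Θ) ^ ((2 : ℝ) / n) := by
  refine ⟨(1 / 2) ^ 79, by positivity, ?_⟩
  intro ρ hρ n hn A B hA hB hA0 hAt hB0 hBt hρ1 hρ2 Θ hΘ hΘAB hΘle
  obtain ⟨a, ha, hAa⟩ := exists_pos_volume_eq_ofReal_pow hn hA0.ne' hAt.ne
  obtain ⟨b, hb, hBb⟩ := exists_pos_volume_eq_ofReal_pow hn hB0.ne' hBt.ne
  have hratio : (volume B / volume A) ^ ((1 : ℝ) / n) = ENNReal.ofReal (b / a) := by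
    rw [hAa, hBb, ← ENNReal.ofReal_div_of_pos (by positivity), ← div_pow,
      ENNReal.ofReal_rpow_of_pos (by positivity), one_div,
      Real.pow_rpow_inv_natCast (by positivity) hn.ne']
  rw [hratio, ENNReal.ofReal_le_ofReal_iff (by positivity)] at hρ1
  rw [hratio, ENNReal.ofReal_le_ofReal_iff (inv_nonneg.2 hρ.1.le),
    le_inv_comm₀ (by positivity) hρ.1, inv_div] at hρ2
  have hΘc := volume_prod_sdiff_le hΘ hΘAB hAt.ne hBt.ne hΘle
  suffices h : ENNReal.ofReal (√(a ^ 2 + b ^ 2) ^ n) ≤ volume (restrictedSum Θ) by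
    calc _ = ENNReal.ofReal (√(a ^ 2 + b ^ 2) ^ n) ^ ((2 : ℝ) / n) := by
          rw [hAa, hBb, ofReal_pow_rpow_two_div hn ha, ofReal_pow_rpow_two_div hn hb,
            ofReal_pow_rpow_two_div hn (by positivity), Real.sq_sqrt (by positivity),
            ENNReal.ofReal_add (by positivity) (by positivity)]
      _ ≤ _ := by gcongr
  rcases le_total b a with hba | hab
  · refine le_volume_restrictedSum_of_le hn hA hB ha hb hAa hBb hba hΘ hΘAB (hΘc.trans ?_)
    gcongr
  · have hsub : Prod.swap ⁻¹' Θ ⊆ B ×ˢ A := fun x hx => (hΘAB hx).symm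
    have hswap : volume ((B ×ˢ A) \ Prod.swap ⁻¹' Θ) = volume ((A ×ˢ B) \ Θ) := by
      rw [← Set.preimage_swap_prod, ← Set.preimage_sdiff]
      exact Measure.measurePreserving_swap.measure_preimage
        ((hA.prod hB).diff hΘ).nullMeasurableSet
    rw [← restrictedSum_preimage_swap, add_comm]
    refine le_volume_restrictedSum_of_le hn hB hA hb ha hBb hAa hab (measurable_swap hΘ) hsub ?_
    rw [hswap, mul_comm (volume B)]
    refine hΘc.trans ?_
    gcongr
end

section
/- There exist universal constants c, C > 0 with the following property. For every δ ∈ [0, c], every positive integer n, all measurable sets A, B ⊂ ℝⁿ with 0 < λ(A) < ∞ and 0 < λ(B) < ∞, and every measurable Θ ⊂ A × B with λ(Θ) ≥ (1 − δ)·λ(A)·λ(B), one has λ(A +_Θ B)^{2/n} ≥ (1 − Cδ/n)·(λ(A)^{2/n} + λ(B)^{2/n}). -/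
open MeasureTheory

open ProbabilityTheory Set Filter Topology
open scoped ENNReal

/-- The distribution function of the density `f` on `ℝ`, normalised to have total mass one. -/
noncomputable def relativeCDF (f : ℝ → ℝ≥0∞) (x : ℝ) : ℝ :=
  ((∫⁻ t in Iic x, f t) / ∫⁻ t, f t).toReal

/-- The probability measure on `ℝ` with density proportional to `f`. -/
noncomputable def normalizedMeasure (f : ℝ → ℝ≥0∞) : Measure ℝ :=
  (∫⁻ t, f t)⁻¹ • volume.withDensity f

section RelativeCDF

variable {f : ℝ → ℝ≥0∞}

lemma isProbabilityMeasure_normalizedMeasure (h0 : ∫⁻ t, f t ≠ 0) (h1 : ∫⁻ t, f t ≠ ∞) :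
    IsProbabilityMeasure (normalizedMeasure f) :=
  ⟨by simp [normalizedMeasure, ENNReal.inv_mul_cancel h0 h1]⟩

lemma relativeCDF_eq_cdf (h0 : ∫⁻ t, f t ≠ 0) (h1 : ∫⁻ t, f t ≠ ∞) (x : ℝ) :
    relativeCDF f x = cdf (normalizedMeasure f) x := by
  have := isProbabilityMeasure_normalizedMeasure h0 h1
  rw [cdf_eq_real, measureReal_def, relativeCDF, normalizedMeasure, Measure.smul_apply,
    withDensity_apply _ measurableSet_Iic, smul_eq_mul, ENNReal.div_eq_inv_mul]

lemma integrable_toReal_density (hf : Measurable f) (h1 : ∫⁻ t, f t ≠ ∞) :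
    Integrable (fun t => (f t).toReal) :=
  integrable_toReal_of_lintegral_ne_top hf.aemeasurable h1

lemma relativeCDF_eq_add (hf : Measurable f) (h1 : ∫⁻ t, f t ≠ ∞) (x : ℝ) :
    relativeCDF f x =
      relativeCDF f 0 + (∫ t in (0 : ℝ)..x, (f t).toReal) / (∫⁻ t, f t).toReal := by
  have key : ∀ y, relativeCDF f y =
      (∫ t in Iic y, (f t).toReal) / (∫⁻ t, f t).toReal := fun y => by
    rw [relativeCDF, ENNReal.toReal_div, integral_toReal hf.aemeasurable]
    exact ae_restrict_of_ae (ae_lt_top hf h1)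
  have hi := integrable_toReal_density hf h1
  rw [key, key, ← add_div, ← intervalIntegral.integral_Iic_sub_Iic hi.integrableOn hi.integrableOn]
  ring

lemma continuous_relativeCDF (hf : Measurable f) (h1 : ∫⁻ t, f t ≠ ∞) :
    Continuous (relativeCDF f) := by
  have hi := integrable_toReal_density hf h1
  rw [funext (relativeCDF_eq_add hf h1)]
  exact continuous_const.add
    ((intervalIntegral.continuous_primitive (fun a b => hi.intervalIntegrable) 0).div_const _)

lemma hasDerivAt_relativeCDF (hf : Measurable f) (h1 : ∫⁻ t, f t ≠ ∞) {x : ℝ}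
    (hx : HasDerivAt (fun y => ∫ t in (0 : ℝ)..y, (f t).toReal) (f x).toReal x) :
    HasDerivAt (relativeCDF f) ((f x).toReal / (∫⁻ t, f t).toReal) x := by
  rw [funext (relativeCDF_eq_add hf h1)]
  exact (hx.div_const _).const_add _

lemma ae_hasDerivAt_relativeCDF (hf : Measurable f) (h1 : ∫⁻ t, f t ≠ ∞) :
    ∀ᵐ x, HasDerivAt (relativeCDF f) ((f x).toReal / (∫⁻ t, f t).toReal) x := by
  filter_upwards [LocallyIntegrable.ae_hasDerivAt_integral
    (integrable_toReal_density hf h1).locallyIntegrable] with x hx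
  exact hasDerivAt_relativeCDF hf h1 (hx 0)

lemma mem_range_relativeCDF (hf : Measurable f) (h0 : ∫⁻ t, f t ≠ 0) (h1 : ∫⁻ t, f t ≠ ∞)
    {p : ℝ} (hp : p ∈ Ioo (0 : ℝ) 1) : p ∈ range (relativeCDF f) := by
  apply mem_range_of_exists_le_of_exists_ge (continuous_relativeCDF hf h1)
  · rw [funext (relativeCDF_eq_cdf h0 h1)]
    exact (((tendsto_cdf_atBot _).eventually_lt_const hp.1).exists).imp fun _ h => h.le
  · rw [funext (relativeCDF_eq_cdf h0 h1)]
    exact (((tendsto_cdf_atTop _).eventually_const_lt hp.2).exists).imp fun _ h => h.le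

lemma monotone_relativeCDF (h0 : ∫⁻ t, f t ≠ 0) (h1 : ∫⁻ t, f t ≠ ∞) :
    Monotone (relativeCDF f) := by
  rw [funext (relativeCDF_eq_cdf h0 h1)]
  exact monotone_cdf _

lemma normalizedMeasure_setOf_relativeCDF_le (hf : Measurable f) (h0 : ∫⁻ t, f t ≠ 0)
    (h1 : ∫⁻ t, f t ≠ ∞) {p : ℝ} (hp : p ∈ Ioo (0 : ℝ) 1) :
    normalizedMeasure f {x | relativeCDF f x ≤ p} = ENNReal.ofReal p := by
  have := isProbabilityMeasure_normalizedMeasure h0 h1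
  have hmono := monotone_relativeCDF h0 h1
  obtain ⟨x₀, hx₀⟩ := mem_range_relativeCDF hf h0 h1 hp
  obtain ⟨p', hpp', hp'⟩ := exists_between hp.2
  obtain ⟨x₁, hx₁⟩ := mem_range_relativeCDF hf h0 h1 ⟨hp.1.trans hpp', hp'⟩
  set s := {x | relativeCDF f x ≤ p}
  have hne : s.Nonempty := ⟨x₀, hx₀.le⟩
  have hbdd : BddAbove s := ⟨x₁, fun x hx => by
    by_contra! h
    have h2 := hmono h.le
    have h3 : relativeCDF f x ≤ p := hx
    linarith⟩
  have hclosed : IsClosed s := isClosed_le (continuous_relativeCDF hf h1) continuous_const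
  have hmem : sSup s ∈ s := hclosed.csSup_mem hne hbdd
  have hsI : s = Iic (sSup s) :=
    Subset.antisymm (fun x hx => le_csSup hbdd hx) fun x hx => (hmono hx).trans hmem
  have hval : relativeCDF f (sSup s) = p :=
    le_antisymm hmem (hx₀.symm.le.trans (hmono (le_csSup hbdd hx₀.le)))
  rw [hsI, ← ofReal_cdf, ← relativeCDF_eq_cdf h0 h1, hval]

lemma ae_relativeCDF_mem_Ioo (hf : Measurable f) (h0 : ∫⁻ t, f t ≠ 0) (h1 : ∫⁻ t, f t ≠ ∞) :
    ∀ᵐ x ∂normalizedMeasure f, relativeCDF f x ∈ Ioo (0 : ℝ) 1 := by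
  have := isProbabilityMeasure_normalizedMeasure h0 h1
  have hm := (continuous_relativeCDF hf h1).measurable
  have hsmall : ∀ ε : ℝ≥0∞, (∀ p ∈ Ioo (0 : ℝ) 1, ε ≤ ENNReal.ofReal p) → ε = 0 := by
    intro ε hε
    refine le_antisymm (le_of_forall_gt_imp_ge_of_dense fun a ha => ?_) bot_le
    rcases lt_or_ge a 1 with h | h
    · have ha' : a ≠ ∞ := (h.trans ENNReal.one_lt_top).ne
      refine (hε a.toReal ⟨ENNReal.toReal_pos ha.ne' ha', ?_⟩).trans (ENNReal.ofReal_toReal_le)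
      exact (ENNReal.toReal_lt_toReal ha' ENNReal.one_ne_top).2 h
    · refine ((hε (1 / 2) (by norm_num)).trans ?_).trans h
      rw [ENNReal.ofReal_le_one]
      norm_num
  have hlow : ∀ᵐ x ∂normalizedMeasure f, 0 < relativeCDF f x := by
    rw [ae_iff]
    refine hsmall _ fun p hp => ?_
    rw [← normalizedMeasure_setOf_relativeCDF_le hf h0 h1 hp]
    exact measure_mono fun x hx => (not_lt.1 hx).trans hp.1.le
  have hhigh : ∀ᵐ x ∂normalizedMeasure f, relativeCDF f x < 1 := by
    rw [ae_iff]
    refine hsmall _ fun p hp => ?_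
    have hp' : 1 - p ∈ Ioo (0 : ℝ) 1 := ⟨by linarith [hp.2], by linarith [hp.1]⟩
    have hc : normalizedMeasure f {x | relativeCDF f x ≤ 1 - p}ᶜ = ENNReal.ofReal p := by
      rw [prob_compl_eq_one_sub (measurableSet_le hm measurable_const),
        normalizedMeasure_setOf_relativeCDF_le hf h0 h1 hp', ← ENNReal.ofReal_one,
        ← ENNReal.ofReal_sub _ hp'.1.le]
      congr 1
      ring
    rw [← hc]
    refine measure_mono fun x hx => ?_
    have hx' : 1 ≤ relativeCDF f x := not_lt.1 hx
    simp only [mem_compl_iff, mem_ofPred_eq, not_le]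
    linarith [hp.1]
  filter_upwards [hlow, hhigh] with x h h' using ⟨h, h'⟩

lemma ae_ne_zero_imp_relativeCDF_mem_Ioo (hf : Measurable f) (h0 : ∫⁻ t, f t ≠ 0)
    (h1 : ∫⁻ t, f t ≠ ∞) :
    ∀ᵐ x, f x ≠ 0 → relativeCDF f x ∈ Ioo (0 : ℝ) 1 := by
  have h := ae_relativeCDF_mem_Ioo hf h0 h1
  rw [normalizedMeasure, Measure.ae_ennreal_smul_measure_iff (ENNReal.inv_ne_zero.2 h1)] at h
  exact (ae_withDensity_iff hf).1 h

end RelativeCDF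

/-- The standard Gaussian distribution function. -/
noncomputable def gaussianCDF : ℝ → ℝ := relativeCDF (gaussianPDF 0 1)

lemma lintegral_stdGaussianPDF : ∫⁻ t, gaussianPDF 0 1 t = 1 :=
  lintegral_gaussianPDF_eq_one 0 one_ne_zero

lemma normalizedMeasure_gaussianPDF :
    normalizedMeasure (gaussianPDF 0 1) = gaussianReal 0 1 := by
  rw [normalizedMeasure, lintegral_stdGaussianPDF, inv_one, one_smul,
    gaussianReal_of_var_ne_zero 0 one_ne_zero]

lemma continuous_gaussianPDFReal : Continuous (gaussianPDFReal 0 1) := by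
  rw [gaussianPDFReal_def]
  fun_prop

lemma hasDerivAt_gaussianCDF (x : ℝ) :
    HasDerivAt gaussianCDF (gaussianPDFReal 0 1 x) x := by
  have hint : ∫⁻ t, gaussianPDF 0 1 t ≠ ∞ := by simp
  have h := hasDerivAt_relativeCDF (f := gaussianPDF 0 1) (measurable_gaussianPDF 0 1) hint (x := x)
  simp only [toReal_gaussianPDF, lintegral_stdGaussianPDF, ENNReal.toReal_one, div_one] at h
  exact h (intervalIntegral.integral_hasDerivAt_right
    (integrable_gaussianPDFReal 0 1).intervalIntegrable
    (continuous_gaussianPDFReal.stronglyMeasurableAtFilter _ _)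
    continuous_gaussianPDFReal.continuousAt)

lemma strictMono_gaussianCDF : StrictMono gaussianCDF :=
  strictMono_of_hasDerivAt_pos hasDerivAt_gaussianCDF
    fun x => gaussianPDFReal_pos 0 1 x one_ne_zero

lemma ofReal_gaussianCDF (x : ℝ) : ENNReal.ofReal (gaussianCDF x) = gaussianReal 0 1 (Iic x) := by
  rw [gaussianCDF, relativeCDF_eq_cdf (by simp) (by simp), normalizedMeasure_gaussianPDF, ofReal_cdf]

lemma gaussianCDF_mem_Ioo (x : ℝ) : gaussianCDF x ∈ Ioo (0 : ℝ) 1 := by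
  have h : ∀ y, gaussianCDF y ∈ Icc (0 : ℝ) 1 := fun y => by
    rw [gaussianCDF, relativeCDF_eq_cdf (by simp) (by simp)]
    exact ⟨cdf_nonneg _ _, cdf_le_one _ _⟩
  exact ⟨(h (x - 1)).1.trans_lt (strictMono_gaussianCDF (by linarith)),
    (strictMono_gaussianCDF (by linarith)).trans_le (h (x + 1)).2⟩

open Classical in
/-- The standard Gaussian quantile function, extended by zero outside `(0, 1)`. -/
noncomputable def gaussianQuantile : ℝ → ℝ :=
  (Ioo (0 : ℝ) 1).piecewise (Function.invFun gaussianCDF) 0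

lemma gaussianCDF_gaussianQuantile {p : ℝ} (hp : p ∈ Ioo (0 : ℝ) 1) :
    gaussianCDF (gaussianQuantile p) = p := by
  rw [gaussianQuantile, piecewise_eq_of_mem _ _ _ hp]
  exact Function.invFun_eq (mem_range_relativeCDF (measurable_gaussianPDF 0 1)
    (by simp) (by simp) hp)

lemma gaussianQuantile_le_iff {p t : ℝ} (hp : p ∈ Ioo (0 : ℝ) 1) :
    gaussianQuantile p ≤ t ↔ p ≤ gaussianCDF t := by
  rw [← strictMono_gaussianCDF.le_iff_le, gaussianCDF_gaussianQuantile hp]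

lemma gaussianQuantile_gaussianCDF (t : ℝ) : gaussianQuantile (gaussianCDF t) = t :=
  strictMono_gaussianCDF.injective (gaussianCDF_gaussianQuantile (gaussianCDF_mem_Ioo t))

lemma strictMonoOn_gaussianQuantile : StrictMonoOn gaussianQuantile (Ioo 0 1) := by
  intro p hp r hr hpr
  rwa [← strictMono_gaussianCDF.lt_iff_lt, gaussianCDF_gaussianQuantile hp,
    gaussianCDF_gaussianQuantile hr]

lemma continuousAt_gaussianQuantile {p : ℝ} (hp : p ∈ Ioo (0 : ℝ) 1) :
    ContinuousAt gaussianQuantile p := by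
  refine strictMonoOn_gaussianQuantile.continuousAt_of_image_mem_nhds (isOpen_Ioo.mem_nhds hp) ?_
  convert univ_mem
  exact eq_univ_of_forall fun t => ⟨_, gaussianCDF_mem_Ioo t, gaussianQuantile_gaussianCDF t⟩

lemma hasDerivAt_gaussianQuantile {p : ℝ} (hp : p ∈ Ioo (0 : ℝ) 1) :
    HasDerivAt gaussianQuantile (gaussianPDFReal 0 1 (gaussianQuantile p))⁻¹ p := by
  refine HasDerivAt.of_local_left_inverse (continuousAt_gaussianQuantile hp)
    (hasDerivAt_gaussianCDF _) (gaussianPDFReal_pos 0 1 _ one_ne_zero).ne' ?_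
  filter_upwards [isOpen_Ioo.mem_nhds hp] with y hy using gaussianCDF_gaussianQuantile hy

lemma measurable_gaussianQuantile : Measurable gaussianQuantile := by
  classical
  have hc : ContinuousOn (Function.invFun gaussianCDF) (Ioo 0 1) := by
    refine ContinuousOn.congr (f := gaussianQuantile)
      (fun p hp => (continuousAt_gaussianQuantile hp).continuousWithinAt) fun p hp => ?_
    rw [gaussianQuantile, piecewise_eq_of_mem _ _ _ hp]
  rw [gaussianQuantile]
  convert hc.measurable_piecewise (g := 0) continuousOn_const measurableSet_Ioo

/-- The increasing map transporting the probability measure with density proportional to `f` to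
the standard Gaussian measure. -/
noncomputable def gaussianTransport (f : ℝ → ℝ≥0∞) (x : ℝ) : ℝ :=
  gaussianQuantile (relativeCDF f x)

lemma measurable_gaussianTransport {E : Type*} [MeasurableSpace E] {f : ℝ × E → ℝ≥0∞}
    (hf : Measurable f) :
    Measurable fun p : ℝ × E => gaussianTransport (fun t => f (t, p.2)) p.1 := by
  refine measurable_gaussianQuantile.comp (Measurable.ennreal_toReal (Measurable.div ?_ ?_))
  · have : ∀ p : ℝ × E, ∫⁻ t in Iic p.1, f (t, p.2) =
        ∫⁻ t, {q : (ℝ × E) × ℝ | q.2 ≤ q.1.1}.indicator (fun q => f (q.2, q.1.2)) (p, t) := by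
      intro p
      rw [← lintegral_indicator measurableSet_Iic]
      rfl
    simp_rw [this]
    refine Measurable.lintegral_prod_right' (Measurable.indicator (by fun_prop) ?_)
    exact measurableSet_le measurable_snd (by fun_prop)
  · exact Measurable.lintegral_prod_right' (f := fun q : (ℝ × E) × ℝ => f (q.2, q.1.2))
      (by fun_prop)

section Transport

variable {f : ℝ → ℝ≥0∞}

lemma map_gaussianTransport (hf : Measurable f) (h0 : ∫⁻ t, f t ≠ 0) (h1 : ∫⁻ t, f t ≠ ∞) :
    (normalizedMeasure f).map (gaussianTransport f) = gaussianReal 0 1 := by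
  have := isProbabilityMeasure_normalizedMeasure h0 h1
  have hm : Measurable (gaussianTransport f) :=
    measurable_gaussianQuantile.comp (continuous_relativeCDF hf h1).measurable
  refine Measure.ext_of_Iic _ _ fun t => ?_
  rw [Measure.map_apply hm measurableSet_Iic, ← ofReal_gaussianCDF,
    ← normalizedMeasure_setOf_relativeCDF_le hf h0 h1 (gaussianCDF_mem_Ioo t)]
  refine measure_congr ?_
  filter_upwards [ae_relativeCDF_mem_Ioo hf h0 h1] with x hx
  exact propext (gaussianQuantile_le_iff hx)

lemma lintegral_mul_comp_gaussianTransport (hf : Measurable f) (h1 : ∫⁻ t, f t ≠ ∞)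
    {φ : ℝ → ℝ≥0∞} (hφ : Measurable φ) :
    ∫⁻ x, f x * φ (gaussianTransport f x) = (∫⁻ t, f t) * ∫⁻ t, φ t ∂gaussianReal 0 1 := by
  rcases eq_or_ne (∫⁻ t, f t) 0 with h0 | h0
  · rw [h0, zero_mul]
    rw [lintegral_eq_zero_iff hf] at h0
    refine (lintegral_congr_ae ?_).trans lintegral_zero
    filter_upwards [h0] with x hx
    simp [hx]
  have hm : Measurable (gaussianTransport f) :=
    measurable_gaussianQuantile.comp (continuous_relativeCDF hf h1).measurable
  rw [← map_gaussianTransport hf h0 h1, lintegral_map hφ hm, normalizedMeasure,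
    lintegral_smul_measure, smul_eq_mul, ← mul_assoc, ENNReal.mul_inv_cancel h0 h1, one_mul,
    lintegral_withDensity_eq_lintegral_mul _ hf (g := fun x => φ (gaussianTransport f x))
      (hφ.comp hm)]
  rfl

end Transport

lemma rpow_mul_rpow_mul_exp_le {s c : ℝ} (hs : 0 < s) (hc : 0 < c) (hsc : s ^ 2 + c ^ 2 = 1)
    {a b : ℝ} (ha : 0 ≤ a) (hb : 0 ≤ b) (u v : ℝ) :
    a ^ (s ^ 2) * b ^ (c ^ 2) * Real.exp (s * c * (u * v)) ≤
      s ^ (s ^ 2) * c ^ (c ^ 2) * (gaussianPDFReal 0 1 (s * u - c * v) *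
        (s * ((gaussianPDFReal 0 1 u)⁻¹ * a) + c * ((gaussianPDFReal 0 1 v)⁻¹ * b))) := by
  have hu := gaussianPDFReal_pos 0 1 u one_ne_zero
  have hv := gaussianPDFReal_pos 0 1 v one_ne_zero
  have hw := gaussianPDFReal_pos 0 1 (s * u - c * v) one_ne_zero
  have amgm := Real.geom_mean_le_arith_mean2_weighted (sq_nonneg s) (sq_nonneg c)
    (p₁ := (gaussianPDFReal 0 1 u)⁻¹ * a / s) (p₂ := (gaussianPDFReal 0 1 v)⁻¹ * b / c)
    (by positivity) (by positivity) hsc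
  have hrhs : s ^ 2 * ((gaussianPDFReal 0 1 u)⁻¹ * a / s) +
      c ^ 2 * ((gaussianPDFReal 0 1 v)⁻¹ * b / c) =
      s * ((gaussianPDFReal 0 1 u)⁻¹ * a) + c * ((gaussianPDFReal 0 1 v)⁻¹ * b) := by
    field_simp
  rw [hrhs] at amgm
  have hpdf : gaussianPDFReal 0 1 (s * u - c * v) =
      gaussianPDFReal 0 1 u ^ (s ^ 2) * gaussianPDFReal 0 1 v ^ (c ^ 2) *
        Real.exp (s * c * (u * v)) := by
    have hk : (0 : ℝ) < (√(2 * Real.pi))⁻¹ := by positivity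
    simp only [gaussianPDFReal, NNReal.coe_one, mul_one, sub_zero]
    rw [Real.mul_rpow hk.le (Real.exp_pos _).le, Real.mul_rpow hk.le (Real.exp_pos _).le,
      ← Real.exp_mul, ← Real.exp_mul,
      show ∀ p q r t w : ℝ, p * q * (r * t) * w = (p * r) * (q * t * w) by intros; ring,
      ← Real.rpow_add hk, hsc, Real.rpow_one, ← Real.exp_add, ← Real.exp_add]
    congr 2
    ring
  rw [Real.div_rpow (by positivity) hs.le, Real.div_rpow (by positivity) hc.le,
    Real.mul_rpow (by positivity) ha, Real.mul_rpow (by positivity) hb,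
    Real.inv_rpow hu.le, Real.inv_rpow hv.le] at amgm
  refine le_trans (le_of_eq ?_)
    (mul_le_mul_of_nonneg_left (mul_le_mul_of_nonneg_left amgm hw.le) (by positivity))
  rw [hpdf]
  have h1 := Real.rpow_pos_of_pos hs (s ^ 2)
  have h2 := Real.rpow_pos_of_pos hc (c ^ 2)
  have h3 := Real.rpow_pos_of_pos hu (s ^ 2)
  have h4 := Real.rpow_pos_of_pos hv (c ^ 2)
  field_simp

lemma lintegral_rpow_mul_exp_gaussianTransport_le {s c : ℝ} (hs : 0 < s) (hc : 0 < c)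
    (hsc : s ^ 2 + c ^ 2 = 1) {f g : ℝ → ℝ≥0∞} (hf : Measurable f) (hg : Measurable g)
    (hf1 : ∫⁻ t, f t ≠ ∞) (hg1 : ∫⁻ t, g t ≠ ∞) (z : ℝ) :
    ∫⁻ x, f x ^ (s ^ 2) * g (z - x) ^ (c ^ 2) *
        ENNReal.ofReal (Real.exp (s * c * (gaussianTransport f x * gaussianTransport g (z - x)))) ≤
      ENNReal.ofReal (s ^ (s ^ 2) * c ^ (c ^ 2)) *
        ((∫⁻ t, f t) ^ (s ^ 2) * (∫⁻ t, g t) ^ (c ^ 2)) := by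
  have hs2 : 0 < s ^ 2 := by positivity
  have hc2 : 0 < c ^ 2 := by positivity
  have hqmp := (Measure.measurePreserving_sub_left (volume : Measure ℝ) z).quasiMeasurePreserving
  rcases eq_or_ne (∫⁻ t, f t) 0 with hf0 | hf0
  · rw [lintegral_eq_zero_iff hf] at hf0
    refine (le_of_eq ((lintegral_congr_ae ?_).trans lintegral_zero)).trans bot_le
    filter_upwards [hf0] with x hx
    simp [hx, hs2]
  rcases eq_or_ne (∫⁻ t, g t) 0 with hg0 | hg0
  · rw [lintegral_eq_zero_iff hg] at hg0
    refine (le_of_eq ((lintegral_congr_ae ?_).trans lintegral_zero)).trans bot_le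
    filter_upwards [hqmp.ae hg0] with x hx
    simp [hx, hc2]
  set M := ∫⁻ t, f t
  set N := ∫⁻ t, g t
  set F := relativeCDF f
  set G := relativeCDF g
  have hae : ∀ᵐ x, HasDerivAt F ((f x).toReal / M.toReal) x ∧
      HasDerivAt G ((g (z - x)).toReal / N.toReal) (z - x) ∧
      (f x ≠ 0 → F x ∈ Ioo (0 : ℝ) 1) ∧ (g (z - x) ≠ 0 → G (z - x) ∈ Ioo (0 : ℝ) 1) ∧
      f x ≠ ∞ ∧ g (z - x) ≠ ∞ := by
    filter_upwards [ae_hasDerivAt_relativeCDF hf hf1, hqmp.ae (ae_hasDerivAt_relativeCDF hg hg1),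
      ae_ne_zero_imp_relativeCDF_mem_Ioo hf hf0 hf1,
      hqmp.ae (ae_ne_zero_imp_relativeCDF_mem_Ioo hg hg0 hg1), ae_lt_top hf hf1,
      hqmp.ae (ae_lt_top hg hg1)] with x h1 h2 h3 h4 h5 h6
    exact ⟨h1, h2, h3, h4, h5.ne, h6.ne⟩
  obtain ⟨P, hP, hPm, hPP⟩ := hae.exists_measurable_mem
  have hFc : Continuous F := continuous_relativeCDF hf hf1
  have hGc : Continuous G := continuous_relativeCDF hg hg1
  set I : Set ℝ := {x | F x ∈ Ioo (0 : ℝ) 1 ∧ G (z - x) ∈ Ioo (0 : ℝ) 1}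
  have hIm : MeasurableSet I :=
    ((isOpen_Ioo.preimage hFc).inter
      (isOpen_Ioo.preimage (hGc.comp (continuous_const.sub continuous_id)))).measurableSet
  set u : ℝ → ℝ := gaussianTransport f
  set v : ℝ → ℝ := fun x => gaussianTransport g (z - x)
  set H : ℝ → ℝ := fun x => gaussianCDF (s * u x - c * v x)
  set H' : ℝ → ℝ := fun x => gaussianPDFReal 0 1 (s * u x - c * v x) *
        (s * ((gaussianPDFReal 0 1 (u x))⁻¹ * ((f x).toReal / M.toReal)) +
          c * ((gaussianPDFReal 0 1 (v x))⁻¹ * ((g (z - x)).toReal / N.toReal)))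
  have hderiv : ∀ x ∈ P ∩ I, HasDerivWithinAt H (H' x) (P ∩ I) x := by
    rintro x ⟨hxP, hxF, hxG⟩
    obtain ⟨h1, h2, -⟩ := hPP x hxP
    have du : HasDerivAt u _ x := (hasDerivAt_gaussianQuantile hxF).comp x h1
    have dv : HasDerivAt v _ x := ((hasDerivAt_gaussianQuantile hxG).comp (z - x) h2).comp x
      ((hasDerivAt_id x).const_sub z)
    have dH := (hasDerivAt_gaussianCDF (s * u x - c * v x)).comp x
      ((du.const_mul s).sub (dv.const_mul c))
    refine (dH.congr_deriv ?_).hasDerivWithinAt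
    simp only [H', u, v, gaussianTransport]
    ring
  have hmono : MonotoneOn H (P ∩ I) := by
    rintro x ⟨-, hxF, hxG⟩ y ⟨-, hyF, hyG⟩ hxy
    have h1 : u x ≤ u y := strictMonoOn_gaussianQuantile.monotoneOn hxF hyF
      (monotone_relativeCDF hf0 hf1 hxy)
    have h2 : v y ≤ v x := strictMonoOn_gaussianQuantile.monotoneOn hyG hxG
      (monotone_relativeCDF hg0 hg1 (by linarith))
    exact strictMono_gaussianCDF.monotone (by nlinarith)
  have hle : ∫⁻ x in P ∩ I, ENNReal.ofReal (H' x) ≤ 1 := by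
    rw [lintegral_deriv_eq_volume_image_of_monotoneOn (hPm.inter hIm) hderiv hmono]
    calc volume (H '' (P ∩ I)) ≤ volume (Ioo (0 : ℝ) 1) :=
          measure_mono (image_subset_iff.2 fun x _ => gaussianCDF_mem_Ioo _)
      _ = 1 := by simp
  have hMr : 0 < M.toReal := ENNReal.toReal_pos hf0 hf1
  have hNr : 0 < N.toReal := ENNReal.toReal_pos hg0 hg1
  have hpt : ∀ᵐ x, f x ^ (s ^ 2) * g (z - x) ^ (c ^ 2) *
      ENNReal.ofReal (Real.exp (s * c * (u x * v x))) ≤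
      (ENNReal.ofReal (s ^ (s ^ 2) * c ^ (c ^ 2)) * (M ^ (s ^ 2) * N ^ (c ^ 2))) *
        (P ∩ I).indicator (fun x => ENNReal.ofReal (H' x)) x := by
    filter_upwards [hP] with x hxP
    obtain ⟨-, -, h3, h4, h5, h6⟩ := hPP x hxP
    by_cases hx : f x ≠ 0 ∧ g (z - x) ≠ 0
    · have hxI : x ∈ P ∩ I := ⟨hxP, h3 hx.1, h4 hx.2⟩
      rw [indicator_of_mem hxI]
      have key := rpow_mul_rpow_mul_exp_le hs hc hsc (a := (f x).toReal / M.toReal)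
        (b := (g (z - x)).toReal / N.toReal) (by positivity) (by positivity) (u x) (v x)
      rw [Real.div_rpow (by positivity) hMr.le, Real.div_rpow (by positivity) hNr.le] at key
      have key2 : (f x).toReal ^ (s ^ 2) * (g (z - x)).toReal ^ (c ^ 2) *
          Real.exp (s * c * (u x * v x)) ≤
          s ^ (s ^ 2) * c ^ (c ^ 2) * (M.toReal ^ (s ^ 2) * N.toReal ^ (c ^ 2)) * H' x := by
        have hM' := Real.rpow_pos_of_pos hMr (s ^ 2)
        have hN' := Real.rpow_pos_of_pos hNr (c ^ 2)
        have h := mul_le_mul_of_nonneg_left key (mul_pos hM' hN').le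
        refine (le_of_eq ?_).trans (h.trans (le_of_eq ?_))
        · field_simp
        · simp only [H']
          ring
      have hrpow : ∀ {a : ℝ≥0∞} (_ : a ≠ ∞) {r : ℝ} (_ : 0 ≤ r),
          a ^ r = ENNReal.ofReal (a.toReal ^ r) := by
        intro a ha r hr
        rw [← ENNReal.ofReal_rpow_of_nonneg ENNReal.toReal_nonneg hr, ENNReal.ofReal_toReal ha]
      rw [hrpow h5 hs2.le, hrpow h6 hc2.le, hrpow hf1 hs2.le, hrpow hg1 hc2.le,
        ← ENNReal.ofReal_mul (by positivity), ← ENNReal.ofReal_mul (by positivity),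
        ← ENNReal.ofReal_mul (by positivity), ← ENNReal.ofReal_mul (by positivity),
        ← ENNReal.ofReal_mul (by positivity)]
      exact ENNReal.ofReal_le_ofReal key2
    · have : f x ^ (s ^ 2) * g (z - x) ^ (c ^ 2) = 0 := by
        rcases not_and_or.1 hx with h | h
        · simp [not_not.1 h, hs2]
        · simp [not_not.1 h, hc2]
      simp [this]
  calc _ ≤ _ := lintegral_mono_ae hpt
    _ = (ENNReal.ofReal (s ^ (s ^ 2) * c ^ (c ^ 2)) * (M ^ (s ^ 2) * N ^ (c ^ 2))) *
        ∫⁻ x in P ∩ I, ENNReal.ofReal (H' x) := by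
      rw [lintegral_const_mul', lintegral_indicator (hPm.inter hIm)]
      exact ENNReal.mul_ne_top ENNReal.ofReal_ne_top (ENNReal.mul_ne_top
        (ENNReal.rpow_ne_top_of_nonneg hs2.le hf1) (ENNReal.rpow_ne_top_of_nonneg hc2.le hg1))
    _ ≤ _ := mul_le_of_le_one_right' hle

lemma measurable_finCons {n : ℕ} :
    Measurable fun p : ℝ × (Fin n → ℝ) => (Fin.cons p.1 p.2 : Fin (n + 1) → ℝ) := by
  rw [measurable_pi_iff]
  refine Fin.cases ?_ fun i => ?_
  · simpa using measurable_fst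
  · simpa [Function.comp_def] using (measurable_pi_apply i).comp measurable_snd

lemma measurable_finTail {n : ℕ} :
    Measurable fun x : Fin (n + 1) → ℝ => Fin.tail x :=
  measurable_pi_iff.2 fun i => measurable_pi_apply i.succ

lemma lintegral_finCons {n : ℕ} {F : (Fin (n + 1) → ℝ) → ℝ≥0∞} (hF : Measurable F) :
    ∫⁻ x, F x = ∫⁻ y : Fin n → ℝ, ∫⁻ t : ℝ, F (Fin.cons t y) := by
  have h := (volume_preserving_piFinSuccAbove (fun _ : Fin (n + 1) => ℝ) 0).symm
  rw [h.lintegral_map_equiv F, Measure.volume_eq_prod, lintegral_prod_symm]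
  · simp [MeasurableEquiv.piFinSuccAbove, Fin.insertNthEquiv]
  · exact (hF.comp (MeasurableEquiv.measurable _)).aemeasurable

lemma finCons_neg {n : ℕ} (t : ℝ) (w : Fin n → ℝ) :
    -(Fin.cons t w : Fin (n + 1) → ℝ) = Fin.cons (-t) (-w) := by
  ext i
  refine Fin.cases ?_ (fun i => ?_) i <;> simp

lemma sub_finCons {n : ℕ} (z : Fin (n + 1) → ℝ) (t : ℝ) (w : Fin n → ℝ) :
    z - (Fin.cons t w : Fin (n + 1) → ℝ) = Fin.cons (z 0 - t) (Fin.tail z - w) := by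
  ext i
  refine Fin.cases ?_ (fun i => ?_) i <;> simp [Fin.tail]

lemma lintegral_comp_neg_gaussianReal {φ : ℝ → ℝ≥0∞} (hφ : Measurable φ) :
    ∫⁻ t, φ (-t) ∂gaussianReal 0 1 = ∫⁻ t, φ t ∂gaussianReal 0 1 := by
  have h : (gaussianReal 0 1).map (fun t => -t) = gaussianReal 0 1 := by
    rw [gaussianReal_map_neg, neg_zero]
  conv_rhs => rw [← h, lintegral_map hφ measurable_neg]

/-- Extend a transport map `w` in the last `n` coordinates by the Gaussian transport, in the first
coordinate, of the sections of the density `k`. -/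
noncomputable def transportCons {n : ℕ} (k : (Fin (n + 1) → ℝ) → ℝ≥0∞)
    (w : (Fin n → ℝ) → (Fin n → ℝ)) (x : Fin (n + 1) → ℝ) : Fin (n + 1) → ℝ :=
  Fin.cons (gaussianTransport (fun t => k (Fin.cons t (Fin.tail x))) (x 0)) (w (Fin.tail x))

lemma measurable_transportCons {n : ℕ} {k : (Fin (n + 1) → ℝ) → ℝ≥0∞}
    {w : (Fin n → ℝ) → (Fin n → ℝ)} (hk : Measurable k) (hw : Measurable w) :
    Measurable (transportCons k w) := by
  have h := (measurable_gaussianTransport (f := fun p : ℝ × (Fin n → ℝ) => k (Fin.cons p.1 p.2))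
    (hk.comp measurable_finCons)).comp ((measurable_pi_apply 0).prodMk measurable_finTail)
  exact measurable_finCons.comp (h.prodMk (hw.comp measurable_finTail))

lemma transportCons_cons {n : ℕ} (k : (Fin (n + 1) → ℝ) → ℝ≥0∞)
    (w : (Fin n → ℝ) → (Fin n → ℝ)) (t : ℝ) (y : Fin n → ℝ) :
    transportCons k w (Fin.cons t y) =
      Fin.cons (gaussianTransport (fun t => k (Fin.cons t y)) t) (w y) := by
  simp [transportCons]

/-- For integrable densities `f`, `g` on `ℝⁿ` there are maps `u`, `v` (obtained from triangular
transport to the standard Gaussian measure), the first with symmetric distribution under `f`, for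
which a Gaussian-twisted convolution of powers of `f` and `g` is uniformly bounded. -/
lemma exists_symmetric_twisted_convolution_le {s c : ℝ} (hs : 0 < s) (hc : 0 < c)
    (hsc : s ^ 2 + c ^ 2 = 1) :
    ∀ (n : ℕ) (f g : (Fin n → ℝ) → ℝ≥0∞), Measurable f → Measurable g →
      ∫⁻ x, f x ≠ ∞ → ∫⁻ x, g x ≠ ∞ →
      ∃ u v : (Fin n → ℝ) → (Fin n → ℝ), Measurable u ∧ Measurable v ∧
        (∀ φ : (Fin n → ℝ) → ℝ≥0∞, Measurable φ →
          ∫⁻ x, f x * φ (u x) = ∫⁻ x, f x * φ (-u x)) ∧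
        ∀ z, ∫⁻ x, f x ^ (s ^ 2) * g (z - x) ^ (c ^ 2) *
            ENNReal.ofReal (Real.exp (s * c * ∑ i, u x i * v (z - x) i)) ≤
          ENNReal.ofReal (s ^ (s ^ 2) * c ^ (c ^ 2)) ^ n *
            ((∫⁻ x, f x) ^ (s ^ 2) * (∫⁻ x, g x) ^ (c ^ 2)) := by
  intro n
  induction n with
  | zero =>
    intro f g hf hg hf1 hg1
    refine ⟨id, id, measurable_id, measurable_id, fun φ hφ => ?_, fun z => ?_⟩
    · exact lintegral_congr fun x => by rw [Subsingleton.elim (-id x) (id x)]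
    · have hvol : (volume : Measure (Fin 0 → ℝ)) univ = 1 := by simp [volume_pi]
      have hz : ∀ x, g (z - x) = g x := fun x => congrArg g (Subsingleton.elim _ _)
      simp only [hz]
      simp [lintegral_unique, hvol]
  | succ n ih =>
    intro f g hf hg hf1 hg1
    have hfc : Measurable fun p : ℝ × (Fin n → ℝ) => f (Fin.cons p.1 p.2) :=
      hf.comp measurable_finCons
    have hgc : Measurable fun p : ℝ × (Fin n → ℝ) => g (Fin.cons p.1 p.2) :=
      hg.comp measurable_finCons
    set f' : (Fin n → ℝ) → ℝ≥0∞ := fun y => ∫⁻ t, f (Fin.cons t y)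
    set g' : (Fin n → ℝ) → ℝ≥0∞ := fun y => ∫⁻ t, g (Fin.cons t y)
    have hf'm : Measurable f' := hfc.lintegral_prod_left'
    have hg'm : Measurable g' := hgc.lintegral_prod_left'
    have hf's : ∫⁻ y, f' y = ∫⁻ x, f x := (lintegral_finCons hf).symm
    have hg's : ∫⁻ y, g' y = ∫⁻ x, g x := (lintegral_finCons hg).symm
    have hf'1 : ∫⁻ y, f' y ≠ ∞ := hf's ▸ hf1
    have hg'1 : ∫⁻ y, g' y ≠ ∞ := hg's ▸ hg1
    have hsec : ∀ {k : (Fin (n + 1) → ℝ) → ℝ≥0∞}, Measurable k → ∀ y : Fin n → ℝ,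
        Measurable fun t : ℝ => k (Fin.cons t y) := fun hk y =>
      hk.comp (measurable_finCons.comp measurable_prodMk_right)
    obtain ⟨u', v', hu', hv', hsym, hconv⟩ := ih f' g' hf'm hg'm hf'1 hg'1
    have hum := measurable_transportCons hf hu'
    have hvm := measurable_transportCons hg hv'
    refine ⟨transportCons f u', transportCons g v', hum, hvm, fun φ hφ => ?_, fun z => ?_⟩
    · set ψ : (Fin n → ℝ) → ℝ≥0∞ := fun w => ∫⁻ t, φ (Fin.cons t w) ∂gaussianReal 0 1
      have hψ : Measurable ψ := (hφ.comp measurable_finCons).lintegral_prod_left'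
      have h1 : ∫⁻ x, f x * φ (transportCons f u' x) = ∫⁻ y, f' y * ψ (u' y) := by
        rw [lintegral_finCons (F := fun x => f x * φ (transportCons f u' x)) (hf.mul (hφ.comp hum))]
        refine lintegral_congr_ae ?_
        filter_upwards [ae_lt_top hf'm hf'1] with y hy
        simp only [transportCons_cons]
        exact lintegral_mul_comp_gaussianTransport (hsec hf y) hy.ne (hsec hφ (u' y))
      have h2 : ∫⁻ x, f x * φ (-transportCons f u' x) = ∫⁻ y, f' y * ψ (-u' y) := by
        rw [lintegral_finCons (F := fun x => f x * φ (-transportCons f u' x))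
          (hf.mul (hφ.comp hum.neg))]
        refine lintegral_congr_ae ?_
        filter_upwards [ae_lt_top hf'm hf'1] with y hy
        simp only [transportCons_cons, finCons_neg]
        have h := lintegral_mul_comp_gaussianTransport (hsec hf y) hy.ne
          ((hsec hφ (-u' y)).comp measurable_neg)
        simp only [Function.comp_def] at h
        rw [h, lintegral_comp_neg_gaussianReal (hsec hφ (-u' y))]
      rw [h1, h2, hsym ψ hψ]
    · have hmeas : Measurable fun x : Fin (n + 1) → ℝ => f x ^ (s ^ 2) * g (z - x) ^ (c ^ 2) *
          ENNReal.ofReal (Real.exp (s * c *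
            ∑ i, transportCons f u' x i * transportCons g v' (z - x) i)) := by
        have hsub : Measurable fun x : Fin (n + 1) → ℝ => z - x := measurable_const.sub measurable_id
        refine ((hf.pow_const _).mul ((hg.comp hsub).pow_const _)).mul ?_
        refine (Real.measurable_exp.comp (Measurable.const_mul ?_ _)).ennreal_ofReal
        refine Finset.measurable_sum _ fun i _ => ?_
        exact ((measurable_pi_apply i).comp hum).mul
          ((measurable_pi_apply i).comp (hvm.comp hsub))
      set K := ENNReal.ofReal (s ^ (s ^ 2) * c ^ (c ^ 2))
      set w := Fin.tail z
      have hqmp := (Measure.measurePreserving_sub_left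
        (volume : Measure (Fin n → ℝ)) w).quasiMeasurePreserving
      rw [lintegral_finCons hmeas]
      calc _ ≤ ∫⁻ y, K * (f' y ^ (s ^ 2) * g' (w - y) ^ (c ^ 2) *
            ENNReal.ofReal (Real.exp (s * c * ∑ i, u' y i * v' (w - y) i))) := by
            refine lintegral_mono_ae ?_
            filter_upwards [ae_lt_top hf'm hf'1, hqmp.ae (ae_lt_top hg'm hg'1)] with y hy hy'
            have h := lintegral_rpow_mul_exp_gaussianTransport_le hs hc hsc (hsec hf y)
              (hsec hg (w - y)) hy.ne hy'.ne (z 0)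
            simp only [sub_finCons, transportCons_cons, Fin.sum_univ_succ, Fin.cons_zero,
              Fin.cons_succ, mul_add, Real.exp_add, ENNReal.ofReal_mul (Real.exp_pos _).le, ← mul_assoc]
            simp only [← mul_assoc] at h
            rw [lintegral_mul_const' _ _ ENNReal.ofReal_ne_top]
            exact mul_le_mul_left h _
        _ = K * ∫⁻ y, f' y ^ (s ^ 2) * g' (w - y) ^ (c ^ 2) *
            ENNReal.ofReal (Real.exp (s * c * ∑ i, u' y i * v' (w - y) i)) :=
            lintegral_const_mul' _ _ ENNReal.ofReal_ne_top
        _ ≤ K * (K ^ n * ((∫⁻ x, f' x) ^ (s ^ 2) * (∫⁻ x, g' x) ^ (c ^ 2))) := by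
            gcongr
            exact hconv w
        _ = _ := by rw [hf's, hg's, pow_succ']; ring

lemma two_le_min_exp_add_min_exp_neg (a : ℝ) :
    (2 : ℝ≥0∞) ≤ min (ENNReal.ofReal (Real.exp a)) 2 + min (ENNReal.ofReal (Real.exp (-a))) 2 := by
  rcases le_total (ENNReal.ofReal (Real.exp a)) 2 with h1 | h1
  · rcases le_total (ENNReal.ofReal (Real.exp (-a))) 2 with h2 | h2
    · rw [min_eq_left h1, min_eq_left h2, ← ENNReal.ofReal_add (Real.exp_pos _).le
        (Real.exp_pos _).le, ← ENNReal.ofReal_ofNat]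
      refine ENNReal.ofReal_le_ofReal ?_
      have h := Real.one_le_cosh a
      rw [Real.cosh_eq] at h
      linarith
    · rw [min_eq_right h2]
      exact le_add_self
  · rw [min_eq_right h1]
    exact le_self_add

lemma lintegral_le_lintegral_mul_min_exp {n : ℕ} {f : (Fin n → ℝ) → ℝ≥0∞} (hf : Measurable f)
    {u : (Fin n → ℝ) → (Fin n → ℝ)} (hu : Measurable u)
    (hsym : ∀ φ : (Fin n → ℝ) → ℝ≥0∞, Measurable φ →
      ∫⁻ x, f x * φ (u x) = ∫⁻ x, f x * φ (-u x)) (k : ℝ) (w : Fin n → ℝ) :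
    ∫⁻ x, f x ≤ ∫⁻ x, f x * min (ENNReal.ofReal (Real.exp (k * ∑ i, u x i * w i))) 2 := by
  set φ : (Fin n → ℝ) → ℝ≥0∞ :=
    fun y => min (ENNReal.ofReal (Real.exp (k * ∑ i, y i * w i))) 2 with hφ
  have hφm : Measurable φ := by fun_prop
  have h2 : 2 * ∫⁻ x, f x ≤ 2 * ∫⁻ x, f x * φ (u x) := by
    calc 2 * ∫⁻ x, f x = ∫⁻ x, f x * 2 := by
          rw [lintegral_mul_const _ hf, mul_comm]
      _ ≤ ∫⁻ x, (f x * φ (u x) + f x * φ (-u x)) := by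
          refine lintegral_mono fun x => ?_
          rw [← mul_add]
          gcongr
          have h := two_le_min_exp_add_min_exp_neg (k * ∑ i, u x i * w i)
          simpa [hφ, Finset.sum_neg_distrib] using h
      _ = 2 * ∫⁻ x, f x * φ (u x) := by
          rw [lintegral_add_left (f := fun x => f x * φ (u x)) (hf.mul (hφm.comp hu)),
            ← hsym φ hφm, two_mul]
  exact (ENNReal.mul_le_mul_iff_right (by norm_num) (by norm_num)).1 h2

lemma volume_mul_le_of_forall_add_mem {s c : ℝ} (hs : 0 < s) (hc : 0 < c)
    (hsc : s ^ 2 + c ^ 2 = 1) {n : ℕ} {A B S : Set (Fin n → ℝ)} (hA : MeasurableSet A)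
    (hB : MeasurableSet B) (hS : MeasurableSet S) (hA1 : volume A ≠ ∞) (hB1 : volume B ≠ ∞)
    {Θ : Set ((Fin n → ℝ) × (Fin n → ℝ))} (hΘ : MeasurableSet Θ) (hΘAB : Θ ⊆ A ×ˢ B)
    (hΘS : ∀ p ∈ Θ, p.1 + p.2 ∈ S) {δ : ℝ} (hδ : 0 ≤ δ) (hδ' : δ ≤ 1)
    (hvol : ENNReal.ofReal (1 - δ) * (volume A * volume B) ≤ volume Θ) :
    ENNReal.ofReal (1 - 2 * δ) * (volume A * volume B) ≤
      volume S * (ENNReal.ofReal (s ^ (s ^ 2) * c ^ (c ^ 2)) ^ n *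
        (volume A ^ (s ^ 2) * volume B ^ (c ^ 2))) := by
  have hs2 : 0 < s ^ 2 := by positivity
  have hc2 : 0 < c ^ 2 := by positivity
  set f : (Fin n → ℝ) → ℝ≥0∞ := A.indicator 1 with hf
  set g : (Fin n → ℝ) → ℝ≥0∞ := B.indicator 1 with hg
  have hfm : Measurable f := measurable_one.indicator hA
  have hgm : Measurable g := measurable_one.indicator hB
  have hfi : ∫⁻ x, f x = volume A := lintegral_indicator_one hA
  have hgi : ∫⁻ x, g x = volume B := lintegral_indicator_one hB
  obtain ⟨u, v, hu, hv, hsym, hconv⟩ := exists_symmetric_twisted_convolution_le hs hc hsc n f g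
    hfm hgm (hfi ▸ hA1) (hgi ▸ hB1)
  rw [hfi, hgi] at hconv
  have hfpow : ∀ x, f x ^ (s ^ 2) = f x := fun x => by
    by_cases hx : x ∈ A <;> simp [hf, hx, hs2]
  have hgpow : ∀ x, g x ^ (c ^ 2) = g x := fun x => by
    by_cases hx : x ∈ B <;> simp [hg, hx, hc2]
  simp only [hfpow, hgpow] at hconv
  set e : (Fin n → ℝ) × (Fin n → ℝ) → ℝ≥0∞ :=
    fun p => ENNReal.ofReal (Real.exp (s * c * ∑ i, u p.1 i * v p.2 i)) with he
  have hem : Measurable e := by fun_prop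
  set m : (Fin n → ℝ) × (Fin n → ℝ) → ℝ≥0∞ := fun p => min (e p) 2 with hm
  have hmm : Measurable m := hem.min measurable_const
  have hupper : ∫⁻ p in Θ, e p ≤ volume S * (ENNReal.ofReal (s ^ (s ^ 2) * c ^ (c ^ 2)) ^ n *
        (volume A ^ (s ^ 2) * volume B ^ (c ^ 2))) := by
    set σ : (Fin n → ℝ) → ℝ≥0∞ := S.indicator 1 with hσ
    have hσm : Measurable σ := measurable_one.indicator hS
    calc ∫⁻ p in Θ, e p = ∫⁻ p, Θ.indicator e p := (lintegral_indicator hΘ e).symm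
      _ ≤ ∫⁻ p : (Fin n → ℝ) × (Fin n → ℝ), σ (p.1 + p.2) * (f p.1 * g p.2 * e p) := by
          refine lintegral_mono fun p => ?_
          by_cases hp : p ∈ Θ
          · have hpAB := hΘAB hp
            simp [hσ, hf, hg, hp, hΘS p hp, hpAB.1, hpAB.2]
          · simp [hp]
      _ = ∫⁻ x, ∫⁻ y, σ (x + y) * (f x * g y * e (x, y)) := by
          rw [Measure.volume_eq_prod, lintegral_prod]
          fun_prop
      _ = ∫⁻ x, ∫⁻ z, σ z * (f x * g (z - x) * e (x, z - x)) := by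
          refine lintegral_congr fun x => ?_
          have h := lintegral_add_left_eq_self (μ := volume)
            (fun z => σ z * (f x * g (z - x) * e (x, z - x))) x
          simpa only [add_sub_cancel_left] using h
      _ = ∫⁻ z, ∫⁻ x, σ z * (f x * g (z - x) * e (x, z - x)) := by
          refine lintegral_lintegral_swap ?_
          fun_prop
      _ = ∫⁻ z, σ z * ∫⁻ x, f x * g (z - x) * e (x, z - x) := by
          refine lintegral_congr fun z => lintegral_const_mul _ ?_
          fun_prop
      _ ≤ ∫⁻ z, σ z * (ENNReal.ofReal (s ^ (s ^ 2) * c ^ (c ^ 2)) ^ n *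
            (volume A ^ (s ^ 2) * volume B ^ (c ^ 2))) := by
          gcongr with z
          exact hconv z
      _ = _ := by rw [lintegral_mul_const _ hσm, lintegral_indicator_one hS]
  have hvolAB : volume (A ×ˢ B) = volume A * volume B := by
    rw [Measure.volume_eq_prod, Measure.prod_prod]
  have hABm : MeasurableSet (A ×ˢ B) := hA.prod hB
  have hABtop : volume A * volume B ≠ ∞ := ENNReal.mul_ne_top hA1 hB1
  have hlower : volume A * volume B ≤ ∫⁻ p in A ×ˢ B, m p := by
    calc volume A * volume B = ∫⁻ y in B, volume A := by
          rw [setLIntegral_const]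
      _ ≤ ∫⁻ y in B, ∫⁻ x in A, m (x, y) := by
          refine lintegral_mono fun y => ?_
          have h := lintegral_le_lintegral_mul_min_exp hfm hu hsym (s * c) (v y)
          rw [hfi] at h
          rw [← lintegral_indicator hA]
          refine h.trans (le_of_eq (lintegral_congr fun x => ?_))
          by_cases hx : x ∈ A <;> simp [hf, hx, hm, he]
      _ = ∫⁻ p in A ×ˢ B, m p := by
          rw [Measure.volume_eq_prod, ← Measure.prod_restrict,
            lintegral_prod_symm _ hmm.aemeasurable]
  have hdiff : volume (A ×ˢ B \ Θ) ≤ ENNReal.ofReal δ * (volume A * volume B) := by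
    rw [measure_sdiff hΘAB hΘ.nullMeasurableSet
      (ne_top_of_le_ne_top (hvolAB ▸ hABtop) (measure_mono hΘAB)), hvolAB]
    refine tsub_le_iff_right.2 ?_
    calc volume A * volume B
        = ENNReal.ofReal δ * (volume A * volume B) +
          ENNReal.ofReal (1 - δ) * (volume A * volume B) := by
          rw [← add_mul, ← ENNReal.ofReal_add hδ (by linarith)]
          simp
      _ ≤ _ := by gcongr
  have hsplit : ∫⁻ p in A ×ˢ B, m p ≤
      (∫⁻ p in Θ, e p) + ENNReal.ofReal (2 * δ) * (volume A * volume B) := by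
    calc ∫⁻ p in A ×ˢ B, m p = (∫⁻ p in Θ, m p) + ∫⁻ p in A ×ˢ B \ Θ, m p := by
          rw [← lintegral_inter_add_sdiff m (A ×ˢ B) hΘ, inter_eq_self_of_subset_right hΘAB]
      _ ≤ (∫⁻ p in Θ, e p) + ∫⁻ p in A ×ˢ B \ Θ, 2 :=
          add_le_add (lintegral_mono fun p => min_le_left _ _)
            (lintegral_mono fun p => min_le_right _ _)
      _ ≤ (∫⁻ p in Θ, e p) + ENNReal.ofReal (2 * δ) * (volume A * volume B) := by
          rw [setLIntegral_const, ENNReal.ofReal_mul (by norm_num), ENNReal.ofReal_ofNat, mul_assoc]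
          gcongr
  rw [ENNReal.ofReal_sub _ (by positivity), ENNReal.ofReal_one,
    ENNReal.sub_mul fun _ _ => hABtop, one_mul]
  exact tsub_le_iff_right.2 ((hlower.trans hsplit).trans (add_le_add_left hupper _))

lemma exp_neg_two_mul_le_one_sub {x : ℝ} (hx : 0 ≤ x) (hx' : x ≤ 1 / 2) :
    Real.exp (-(2 * x)) ≤ 1 - x := by
  have h := Real.add_one_le_exp (2 * x)
  rw [Real.exp_neg, inv_le_iff_one_le_mul₀ (Real.exp_pos _)]
  nlinarith

lemma one_sub_le_one_sub_two_mul_rpow {δ : ℝ} (hδ : 0 ≤ δ) (hδ' : δ ≤ 1 / 4) (n : ℕ) :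
    1 - 8 * δ / n ≤ (1 - 2 * δ) ^ ((2 : ℝ) / n) := by
  have h1 := exp_neg_two_mul_le_one_sub (x := 2 * δ) (by linarith) (by linarith)
  have h2 := Real.add_one_le_exp (-(2 * (2 * δ)) * (2 / n))
  have h3 := Real.rpow_le_rpow (Real.exp_pos _).le h1 (show (0 : ℝ) ≤ 2 / n by positivity)
  rw [← Real.exp_mul] at h3
  refine le_trans (le_of_eq ?_) (h2.trans h3)
  ring

/-- With `s² = b / (a + b)` and `c² = a / (a + b)`, the constant in the twisted convolution bound
is exactly the one in the entropy power inequality. -/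
lemma rpow_mul_rpow_pow_mul_eq {a b s c : ℝ} (ha : 0 < a) (hb : 0 < b) (hs : 0 < s) (hc : 0 < c)
    (hs2 : s ^ 2 = b / (a + b)) (hc2 : c ^ 2 = a / (a + b)) (n : ℕ) :
    (s ^ (s ^ 2) * c ^ (c ^ 2)) ^ n *
        ((a ^ ((n : ℝ) / 2)) ^ (s ^ 2) * (b ^ ((n : ℝ) / 2)) ^ (c ^ 2)) * (a + b) ^ ((n : ℝ) / 2) =
      a ^ ((n : ℝ) / 2) * b ^ ((n : ℝ) / 2) := by
  have hab : 0 < a + b := by positivity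
  have hls : Real.log s = (Real.log b - Real.log (a + b)) / 2 := by
    have h := congrArg Real.log hs2
    rw [Real.log_pow, Real.log_div hb.ne' hab.ne'] at h
    push_cast at h
    linarith
  have hlc : Real.log c = (Real.log a - Real.log (a + b)) / 2 := by
    have h := congrArg Real.log hc2
    rw [Real.log_pow, Real.log_div ha.ne' hab.ne'] at h
    push_cast at h
    linarith
  have hsum : s ^ 2 + c ^ 2 = 1 := by
    rw [hs2, hc2]
    field_simp
    ring
  rw [← Real.rpow_natCast (s ^ (s ^ 2) * c ^ (c ^ 2))]
  simp only [Real.rpow_def_of_pos ha, Real.rpow_def_of_pos hb, Real.rpow_def_of_pos hs,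
    Real.rpow_def_of_pos hc,
    Real.rpow_def_of_pos hab, ← Real.exp_add, ← Real.exp_mul]
  rw [hls, hlc]
  congr 1
  linear_combination (n / 2 * (Real.log a + Real.log b - Real.log (a + b))) * hsum

lemma one_sub_mul_add_rpow_le_of_forall_add_mem {n : ℕ} (hn : 0 < n) {A B S : Set (Fin n → ℝ)}
    (hA : MeasurableSet A) (hB : MeasurableSet B) (hS : MeasurableSet S)
    (hA0 : volume A ≠ 0) (hB0 : volume B ≠ 0) (hA1 : volume A ≠ ∞) (hB1 : volume B ≠ ∞)
    {Θ : Set ((Fin n → ℝ) × (Fin n → ℝ))} (hΘ : MeasurableSet Θ) (hΘAB : Θ ⊆ A ×ˢ B)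
    (hΘS : ∀ p ∈ Θ, p.1 + p.2 ∈ S) {δ : ℝ} (hδ : 0 ≤ δ) (hδ' : δ ≤ 1 / 4)
    (hvol : ENNReal.ofReal (1 - δ) * (volume A * volume B) ≤ volume Θ) :
    ENNReal.ofReal (1 - 8 * δ / n) * (volume A ^ ((2 : ℝ) / n) + volume B ^ ((2 : ℝ) / n)) ≤
      volume S ^ ((2 : ℝ) / n) := by
  have hn' : (0 : ℝ) < n := by exact_mod_cast hn
  have hexp : (0 : ℝ) < 2 / n := by positivity
  rcases eq_or_ne (volume S) ∞ with hS1 | hS1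
  · rw [hS1, ENNReal.top_rpow_of_pos hexp]
    exact le_top
  set α := (volume A).toReal
  set β := (volume B).toReal
  set V := (volume S).toReal
  have hα0 : 0 < α := ENNReal.toReal_pos hA0 hA1
  have hβ0 : 0 < β := ENNReal.toReal_pos hB0 hB1
  have hV0 : 0 ≤ V := ENNReal.toReal_nonneg
  have hAα : volume A = ENNReal.ofReal α := (ENNReal.ofReal_toReal hA1).symm
  have hBβ : volume B = ENNReal.ofReal β := (ENNReal.ofReal_toReal hB1).symm
  have hSV : volume S = ENNReal.ofReal V := (ENNReal.ofReal_toReal hS1).symm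
  set a := α ^ ((2 : ℝ) / n) with ha
  set b := β ^ ((2 : ℝ) / n) with hb
  have ha0 : 0 < a := by positivity
  have hb0 : 0 < b := by positivity
  have hinv : (2 : ℝ) / n * (n / 2) = 1 := by field_simp
  have hαa : a ^ ((n : ℝ) / 2) = α := by
    rw [ha, ← Real.rpow_mul hα0.le, hinv, Real.rpow_one]
  have hβb : b ^ ((n : ℝ) / 2) = β := by
    rw [hb, ← Real.rpow_mul hβ0.le, hinv, Real.rpow_one]
  set s := √(b / (a + b))
  set c := √(a / (a + b))
  have hs : 0 < s := Real.sqrt_pos.2 (by positivity)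
  have hc : 0 < c := Real.sqrt_pos.2 (by positivity)
  have hs2 : s ^ 2 = b / (a + b) := Real.sq_sqrt (by positivity)
  have hc2 : c ^ 2 = a / (a + b) := Real.sq_sqrt (by positivity)
  have hsc : s ^ 2 + c ^ 2 = 1 := by
    rw [hs2, hc2]
    field_simp
    ring
  have hkey := volume_mul_le_of_forall_add_mem hs hc hsc hA hB hS hA1 hB1 hΘ hΘAB hΘS hδ
    (by linarith) hvol
  have hM := rpow_mul_rpow_pow_mul_eq ha0 hb0 hs hc hs2 hc2 n
  rw [hαa, hβb] at hM
  set M := (s ^ (s ^ 2) * c ^ (c ^ 2)) ^ n * (α ^ (s ^ 2) * β ^ (c ^ 2))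
  have hM0 : 0 < M := by positivity
  have hδ0 : 0 ≤ 1 - 2 * δ := by linarith
  have hreal : (1 - 2 * δ) * (α * β) ≤ V * M := by
    rw [hAα, hBβ, hSV, ENNReal.ofReal_rpow_of_pos hα0, ENNReal.ofReal_rpow_of_pos hβ0,
      ← ENNReal.ofReal_pow (by positivity), ← ENNReal.ofReal_mul hα0.le,
      ← ENNReal.ofReal_mul hδ0, ← ENNReal.ofReal_mul (p := α ^ (s ^ 2)) (by positivity),
      ← ENNReal.ofReal_mul (p := (s ^ (s ^ 2) * c ^ (c ^ 2)) ^ n) (by positivity),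
      ← ENNReal.ofReal_mul hV0,
      ENNReal.ofReal_le_ofReal_iff (by positivity)] at hkey
    exact hkey
  have hVle : (1 - 2 * δ) * (a + b) ^ ((n : ℝ) / 2) ≤ V := by
    refine le_of_mul_le_mul_right ?_ hM0
    rw [← hM] at hreal
    linarith
  have hfinal : (1 - 8 * δ / n) * (a + b) ≤ V ^ ((2 : ℝ) / n) := by
    calc (1 - 8 * δ / n) * (a + b) ≤ (1 - 2 * δ) ^ ((2 : ℝ) / n) * (a + b) := by
          gcongr
          exact one_sub_le_one_sub_two_mul_rpow hδ hδ' n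
      _ = ((1 - 2 * δ) * (a + b) ^ ((n : ℝ) / 2)) ^ ((2 : ℝ) / n) := by
          rw [Real.mul_rpow hδ0 (by positivity), ← Real.rpow_mul (by positivity), mul_comm _ (2 / _),
            hinv, Real.rpow_one]
      _ ≤ V ^ ((2 : ℝ) / n) := Real.rpow_le_rpow (by positivity) hVle hexp.le
  rw [hAα, hBβ, hSV, ENNReal.ofReal_rpow_of_pos hα0, ENNReal.ofReal_rpow_of_pos hβ0,
    ENNReal.ofReal_rpow_of_nonneg hV0 hexp.le, ← ENNReal.ofReal_add ha0.le hb0.le,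
    ← ENNReal.ofReal_mul' (by positivity)]
  exact ENNReal.ofReal_le_ofReal hfinal

/-- Corollary 1.5: if `λ(Θ) ≥ (1 - δ)λ(A)λ(B)` with `δ ∈ [0, c]`, then
`λ(A +_Θ B)^{2/n} ≥ (1 - Cδ/n)(λ(A)^{2/n} + λ(B)^{2/n})`. -/
theorem restricted_minkowski_sum_inequality_large_theta :
    ∃ c C : ℝ, 0 < c ∧ 0 < C ∧
      ∀ (δ : ℝ), δ ∈ Set.Icc (0 : ℝ) c →
      ∀ (n : ℕ), 0 < n →
      ∀ (A B : Set (EuclideanSpace ℝ (Fin n))),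
        MeasurableSet A → MeasurableSet B →
        0 < volume A → volume A < ⊤ → 0 < volume B → volume B < ⊤ →
      ∀ (Θ : Set (EuclideanSpace ℝ (Fin n) × EuclideanSpace ℝ (Fin n))),
        MeasurableSet Θ → Θ ⊆ A ×ˢ B →
        ENNReal.ofReal (1 - δ) * (volume A * volume B) ≤ volume Θ →
        ENNReal.ofReal (1 - C * δ / n) *
            (volume A ^ ((2 : ℝ) / n) + volume B ^ ((2 : ℝ) / n))
          ≤ volume (restrictedSum Θ) ^ ((2 : ℝ) / n) := by
  refine ⟨1 / 4, 8, by norm_num, by norm_num, fun δ hδ n hn A B hA hB hA0 hA1 hB0 hB1 Θ hΘ hΘAB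
    hvol => ?_⟩
  have hmp := PiLp.volume_preserving_toLp (Fin n)
  have hmp2 := hmp.prod hmp
  have hS := measurableSet_toMeasurable volume (restrictedSum Θ)
  have hA' := hmp.measure_preimage hA.nullMeasurableSet
  have hB' := hmp.measure_preimage hB.nullMeasurableSet
  have hS' := hmp.measure_preimage hS.nullMeasurableSet
  have hΘ' := hmp2.measure_preimage hΘ.nullMeasurableSet
  rw [measure_toMeasurable] at hS'
  rw [← hS', ← hA', ← hB']
  refine one_sub_mul_add_rpow_le_of_forall_add_mem hn (hmp.measurable hA) (hmp.measurable hB)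
    (hmp.measurable hS) (hA'.trans_ne hA0.ne') (hB'.trans_ne hB0.ne') (hA'.trans_ne hA1.ne)
    (hB'.trans_ne hB1.ne) (hmp2.measurable hΘ) (fun p hp => hΘAB hp) (fun p hp => ?_) hδ.1 hδ.2 ?_
  · exact subset_toMeasurable _ _ ⟨_, hp, rfl⟩
  · rw [hA', hB']
    exact hvol.trans (le_of_eq hΘ'.symm)
end

section
/- Let n be a positive integer, let A₀, B₀, C ⊂ ℝⁿ be measurable sets of finite Lebesgue measure, and let ρ₁, ρ₂, R > 0 be defined by λ(A₀) = λ(ρ₁Bⁿ), λ(B₀) = λ(ρ₂Bⁿ), λ(C) = λ(RBⁿ). Then λ({ (x, y) ∈ A₀ × B₀ : x + y ∈ C }) ≤ λ({ (x, y) ∈ ρ₁Bⁿ × ρ₂Bⁿ : x + y ∈ RBⁿ }); equivalently, ∫∫ χ_{A₀}(x) χ_{B₀}(y) χ_C(x + y) dx dy ≤ ∫∫ χ_{ρ₁Bⁿ}(x) χ_{ρ₂Bⁿ}(y) χ_{RBⁿ}(x + y) dx dy. -/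
open MeasureTheory
open scoped ENNReal

/-- The pairs `(x, y) ∈ A × B` with `x + y ∈ C`. -/
def addTriples {G : Type*} [Add G] (A B C : Set G) : Set (G × G) :=
  {p | p.1 ∈ A ∧ p.2 ∈ B ∧ p.1 + p.2 ∈ C}

theorem addTriples_mono {G : Type*} [Add G] {A A' B B' C C' : Set G}
    (hA : A ⊆ A') (hB : B ⊆ B') (hC : C ⊆ C') :
    addTriples A B C ⊆ addTriples A' B' C' :=
  fun _ hp => ⟨hA hp.1, hB hp.2.1, hC hp.2.2⟩

section AddTriples

variable {G : Type*} [AddGroup G] [MeasurableSpace G] [MeasurableAdd₂ G]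

theorem measurableSet_addTriples {A B C : Set G} (hA : MeasurableSet A) (hB : MeasurableSet B)
    (hC : MeasurableSet C) : MeasurableSet (addTriples A B C) :=
  (measurable_fst hA).inter ((measurable_snd hB).inter (measurable_add hC))

/-- The shear `(x, y) ↦ (x, x + y)` preserves the product measure. -/
theorem measure_setOf_fst_mem_add_mem (μ : Measure G) [SFinite μ] [μ.IsAddLeftInvariant]
    {A C : Set G} (hA : MeasurableSet A) (hC : MeasurableSet C) :
    (μ.prod μ) {p : G × G | p.1 ∈ A ∧ p.1 + p.2 ∈ C} = μ A * μ C := by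
  rw [← Measure.prod_prod]
  exact (measurePreserving_prod_add μ μ).measure_preimage (hA.prod hC).nullMeasurableSet

end AddTriples

theorem measure_setOf_snd_mem_add_mem {G : Type*} [AddCommGroup G] [MeasurableSpace G]
    [MeasurableAdd₂ G] (μ : Measure G) [SFinite μ] [μ.IsAddLeftInvariant]
    {B C : Set G} (hB : MeasurableSet B) (hC : MeasurableSet C) :
    (μ.prod μ) {p : G × G | p.2 ∈ B ∧ p.1 + p.2 ∈ C} = μ B * μ C := by
  rw [← measure_setOf_fst_mem_add_mem μ hB hC, ← (Measure.measurePreserving_swap (μ := μ)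
    (ν := μ)).measure_preimage (s := {p : G × G | p.2 ∈ B ∧ p.1 + p.2 ∈ C})
    ((measurable_snd hB).inter (measurable_add hC)).nullMeasurableSet]
  congr 1
  ext p
  simp [add_comm]

/-- A bounded set of reals has initial segments of every smaller measure. -/
theorem exists_volume_inter_Iic_eq {A : Set ℝ} {D t : ℝ} (hA : A ⊆ Set.Icc (-D) D)
    (ht0 : 0 ≤ t) (ht : ENNReal.ofReal t ≤ volume A) :
    ∃ a, volume (A ∩ Set.Iic a) = ENNReal.ofReal t := by
  have hfin : ∀ s : Set ℝ, volume (A ∩ s) ≠ ⊤ := fun s =>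
    ((measure_mono (Set.inter_subset_left.trans hA)).trans_lt measure_Icc_lt_top).ne
  have hAfin : volume A ≠ ⊤ := by simpa using hfin Set.univ
  have hlip : LipschitzWith 1 fun x => (volume (A ∩ Set.Iic x)).toReal := by
    refine LipschitzWith.of_le_add fun x y => ?_
    have h : volume (A ∩ Set.Iic x) ≤ volume (A ∩ Set.Iic y) + ENNReal.ofReal (dist x y) := by
      calc volume (A ∩ Set.Iic x) ≤ volume ((A ∩ Set.Iic y) ∪ Set.Icc y x) := by
            refine measure_mono fun s hs => ?_
            rcases le_total s y with h | h
            · exact Or.inl ⟨hs.1, h⟩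
            · exact Or.inr ⟨h, hs.2⟩
        _ ≤ _ := (measure_union_le _ _).trans (by
            rw [Real.volume_Icc]
            gcongr
            exact le_abs_self _)
    have := ENNReal.toReal_mono (by finiteness [hfin (Set.Iic y)]) h
    rwa [ENNReal.toReal_add (hfin _) ENNReal.ofReal_ne_top, ENNReal.toReal_ofReal dist_nonneg]
      at this
  have hlow : (volume (A ∩ Set.Iic (-D - 1))).toReal = 0 := by
    have : A ∩ Set.Iic (-D - 1) = ∅ := by
      ext s
      simp only [Set.mem_inter_iff, Set.mem_Iic, Set.mem_empty_iff_false, iff_false, not_and, not_le]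
      intro hs
      linarith [(hA hs).1]
    simp [this]
  have hhigh : (volume (A ∩ Set.Iic D)).toReal = (volume A).toReal := by
    rw [Set.inter_eq_left.2 fun s hs => Set.mem_Iic.2 (hA hs).2]
  have ht' : t ≤ (volume A).toReal := (ENNReal.ofReal_le_iff_le_toReal hAfin).1 ht
  have hmem := mem_range_of_exists_le_of_exists_ge hlip.continuous
    ⟨-D - 1, hlow.le.trans ht0⟩ ⟨D, ht'.trans hhigh.ge⟩
  obtain ⟨a, ha⟩ := hmem
  exact ⟨a, by rw [← ha, ENNReal.ofReal_toReal (hfin _)]⟩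

/-- The analogue on the line of Pollard's inequality. -/
theorem volume_addTriples_le {A B C : Set ℝ} (hA : MeasurableSet A) (hB : MeasurableSet B)
    (hC : MeasurableSet C) {D a b t : ℝ} (hAD : A ⊆ Set.Icc (-D) D) (hBD : B ⊆ Set.Icc (-D) D)
    (ha : volume A = ENNReal.ofReal a) (hb : volume B = ENNReal.ofReal b)
    (ht0 : 0 ≤ t) (hta : t ≤ a) (htb : t ≤ b) :
    volume (addTriples A B C) ≤
      ENNReal.ofReal t * volume C + ENNReal.ofReal (a - t) * ENNReal.ofReal (b - t) := by
  obtain ⟨α, hα⟩ := exists_volume_inter_Iic_eq hAD (sub_nonneg.2 hta)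
    (by rw [ha]; gcongr; linarith)
  obtain ⟨β, hβ⟩ := exists_volume_inter_Iic_eq hBD ht0 (by rw [hb]; gcongr)
  have hα' : volume (A ∩ Set.Ioi α) = ENNReal.ofReal t := by
    have h := measure_inter_add_sdiff (μ := volume) A (measurableSet_Iic (a := α))
    rw [hα, ha, Set.sdiff_eq, Set.compl_Iic] at h
    have h2 : ENNReal.ofReal a = ENNReal.ofReal (a - t) + ENNReal.ofReal t := by
      rw [← ENNReal.ofReal_add (by linarith) ht0]; ring_nf
    rw [h2] at h
    exact (ENNReal.add_right_inj ENNReal.ofReal_ne_top).1 h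
  have hβ' : volume (B ∩ Set.Ioi β) = ENNReal.ofReal (b - t) := by
    have h := measure_inter_add_sdiff (μ := volume) B (measurableSet_Iic (a := β))
    rw [hβ, hb, Set.sdiff_eq, Set.compl_Iic] at h
    have h2 : ENNReal.ofReal b = ENNReal.ofReal t + ENNReal.ofReal (b - t) := by
      rw [← ENNReal.ofReal_add ht0 (by linarith)]; ring_nf
    rw [h2] at h
    exact (ENNReal.add_right_inj ENNReal.ofReal_ne_top).1 h
  -- After the shear, the part of `A × B` outside the product of the lower part of `A` and the
  -- upper part of `B` has all fibres of measure at most `t`.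
  set S : Set (ℝ × ℝ) := {q | (q.1 ∈ A ∩ Set.Ioi α ∧ q.2 - q.1 ∈ B ∨
    q.1 ∈ A ∩ Set.Iic α ∧ q.2 - q.1 ∈ B ∩ Set.Iic β) ∧ q.2 ∈ C} with hS
  have hm : Measurable fun q : ℝ × ℝ => q.2 - q.1 := measurable_snd.sub measurable_fst
  have hSm : MeasurableSet S :=
    (((measurable_fst (hA.inter measurableSet_Ioi)).inter (hm hB)).union
      ((measurable_fst (hA.inter measurableSet_Iic)).inter
        (hm (hB.inter measurableSet_Iic)))).inter (measurable_snd hC)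
  have hSvol : volume S ≤ ENNReal.ofReal t * volume C := by
    rw [Measure.volume_eq_prod, Measure.prod_apply_symm hSm, ← setLIntegral_const,
      ← lintegral_indicator hC]
    refine lintegral_mono fun z => ?_
    by_cases hz : z ∈ C
    · rw [Set.indicator_of_mem hz]
      rcases le_or_gt z (α + β) with h | h
      · have : volume ((fun x => z - x) ⁻¹' (B ∩ Set.Iic β)) = ENNReal.ofReal t := by
          rw [← hβ]
          exact (Measure.measurePreserving_sub_left volume z).measure_preimage
            (hB.inter measurableSet_Iic).nullMeasurableSet
        rw [← this]
        refine measure_mono fun x hx => ?_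
        rcases hx.1 with h1 | h1
        · refine ⟨h1.2, ?_⟩
          have : α < x := h1.1.2
          simp only [Set.mem_Iic]
          linarith
        · exact h1.2
      · rw [← hα']
        refine measure_mono fun x hx => ?_
        rcases hx.1 with h1 | h1
        · exact h1.1
        · have h2 : x ≤ α := h1.1.2
          have h3 : z - x ≤ β := h1.2.2
          linarith
    · have : (fun x => (x, z)) ⁻¹' S = ∅ := by
        ext x
        simp [hS, hz]
      simp [this]
  calc volume (addTriples A B C)
      ≤ volume ((fun p : ℝ × ℝ => (p.1, p.1 + p.2)) ⁻¹' S ∪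
          (A ∩ Set.Iic α) ×ˢ (B ∩ Set.Ioi β)) := by
        refine measure_mono fun p ⟨hpA, hpB, hpC⟩ => ?_
        rcases le_or_gt p.1 α with h1 | h1
        · rcases le_or_gt p.2 β with h2 | h2
          · exact Or.inl ⟨Or.inr ⟨⟨hpA, h1⟩, by simpa using ⟨hpB, h2⟩⟩, hpC⟩
          · exact Or.inr ⟨⟨hpA, h1⟩, ⟨hpB, h2⟩⟩
        · exact Or.inl ⟨Or.inl ⟨⟨hpA, h1⟩, by simpa using hpB⟩, hpC⟩
    _ ≤ _ := by
        refine (measure_union_le _ _).trans (add_le_add ?_ ?_)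
        · refine le_trans (le_of_eq ?_) hSvol
          exact (measurePreserving_prod_add volume volume).measure_preimage hSm.nullMeasurableSet
        · rw [Measure.volume_eq_prod, Measure.prod_prod, hα, hβ']

theorem volume_corner_le {p q t : ℝ} (ht : 0 ≤ t) :
    volume {z : ℝ × ℝ | z.1 < p ∧ z.2 < q ∧ p + q - t ≤ z.1 + z.2} ≤
      ENNReal.ofReal (t ^ 2 / 2) := by
  have hm : MeasurableSet {z : ℝ × ℝ | z.1 < p ∧ z.2 < q ∧ p + q - t ≤ z.1 + z.2} :=
    (measurableSet_lt measurable_fst measurable_const).inter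
      ((measurableSet_lt measurable_snd measurable_const).inter
        (measurableSet_le measurable_const measurable_add))
  have hint : IntegrableOn (fun x : ℝ => x - (p - t)) (Set.Ioc (p - t) p) := by
    exact ((continuous_id.sub continuous_const).integrableOn_Icc).mono_set Set.Ioc_subset_Icc_self
  calc volume {z : ℝ × ℝ | z.1 < p ∧ z.2 < q ∧ p + q - t ≤ z.1 + z.2}
      ≤ ∫⁻ x in Set.Ioc (p - t) p, ENNReal.ofReal (x - (p - t)) := by
        rw [Measure.volume_eq_prod, Measure.prod_apply hm, ← lintegral_indicator measurableSet_Ioc]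
        refine lintegral_mono fun x => ?_
        by_cases hx : x ∈ Set.Ioc (p - t) p
        · rw [Set.indicator_of_mem hx]
          have hle : x - (p - t) = q - (p + q - t - x) := by ring
          rw [hle, ← Real.volume_Ico]
          refine measure_mono fun y hy => ⟨?_, hy.2.1⟩
          have : p + q - t ≤ x + y := hy.2.2
          linarith
        · rw [Set.indicator_of_notMem hx]
          have : Prod.mk x ⁻¹' {z : ℝ × ℝ | z.1 < p ∧ z.2 < q ∧ p + q - t ≤ z.1 + z.2} = ∅ := by
            ext y
            simp only [Set.preimage_ofPred_eq, Set.mem_ofPred_eq, Set.mem_empty_iff_false, iff_false]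
            rintro ⟨h1, h2, h3⟩
            exact hx ⟨by linarith, h1.le⟩
          rw [this, measure_empty]
    _ = ENNReal.ofReal (∫ x in Set.Ioc (p - t) p, (x - (p - t))) := by
        refine (ofReal_integral_eq_lintegral_ofReal hint ?_).symm
        filter_upwards [ae_restrict_mem measurableSet_Ioc] with x hx
        simpa using hx.1.le
    _ = _ := by
        rw [← intervalIntegral.integral_of_le (by linarith),
          intervalIntegral.integral_sub (f := fun x => x) (continuous_id.intervalIntegrable _ _)
          (continuous_const.intervalIntegrable _ _), integral_id,
          intervalIntegral.integral_const]
        congr 1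
        simp only [smul_eq_mul]
        ring

/-- For centered intervals the Pollard-type upper bound is attained. -/
theorem exists_le_volume_addTriples_Ioo {a b c : ℝ} (ha : 0 ≤ a) (hb : 0 ≤ b) (hc : 0 ≤ c) :
    ∃ t, 0 ≤ t ∧ t ≤ a ∧ t ≤ b ∧
      ENNReal.ofReal t * ENNReal.ofReal c + ENNReal.ofReal (a - t) * ENNReal.ofReal (b - t) ≤
        volume (addTriples (Set.Ioo (-(a / 2)) (a / 2)) (Set.Ioo (-(b / 2)) (b / 2))
          (Set.Ioo (-(c / 2)) (c / 2))) := by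
  have hvol : ∀ r : ℝ, volume (Set.Ioo (-(r / 2)) (r / 2)) = ENNReal.ofReal r := fun r => by
    rw [Real.volume_Ioo]; ring_nf
  by_cases h1 : a + b ≤ c
  · refine ⟨0, le_rfl, ha, hb, ?_⟩
    rw [ENNReal.ofReal_zero, zero_mul, zero_add, sub_zero, sub_zero, ← hvol a, ← hvol b,
      ← Measure.prod_prod]
    refine measure_mono fun z ⟨hx, hy⟩ => ⟨hx, hy, ?_, ?_⟩ <;>
      linarith [hx.1, hx.2, hy.1, hy.2]
  by_cases h2 : c ≤ a - b
  · refine ⟨b, hb, by linarith, le_rfl, ?_⟩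
    rw [sub_self, ENNReal.ofReal_zero, mul_zero, add_zero, ← hvol b, ← hvol c,
      ← measure_setOf_snd_mem_add_mem volume measurableSet_Ioo measurableSet_Ioo]
    refine measure_mono fun z ⟨hy, hz⟩ => ⟨⟨?_, ?_⟩, hy, hz⟩ <;>
      linarith [hy.1, hy.2, hz.1, hz.2]
  by_cases h3 : c ≤ b - a
  · refine ⟨a, ha, le_rfl, by linarith, ?_⟩
    rw [sub_self, ENNReal.ofReal_zero, zero_mul, add_zero, ← hvol a, ← hvol c,
      ← measure_setOf_fst_mem_add_mem volume measurableSet_Ioo measurableSet_Ioo]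
    refine measure_mono fun z ⟨hx, hz⟩ => ⟨hx, ⟨?_, ?_⟩, hz⟩ <;>
      linarith [hx.1, hx.2, hz.1, hz.2]
  set t := (a + b - c) / 2 with ht
  have ht0 : 0 ≤ t := by linarith
  have hta : t ≤ a := by linarith
  have htb : t ≤ b := by linarith
  refine ⟨t, ht0, hta, htb, ?_⟩
  set T : Set (ℝ × ℝ) := {z | z.1 < a / 2 ∧ z.2 < b / 2 ∧ a / 2 + b / 2 - t ≤ z.1 + z.2} with hT
  have hTvol : volume T ≤ ENNReal.ofReal (t ^ 2 / 2) := volume_corner_le ht0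
  have hTneg : volume (-T) = volume T := Measure.measure_neg volume T
  have hcover : ENNReal.ofReal a * ENNReal.ofReal b ≤
      volume (addTriples (Set.Ioo (-(a / 2)) (a / 2)) (Set.Ioo (-(b / 2)) (b / 2))
          (Set.Ioo (-(c / 2)) (c / 2))) + ENNReal.ofReal (t ^ 2) := by
    have h4 : ENNReal.ofReal (t ^ 2) = ENNReal.ofReal (t ^ 2 / 2) + ENNReal.ofReal (t ^ 2 / 2) := by
      rw [← ENNReal.ofReal_add (by positivity) (by positivity)]; ring_nf
    rw [h4, ← hvol a, ← hvol b, ← Measure.prod_prod]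
    refine le_trans (measure_mono (t := addTriples (Set.Ioo (-(a / 2)) (a / 2))
      (Set.Ioo (-(b / 2)) (b / 2)) (Set.Ioo (-(c / 2)) (c / 2)) ∪ (T ∪ -T)) ?_)
      ((measure_union_le _ _).trans (add_le_add_right ((measure_union_le _ _).trans
        (add_le_add hTvol (hTneg.le.trans hTvol))) _))
    rintro ⟨x, y⟩ ⟨hx, hy⟩
    simp only [Set.mem_Ioo] at hx hy
    by_cases h5 : c / 2 ≤ x + y
    · exact Or.inr (Or.inl ⟨hx.2, hy.2, by simp only; linarith⟩)
    by_cases h6 : x + y ≤ -(c / 2)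
    · refine Or.inr (Or.inr ⟨?_, ?_, ?_⟩) <;> simp only [Prod.fst_neg, Prod.snd_neg] <;> linarith
    · exact Or.inl ⟨hx, hy, by simp only; linarith, by simp only; linarith⟩
  have h7 : ENNReal.ofReal a * ENNReal.ofReal b = ENNReal.ofReal t * ENNReal.ofReal c +
      ENNReal.ofReal (a - t) * ENNReal.ofReal (b - t) + ENNReal.ofReal (t ^ 2) := by
    have := sub_nonneg.2 hta
    have := sub_nonneg.2 htb
    rw [← ENNReal.ofReal_mul ha, ← ENNReal.ofReal_mul ht0, ← ENNReal.ofReal_mul (by assumption),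
      ← ENNReal.ofReal_add (by positivity) (by positivity),
      ← ENNReal.ofReal_add (by positivity) (by positivity)]
    congr 1
    rw [show c = a + b - 2 * t by rw [ht]; ring]
    ring
  rw [h7] at hcover
  exact (ENNReal.add_le_add_iff_right ENNReal.ofReal_ne_top).1 hcover

/-- The centered open interval of length `a`. -/
def centeredInterval (a : ℝ≥0∞) : Set ℝ := {s | ENNReal.ofReal (2 * |s|) < a}

theorem centeredInterval_ofReal (a : ℝ) :
    centeredInterval (ENNReal.ofReal a) = Set.Ioo (-(a / 2)) (a / 2) := by
  ext s
  rw [centeredInterval, Set.mem_ofPred_eq, ENNReal.ofReal_lt_ofReal_iff_of_nonneg (by positivity),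
    Set.mem_Ioo, ← abs_lt]
  constructor <;> intro h <;> linarith

theorem volume_centeredInterval {a : ℝ≥0∞} (ha : a ≠ ⊤) : volume (centeredInterval a) = a := by
  lift a to NNReal using ha
  rw [← ENNReal.ofReal_coe_nnreal, centeredInterval_ofReal, Real.volume_Ioo]
  ring_nf

/-- The Riesz rearrangement inequality for bounded sets on the line. -/
theorem volume_addTriples_le_centeredInterval {A B C : Set ℝ} (hA : MeasurableSet A)
    (hB : MeasurableSet B) (hC : MeasurableSet C) {D : ℝ} (hAD : A ⊆ Set.Icc (-D) D)
    (hBD : B ⊆ Set.Icc (-D) D) (hCD : C ⊆ Set.Icc (-D) D) :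
    volume (addTriples A B C) ≤ volume (addTriples (centeredInterval (volume A))
      (centeredInterval (volume B)) (centeredInterval (volume C))) := by
  have hreal : ∀ S : Set ℝ, S ⊆ Set.Icc (-D) D →
      volume S = ENNReal.ofReal (volume S).toReal := fun S hS =>
    (ENNReal.ofReal_toReal ((measure_mono hS).trans_lt measure_Icc_lt_top).ne).symm
  obtain ⟨t, ht0, hta, htb, ht⟩ := exists_le_volume_addTriples_Ioo
    (ENNReal.toReal_nonneg (a := volume A)) (ENNReal.toReal_nonneg (a := volume B))
    (ENNReal.toReal_nonneg (a := volume C))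
  rw [hreal A hAD, hreal B hBD, hreal C hCD]
  simp only [centeredInterval_ofReal]
  refine le_trans ?_ ht
  rw [← hreal C hCD]
  exact volume_addTriples_le hA hB hC hAD hBD (hreal A hAD) (hreal B hBD) ht0 hta htb

section Steiner

variable {F : Type*}

/-- A set is vertically balanced if each of its fibres is a centered interval. -/
def VerticallyBalanced (K : Set (F × ℝ)) : Prop :=
  ∀ y s s', (y, s) ∈ K → |s'| ≤ |s| → (y, s') ∈ K

/-- All fibres lie in a common bounded interval. -/
def VerticallyBounded (D : ℝ) (A : Set (F × ℝ)) : Prop :=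
  ∀ p ∈ A, |p.2| ≤ D

theorem VerticallyBounded.preimage_subset {D : ℝ} {A : Set (F × ℝ)} (hA : VerticallyBounded D A)
    (y : F) : Prod.mk y ⁻¹' A ⊆ Set.Icc (-D) D :=
  fun _ hs => abs_le.1 (hA _ hs)

theorem VerticallyBounded.volume_preimage_ne_top {D : ℝ} {A : Set (F × ℝ)}
    (hA : VerticallyBounded D A) (y : F) : volume (Prod.mk y ⁻¹' A) ≠ ⊤ :=
  ((measure_mono (hA.preimage_subset y)).trans_lt measure_Icc_lt_top).ne

/-- Steiner symmetrization of a subset of `F × ℝ` along the lines `{y} × ℝ`. -/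
def steiner (A : Set (F × ℝ)) : Set (F × ℝ) :=
  {p | p.2 ∈ centeredInterval (volume (Prod.mk p.1 ⁻¹' A))}

theorem preimage_steiner (A : Set (F × ℝ)) (y : F) :
    Prod.mk y ⁻¹' steiner A = centeredInterval (volume (Prod.mk y ⁻¹' A)) := rfl

theorem steiner_mono {A B : Set (F × ℝ)} (h : A ⊆ B) : steiner A ⊆ steiner B :=
  fun _ hp => lt_of_lt_of_le hp (measure_mono (Set.preimage_mono h))

theorem VerticallyBalanced.steiner_subset {K : Set (F × ℝ)} (hK : VerticallyBalanced K) :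
    steiner K ⊆ K := by
  rintro ⟨y, s⟩ hs
  by_contra hys
  refine absurd (show ENNReal.ofReal (2 * |s|) < volume (Prod.mk y ⁻¹' K) from hs) (not_lt.2 ?_)
  have h : Prod.mk y ⁻¹' K ⊆ Set.Ioo (-|s|) |s| := fun s' hs' => by
    rw [Set.mem_Ioo, ← abs_lt]
    by_contra hle
    exact hys (hK y s' s hs' (not_lt.1 hle))
  refine (measure_mono h).trans ?_
  rw [Real.volume_Ioo]
  ring_nf
  exact le_rfl

theorem measurableSet_steiner [MeasurableSpace F] {A : Set (F × ℝ)} (hA : MeasurableSet A) :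
    MeasurableSet (steiner A) :=
  measurableSet_lt (by fun_prop) ((measurable_measure_prodMk_left hA).comp measurable_fst)

variable [MeasureSpace F]

theorem volume_steiner {D : ℝ} {A : Set (F × ℝ)} (hA : MeasurableSet A)
    (hAD : VerticallyBounded D A) : volume (steiner A) = volume A := by
  rw [Measure.volume_eq_prod, Measure.prod_apply (measurableSet_steiner hA),
    Measure.prod_apply hA]
  refine lintegral_congr fun y => ?_
  rw [preimage_steiner, volume_centeredInterval (hAD.volume_preimage_ne_top y)]

/-- Steiner symmetrization moves mass from `A \ K` into `K`. -/
theorem volume_steiner_inter_ge {D : ℝ} {A K : Set (F × ℝ)} (hA : MeasurableSet A)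
    (hAD : VerticallyBounded D A) (hKm : MeasurableSet K)
    (hK : VerticallyBalanced K) (r : ℝ) :
    volume (A ∩ K) + volume ((A \ K) ∩ {p | (p.1, p.2 - r) ∈ K \ A}) ≤
      volume (steiner A ∩ K) := by
  have htr : Measurable fun p : F × ℝ => (p.1, p.2 - r) := by fun_prop
  have hm : MeasurableSet ((A \ K) ∩ {p : F × ℝ | (p.1, p.2 - r) ∈ K \ A}) :=
    (hA.diff hKm).inter (htr (hKm.diff hA))
  refine le_trans ?_ (measure_mono (Set.inter_subset_inter_right _ hK.steiner_subset))
  rw [Measure.volume_eq_prod, Measure.prod_apply (hA.inter hKm), Measure.prod_apply hm,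
    Measure.prod_apply ((measurableSet_steiner hA).inter (measurableSet_steiner hKm)),
    ← lintegral_add_left (measurable_measure_prodMk_left (hA.inter hKm))]
  refine lintegral_mono fun y => ?_
  simp only [Set.preimage_inter, preimage_steiner]
  set a := Prod.mk y ⁻¹' A with ha
  set k := Prod.mk y ⁻¹' K with hk
  have ham : MeasurableSet a := measurable_prodMk_left hA
  have hkm : MeasurableSet k := measurable_prodMk_left hKm
  have hci : centeredInterval (volume a) ∩ centeredInterval (volume k) =
      centeredInterval (min (volume a) (volume k)) := by
    ext s
    simp [centeredInterval]
  have hmin : min (volume a) (volume k) ≠ ⊤ :=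
    ((min_le_left _ _).trans_lt (hAD.volume_preimage_ne_top y).lt_top).ne
  rw [hci, volume_centeredInterval hmin, le_min_iff]
  constructor
  · rw [← measure_inter_add_sdiff a hkm]
    gcongr
    exact Set.inter_subset_left
  · rw [← measure_inter_add_sdiff k ham, Set.inter_comm k a,
      ← (measurePreserving_sub_right volume r).measure_preimage
        (hkm.diff ham).nullMeasurableSet]
    gcongr
    exact Set.inter_subset_right

theorem volume_steiner_diff_le {D : ℝ} {A K : Set (F × ℝ)} (hA : MeasurableSet A)
    (hAD : VerticallyBounded D A) (hAfin : volume A ≠ ⊤) (hKm : MeasurableSet K)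
    (hK : VerticallyBalanced K) (r : ℝ) :
    volume (steiner A \ K) + volume ((A \ K) ∩ {p | (p.1, p.2 - r) ∈ K \ A}) ≤
      volume (A \ K) := by
  have h1 := measure_inter_add_sdiff (μ := volume) A hKm
  have h2 := measure_inter_add_sdiff (μ := volume) (steiner A) hKm
  have h3 := volume_steiner_inter_ge hA hAD hKm hK r
  rw [volume_steiner hA hAD, ← h1] at h2
  have hfin : volume (A ∩ K) ≠ ⊤ := measure_ne_top_of_subset Set.inter_subset_left hAfin
  refine (ENNReal.add_le_add_iff_left hfin).1 ?_
  rw [← h2, add_comm (volume (steiner A \ K)), ← add_assoc]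
  gcongr

variable [SFinite (volume : Measure F)]

theorem volume_prod_prod_eq_lintegral {T : Set ((F × ℝ) × (F × ℝ))} (hT : MeasurableSet T) :
    volume T = ∫⁻ y, ∫⁻ y', volume {s : ℝ × ℝ | ((y, s.1), (y', s.2)) ∈ T} := by
  have h1 : Measurable fun p : F × ℝ => (volume.prod volume : Measure (F × ℝ)) (Prod.mk p ⁻¹' T) :=
    measurable_measure_prodMk_left hT
  rw [Measure.volume_eq_prod (F × ℝ), Measure.prod_apply hT, Measure.volume_eq_prod F ℝ,
    lintegral_prod _ h1.aemeasurable]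
  refine lintegral_congr fun y => ?_
  have h2 : ∀ s : ℝ, (volume.prod volume : Measure (F × ℝ)) (Prod.mk (y, s) ⁻¹' T) =
      ∫⁻ y', volume {s' : ℝ | ((y, s), (y', s')) ∈ T} := fun s =>
    Measure.prod_apply (measurable_prodMk_left hT)
  simp_rw [h2]
  have hU : MeasurableSet {q : (ℝ × F) × ℝ | ((y, q.1.1), (q.1.2, q.2)) ∈ T} :=
    (show Measurable fun q : (ℝ × F) × ℝ => ((y, q.1.1), (q.1.2, q.2)) by fun_prop) hT
  rw [lintegral_lintegral_swap (measurable_measure_prodMk_left hU).aemeasurable]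
  refine lintegral_congr fun y' => ?_
  have hV : MeasurableSet {s : ℝ × ℝ | ((y, s.1), (y', s.2)) ∈ T} :=
    (show Measurable fun s : ℝ × ℝ => ((y, s.1), (y', s.2)) by fun_prop) hT
  rw [Measure.volume_eq_prod, Measure.prod_apply hV]
  rfl

theorem volume_addTriples_le_steiner [AddGroup F] [MeasurableAdd₂ F] {D : ℝ}
    {A B C : Set (F × ℝ)} (hA : MeasurableSet A) (hB : MeasurableSet B) (hC : MeasurableSet C)
    (hAD : VerticallyBounded D A) (hBD : VerticallyBounded D B) (hCD : VerticallyBounded D C) :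
    volume (addTriples A B C) ≤ volume (addTriples (steiner A) (steiner B) (steiner C)) := by
  have : MeasurableAdd₂ (F × ℝ) := ⟨((measurable_fst.comp measurable_fst).add
    (measurable_fst.comp measurable_snd)).prodMk ((measurable_snd.comp measurable_fst).add
    (measurable_snd.comp measurable_snd))⟩
  rw [volume_prod_prod_eq_lintegral (measurableSet_addTriples hA hB hC),
    volume_prod_prod_eq_lintegral (measurableSet_addTriples (measurableSet_steiner hA)
      (measurableSet_steiner hB) (measurableSet_steiner hC))]
  refine lintegral_mono fun y => lintegral_mono fun y' => ?_
  exact volume_addTriples_le_centeredInterval (measurable_prodMk_left hA)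
    (measurable_prodMk_left hB) (measurable_prodMk_left hC)
    (hAD.preimage_subset y) (hBD.preimage_subset y') (hCD.preimage_subset (y + y'))

end Steiner

/-- Orthogonal coordinates on Euclidean space whose last axis points along a given vector. -/
theorem exists_coordinates {k : ℕ} (v : EuclideanSpace ℝ (Fin (k + 1))) :
    ∃ Ψ : EuclideanSpace ℝ (Fin (k + 1)) ≃ᵐ (Fin k → ℝ) × ℝ,
      MeasurePreserving Ψ volume volume ∧ (∀ x y, Ψ (x + y) = Ψ x + Ψ y) ∧ (Ψ v).1 = 0 ∧
      ∀ x, ‖x‖ ^ 2 = ∑ i, (Ψ x).1 i ^ 2 + (Ψ x).2 ^ 2 := by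
  set w : EuclideanSpace ℝ (Fin (k + 1)) := EuclideanSpace.single 0 ‖v‖ with hw
  set ρ := (ℝ ∙ (v - w))ᗮ.reflection with hρ
  have hv : ρ v = w := Submodule.reflection_sub (by simp [hw])
  let Ψ := ((ρ.toMeasurableEquiv.trans (MeasurableEquiv.toLp 2 (Fin (k + 1) → ℝ)).symm).trans
    (MeasurableEquiv.piFinSuccAbove (fun _ => ℝ) 0)).trans MeasurableEquiv.prodComm
  have hΨ : ∀ x, Ψ x = (fun i => ρ x i.succ, ρ x 0) := fun x => rfl
  refine ⟨Ψ, ?_, fun x y => ?_, ?_, fun x => ?_⟩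
  · exact Measure.measurePreserving_swap.comp
      ((volume_preserving_piFinSuccAbove (fun _ => ℝ) 0).comp
        ((EuclideanSpace.volume_preserving_symm_measurableEquiv_toLp _).comp ρ.measurePreserving))
  · simp only [hΨ, map_add, PiLp.add_apply]
    rfl
  · rw [hΨ, hv]
    ext i
    simp [hw]
  · rw [← ρ.norm_map x, EuclideanSpace.norm_sq_eq, Fin.sum_univ_succ, hΨ]
    simp [add_comm]

/-- One Steiner symmetrization in the direction of `v` applied to three bounded sets
simultaneously. -/
theorem exists_symmetrization {k : ℕ} (D : ℝ) (ρ : Fin 3 → ℝ)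
    (A : Fin 3 → Set (EuclideanSpace ℝ (Fin (k + 1)))) (hA : ∀ i, MeasurableSet (A i))
    (hAD : ∀ i, A i ⊆ Metric.closedBall 0 D) (v : EuclideanSpace ℝ (Fin (k + 1))) :
    ∃ A' : Fin 3 → Set (EuclideanSpace ℝ (Fin (k + 1))),
      (∀ i, MeasurableSet (A' i)) ∧ (∀ i, A' i ⊆ Metric.closedBall 0 D) ∧
      (∀ i, volume (A' i) = volume (A i)) ∧
      volume (addTriples (A 0) (A 1) (A 2)) ≤ volume (addTriples (A' 0) (A' 1) (A' 2)) ∧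
      ∀ i, volume (A' i \ Metric.closedBall 0 (ρ i)) +
        volume ((A i \ Metric.closedBall 0 (ρ i)) ∩
          {x | x - v ∈ Metric.closedBall 0 (ρ i) \ A i}) ≤
        volume (A i \ Metric.closedBall 0 (ρ i)) := by
  obtain ⟨Ψ, hΨ, hadd, hv, hnorm⟩ := exists_coordinates v
  have hΨs : MeasurePreserving Ψ.symm volume volume := hΨ.symm Ψ
  have hpre : ∀ S, volume (Ψ ⁻¹' S) = volume S := fun S => hΨ.measure_preimage_equiv S
  have hpres : ∀ S, volume (Ψ.symm ⁻¹' S) = volume S := fun S => hΨs.measure_preimage_equiv S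
  have hsub : ∀ x, Ψ (x - v) = ((Ψ x).1, (Ψ x).2 - (Ψ v).2) := fun x => by
    have h : Ψ (x - v) + Ψ v = Ψ x := by rw [← hadd, sub_add_cancel]
    rw [← h]
    ext <;> simp [hv]
  have hbal : ∀ r, VerticallyBalanced
      (Ψ.symm ⁻¹' Metric.closedBall (0 : EuclideanSpace ℝ (Fin (k + 1))) r) := by
    intro r y s s' hs hss
    simp only [Set.mem_preimage, mem_closedBall_zero_iff] at hs ⊢
    refine le_trans ((sq_le_sq₀ (norm_nonneg _) (norm_nonneg _)).1 ?_) hs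
    simp only [hnorm, MeasurableEquiv.apply_symm_apply]
    have := sq_le_sq.2 hss
    linarith
  have hbdd : ∀ i, VerticallyBounded D (Ψ.symm ⁻¹' A i) := by
    rintro i p hp
    have h1 : ‖Ψ.symm p‖ ≤ D := by simpa using hAD i hp
    refine le_trans (abs_le_of_sq_le_sq ?_ (norm_nonneg _)) h1
    rw [hnorm, MeasurableEquiv.apply_symm_apply]
    have : 0 ≤ ∑ i, p.1 i ^ 2 := Finset.sum_nonneg fun i _ => sq_nonneg _
    linarith
  have hmeas : ∀ S, MeasurableSet S → MeasurableSet (Ψ.symm ⁻¹' S) := fun _ hS =>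
    Ψ.symm.measurable hS
  have htrip : ∀ S T U, volume (addTriples (Ψ ⁻¹' S) (Ψ ⁻¹' T) (Ψ ⁻¹' U)) =
      volume (addTriples S T U) := fun S T U => by
    have h := (hΨ.prod hΨ).measure_preimage_equiv (f := Ψ.prodCongr Ψ) (addTriples S T U)
    refine Eq.trans (congrArg _ ?_) h
    ext p
    simp only [addTriples, Set.mem_preimage, hadd]
    rfl
  have hback : ∀ S, Ψ ⁻¹' (Ψ.symm ⁻¹' S) = S := fun S => by ext; simp
  refine ⟨fun i => Ψ ⁻¹' steiner (Ψ.symm ⁻¹' A i), fun i => ?_, fun i => ?_, fun i => ?_, ?_,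
    fun i => ?_⟩
  · exact Ψ.measurable (measurableSet_steiner (hmeas _ (hA i)))
  · rw [← hback (Metric.closedBall 0 D)]
    exact Set.preimage_mono
      ((steiner_mono (Set.preimage_mono (hAD i))).trans (hbal D).steiner_subset)
  · rw [hpre, volume_steiner (hmeas _ (hA i)) (hbdd i), hpres]
  · rw [htrip]
    refine le_trans (le_of_eq ?_) (volume_addTriples_le_steiner (hmeas _ (hA 0)) (hmeas _ (hA 1))
      (hmeas _ (hA 2)) (hbdd 0) (hbdd 1) (hbdd 2))
    rw [← htrip]
    simp only [hback]
  · have hfin : volume (Ψ.symm ⁻¹' A i) ≠ ⊤ := by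
      rw [hpres]
      exact measure_ne_top_of_subset (hAD i) measure_closedBall_lt_top.ne
    have h := volume_steiner_diff_le (hmeas _ (hA i)) (hbdd i) hfin
      (hmeas _ Metric.isClosed_closedBall.measurableSet) (hbal (ρ i)) (Ψ v).2
    rw [← hpre, ← hpre ((_ \ _) ∩ _), ← hpre (_ \ _)] at h
    convert h using 3
    · ext x; simp
    · ext x; simp [← hsub]
    · ext x; simp

/-- Two bounded sets of positive measure overlap substantially after a suitable translation. -/
theorem exists_lt_volume_inter_translate {n : ℕ} {M N : Set (EuclideanSpace ℝ (Fin n))}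
    (hM : MeasurableSet M) (hN : MeasurableSet N) {D : ℝ} (hMD : M ⊆ Metric.closedBall 0 D)
    (hND : N ⊆ Metric.closedBall 0 D) {η : ℝ≥0∞}
    (hη : η * volume (Metric.closedBall (0 : EuclideanSpace ℝ (Fin n)) (2 * D)) <
      volume M * volume N) :
    ∃ v, η < volume (M ∩ {x | x - v ∈ N}) := by
  by_contra! hle
  refine absurd hη (not_lt.2 ?_)
  rw [mul_comm (volume M), ← measure_setOf_fst_mem_add_mem volume hN hM, Measure.prod_apply_symm
    (s := {p | p.1 ∈ N ∧ p.1 + p.2 ∈ M}) ((measurable_fst hN).inter (measurable_add hM)),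
    ← setLIntegral_const, ← lintegral_indicator Metric.isClosed_closedBall.measurableSet]
  refine lintegral_mono fun v => ?_
  by_cases hv : v ∈ Metric.closedBall (0 : EuclideanSpace ℝ (Fin n)) (2 * D)
  · rw [Set.indicator_of_mem hv]
    refine le_trans (le_of_eq ?_) (hle v)
    rw [← measure_preimage_add_right volume v (M ∩ _)]
    congr 1
    ext y
    simp [and_comm]
  · rw [Set.indicator_of_notMem hv]
    refine le_of_eq (measure_mono_null (fun y hy => ?_) measure_empty)
    refine hv ?_
    have h1 : ‖y‖ ≤ D := by simpa using hND hy.1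
    have h2 : ‖y + v‖ ≤ D := by simpa using hMD hy.2
    rw [mem_closedBall_zero_iff]
    calc ‖v‖ = ‖(y + v) - y‖ := by rw [add_sub_cancel_left]
      _ ≤ ‖y + v‖ + ‖y‖ := norm_sub_le _ _
      _ ≤ 2 * D := by linarith

theorem volume_addTriples_le_add {n : ℕ} {A B C K L J : Set (EuclideanSpace ℝ (Fin n))}
    (hA : MeasurableSet A) (hC : MeasurableSet C) (hJ : MeasurableSet J) {V : ℝ≥0∞}
    (hAV : volume A ≤ V) (hBV : volume B ≤ V) :
    volume (addTriples A B C) ≤ volume (addTriples K L J) +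
      (volume (A \ K) + volume (B \ L) + volume (C \ J)) * V := by
  calc volume (addTriples A B C)
      ≤ volume (addTriples K L J ∪ ((A \ K) ×ˢ B ∪ A ×ˢ (B \ L) ∪
          {p | p.1 ∈ A ∧ p.1 + p.2 ∈ C \ J})) := by
        refine measure_mono fun p ⟨h1, h2, h3⟩ => ?_
        by_cases hK : p.1 ∈ K
        · by_cases hL : p.2 ∈ L
          · by_cases hJ : p.1 + p.2 ∈ J
            · exact Or.inl ⟨hK, hL, hJ⟩
            · exact Or.inr (Or.inr ⟨h1, h3, hJ⟩)
          · exact Or.inr (Or.inl (Or.inr ⟨h1, h2, hL⟩))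
        · exact Or.inr (Or.inl (Or.inl ⟨⟨h1, hK⟩, h2⟩))
    _ ≤ volume (addTriples K L J) + (volume (A \ K) * volume B + volume A * volume (B \ L) +
          volume A * volume (C \ J)) := by
        refine (measure_union_le _ _).trans (add_le_add_right ((measure_union_le _ _).trans
          (add_le_add ((measure_union_le _ _).trans (add_le_add ?_ ?_)) ?_)) _)
        · exact (Measure.prod_prod _ _).le
        · exact (Measure.prod_prod _ _).le
        · exact (measure_setOf_fst_mem_add_mem volume hA (hC.diff hJ)).le
    _ ≤ _ := by
        rw [add_mul, add_mul, mul_comm (volume A), mul_comm (volume A)]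
        gcongr

/-- Repeated Steiner symmetrization brings three bounded sets arbitrarily close to balls. -/
theorem exists_symmetrization_sum_diff_lt {k : ℕ} {D : ℝ} {ρ : Fin 3 → ℝ} (hρD : ∀ i, ρ i ≤ D)
    {A : Fin 3 → Set (EuclideanSpace ℝ (Fin (k + 1)))} (hA : ∀ i, MeasurableSet (A i))
    (hAD : ∀ i, A i ⊆ Metric.closedBall 0 D)
    (hAρ : ∀ i, volume (A i) ≤
      volume (Metric.closedBall (0 : EuclideanSpace ℝ (Fin (k + 1))) (ρ i)))
    {ε : ℝ≥0∞} (hε : 0 < ε) :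
    ∃ A' : Fin 3 → Set (EuclideanSpace ℝ (Fin (k + 1))),
      (∀ i, MeasurableSet (A' i)) ∧ (∀ i, A' i ⊆ Metric.closedBall 0 D) ∧
      volume (addTriples (A 0) (A 1) (A 2)) ≤ volume (addTriples (A' 0) (A' 1) (A' 2)) ∧
      ∑ i, volume (A' i \ Metric.closedBall 0 (ρ i)) < ε := by
  let 𝒜 : Set (Fin 3 → Set (EuclideanSpace ℝ (Fin (k + 1)))) :=
    {A' | (∀ i, MeasurableSet (A' i)) ∧ (∀ i, A' i ⊆ Metric.closedBall 0 D) ∧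
      (∀ i, volume (A' i) = volume (A i)) ∧
      volume (addTriples (A 0) (A 1) (A 2)) ≤ volume (addTriples (A' 0) (A' 1) (A' 2))}
  let f : (Fin 3 → Set (EuclideanSpace ℝ (Fin (k + 1)))) → ℝ≥0∞ := fun A' =>
    ∑ i, volume (A' i \ Metric.closedBall 0 (ρ i))
  by_contra! hcon
  have hge : ∀ A' ∈ 𝒜, ε ≤ f A' := fun A' h => hcon A' h.1 h.2.1 h.2.2.2
  have hA𝒜 : A ∈ 𝒜 := ⟨hA, hAD, fun _ => rfl, le_rfl⟩
  have hfA : f A ≠ ⊤ := ENNReal.sum_ne_top.2 fun i _ =>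
    measure_ne_top_of_subset (Set.sdiff_subset.trans (hAD i)) measure_closedBall_lt_top.ne
  obtain ⟨η, hη0, hη⟩ := ENNReal.exists_nnreal_pos_mul_lt
    (measure_closedBall_lt_top (μ := volume) (x := (0 : EuclideanSpace ℝ (Fin (k + 1))))
      (r := 2 * D)).ne
    (b := ε / 3 * (ε / 3)) (by simpa using hε.ne')
  have hs : ⨅ A' ∈ 𝒜, f A' ≠ ⊤ := ((iInf₂_le A hA𝒜).trans_lt hfA.lt_top).ne
  have hlt : ⨅ A' ∈ 𝒜, f A' < (⨅ A' ∈ 𝒜, f A') + η :=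
    ENNReal.lt_add_right hs (by simpa using hη0.ne')
  obtain ⟨B, hB, hBlt⟩ : ∃ B ∈ 𝒜, f B < (⨅ A' ∈ 𝒜, f A') + η := by
    simpa only [iInf_lt_iff, exists_prop] using hlt
  obtain ⟨hBm, hBD, hBvol, hBI⟩ := hB
  obtain ⟨i, hi⟩ : ∃ i, ε / 3 ≤ volume (B i \ Metric.closedBall 0 (ρ i)) := by
    by_contra! h
    refine absurd (hge B ⟨hBm, hBD, hBvol, hBI⟩) (not_le.2 ?_)
    simp only [f, Fin.sum_univ_three]
    rw [← ENNReal.add_thirds ε]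
    exact ENNReal.add_lt_add (ENNReal.add_lt_add (h 0) (h 1)) (h 2)
  have hball : MeasurableSet (Metric.closedBall (0 : EuclideanSpace ℝ (Fin (k + 1))) (ρ i)) :=
    Metric.isClosed_closedBall.measurableSet
  have hi' : ε / 3 ≤ volume (Metric.closedBall 0 (ρ i) \ B i) := by
    refine hi.trans ?_
    have hfin : volume (B i ∩ Metric.closedBall 0 (ρ i)) ≠ ⊤ :=
      measure_ne_top_of_subset Set.inter_subset_right measure_closedBall_lt_top.ne
    refine (ENNReal.add_le_add_iff_left hfin).1 ?_
    rw [measure_inter_add_sdiff _ hball, Set.inter_comm, measure_inter_add_sdiff _ (hBm i), hBvol]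
    exact hAρ i
  obtain ⟨v, hv⟩ := exists_lt_volume_inter_translate ((hBm i).diff hball) (hball.diff (hBm i))
    (Set.sdiff_subset.trans (hBD i))
    (Set.sdiff_subset.trans (Metric.closedBall_subset_closedBall (hρD i)))
    (hη.trans_le (mul_le_mul' hi hi'))
  obtain ⟨B', hBm', hBD', hBvol', hBI', hstep⟩ := exists_symmetrization D ρ B hBm hBD v
  have hB' : B' ∈ 𝒜 := ⟨hBm', hBD', fun j => (hBvol' j).trans (hBvol j), hBI.trans hBI'⟩
  have hsum : f B' + η ≤ f B := by
    refine le_trans ?_ (Finset.sum_le_sum fun j _ => hstep j)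
    rw [Finset.sum_add_distrib]
    refine add_le_add_right (hv.le.trans ?_) _
    exact Finset.single_le_sum (f := fun j => volume ((B j \ Metric.closedBall 0 (ρ j)) ∩
      {x | x - v ∈ Metric.closedBall 0 (ρ j) \ B j})) (fun _ _ => zero_le) (Finset.mem_univ i)
  have h1 : f B' + η < (⨅ A' ∈ 𝒜, f A') + η := hsum.trans_lt hBlt
  have h2 : (⨅ A' ∈ 𝒜, f A') ≤ f B' := iInf₂_le B' hB'
  exact absurd h1 (not_lt.2 (by gcongr))

/-- The Riesz rearrangement inequality for bounded sets. -/
theorem volume_addTriples_le_closedBall_of_bounded {k : ℕ} {D : ℝ} {ρ : Fin 3 → ℝ}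
    (hρD : ∀ i, ρ i ≤ D) {A : Fin 3 → Set (EuclideanSpace ℝ (Fin (k + 1)))}
    (hA : ∀ i, MeasurableSet (A i)) (hAD : ∀ i, A i ⊆ Metric.closedBall 0 D)
    (hAρ : ∀ i, volume (A i) ≤
      volume (Metric.closedBall (0 : EuclideanSpace ℝ (Fin (k + 1))) (ρ i))) :
    volume (addTriples (A 0) (A 1) (A 2)) ≤
      volume (addTriples (Metric.closedBall (0 : EuclideanSpace ℝ (Fin (k + 1))) (ρ 0))
        (Metric.closedBall 0 (ρ 1)) (Metric.closedBall 0 (ρ 2))) := by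
  refine ENNReal.le_of_forall_pos_le_add fun δ hδ _ => ?_
  obtain ⟨ε, hε0, hε⟩ := ENNReal.exists_nnreal_pos_mul_lt
    (measure_closedBall_lt_top (μ := volume) (x := (0 : EuclideanSpace ℝ (Fin (k + 1))))
      (r := D)).ne (b := (δ : ℝ≥0∞)) (by simpa using hδ.ne')
  obtain ⟨A', hAm', hAD', hI, hlt⟩ := exists_symmetrization_sum_diff_lt hρD hA hAD hAρ
    (ε := (ε : ℝ≥0∞)) (by simpa using hε0)
  refine hI.trans ((volume_addTriples_le_add (hAm' 0) (hAm' 2)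
    Metric.isClosed_closedBall.measurableSet (measure_mono (hAD' 0))
    (measure_mono (hAD' 1))).trans (add_le_add_right ?_ _))
  rw [Fin.sum_univ_three] at hlt
  exact (mul_le_mul_left hlt.le _).trans hε.le

/-- The Riesz rearrangement inequality for measurable sets. -/
theorem volume_addTriples_le_closedBall {k : ℕ} {ρ : Fin 3 → ℝ}
    {A : Fin 3 → Set (EuclideanSpace ℝ (Fin (k + 1)))} (hA : ∀ i, MeasurableSet (A i))
    (hAρ : ∀ i, volume (A i) ≤
      volume (Metric.closedBall (0 : EuclideanSpace ℝ (Fin (k + 1))) (ρ i))) :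
    volume (addTriples (A 0) (A 1) (A 2)) ≤
      volume (addTriples (Metric.closedBall (0 : EuclideanSpace ℝ (Fin (k + 1))) (ρ 0))
        (Metric.closedBall 0 (ρ 1)) (Metric.closedBall 0 (ρ 2))) := by
  let K : ℕ → Set (EuclideanSpace ℝ (Fin (k + 1))) := fun m => Metric.closedBall 0 (m : ℝ)
  let T : ℕ → Set (EuclideanSpace ℝ (Fin (k + 1)) × EuclideanSpace ℝ (Fin (k + 1))) := fun m =>
    addTriples (A 0 ∩ K m) (A 1 ∩ K m) (A 2 ∩ K m)
  have hK : Monotone K := fun m m' h => Metric.closedBall_subset_closedBall (by exact_mod_cast h)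
  have hT : Monotone T := fun m m' h => addTriples_mono (Set.inter_subset_inter_right _ (hK h))
    (Set.inter_subset_inter_right _ (hK h)) (Set.inter_subset_inter_right _ (hK h))
  have hunion : addTriples (A 0) (A 1) (A 2) ⊆ ⋃ m, T m := by
    rintro p ⟨h0, h1, h2⟩
    obtain ⟨m, hm⟩ := exists_nat_ge (‖p.1‖ + ‖p.2‖)
    have := norm_nonneg p.1
    have := norm_nonneg p.2
    have := norm_add_le p.1 p.2
    refine Set.mem_iUnion.2 ⟨m, ⟨h0, ?_⟩, ⟨h1, ?_⟩, ⟨h2, ?_⟩⟩ <;>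
      rw [mem_closedBall_zero_iff] <;> linarith
  refine (measure_mono hunion).trans ?_
  rw [hT.measure_iUnion]
  refine iSup_le fun m => ?_
  refine volume_addTriples_le_closedBall_of_bounded (D := max (m : ℝ) (∑ i, |ρ i|))
    (A := fun i => A i ∩ K m) (fun i => ?_)
    (fun i => (hA i).inter Metric.isClosed_closedBall.measurableSet)
    (fun i => Set.inter_subset_right.trans (Metric.closedBall_subset_closedBall (le_max_left _ _)))
    (fun i => (measure_mono Set.inter_subset_left).trans (hAρ i))
  exact ((le_abs_self _).trans (Finset.single_le_sum (f := fun i => |ρ i|)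
    (fun _ _ => abs_nonneg _) (Finset.mem_univ i))).trans (le_max_right _ _)

theorem volume_addTriples_ne_top {n : ℕ} {A B C : Set (EuclideanSpace ℝ (Fin n))}
    (hA : volume A ≠ ⊤) (hB : volume B ≠ ⊤) : volume (addTriples A B C) ≠ ⊤ := by
  have hsub : addTriples A B C ⊆ A ×ˢ B := fun p hp => ⟨hp.1, hp.2.1⟩
  refine measure_ne_top_of_subset hsub ?_
  rw [Measure.volume_eq_prod, Measure.prod_prod]
  exact ENNReal.mul_ne_top hA hB

theorem integral_integral_indicator_mul_eq {n : ℕ} {A B C : Set (EuclideanSpace ℝ (Fin n))}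
    (hA : MeasurableSet A) (hB : MeasurableSet B) (hC : MeasurableSet C)
    (hAfin : volume A ≠ ⊤) (hBfin : volume B ≠ ⊤) :
    ∫ x : EuclideanSpace ℝ (Fin n), ∫ y : EuclideanSpace ℝ (Fin n),
        A.indicator (fun _ => (1 : ℝ)) x * B.indicator (fun _ => (1 : ℝ)) y *
          C.indicator (fun _ => (1 : ℝ)) (x + y) = volume.real (addTriples A B C) := by
  have hT := measurableSet_addTriples hA hB hC
  have hint : Integrable ((addTriples A B C).indicator fun _ => (1 : ℝ))
      (volume.prod volume) := (integrable_indicator_iff hT).2 (integrableOn_const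
        (volume_addTriples_ne_top hAfin hBfin))
  have heq : ∀ x y, A.indicator (fun _ => (1 : ℝ)) x * B.indicator (fun _ => (1 : ℝ)) y *
      C.indicator (fun _ => (1 : ℝ)) (x + y) =
        (addTriples A B C).indicator (fun _ => (1 : ℝ)) (x, y) := fun x y => by
    by_cases hx : x ∈ A <;> by_cases hy : y ∈ B <;> by_cases hz : x + y ∈ C <;>
      simp [addTriples, Set.indicator, hx, hy, hz]
  simp_rw [heq]
  rw [← integral_prod _ hint, integral_indicator_const _ hT, smul_eq_mul, mul_one]
  rfl

/-- Brascamp–Lieb–Luttinger special case: replacing `A₀`, `B₀`, `C` by balls of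
the same volumes increases `λ({(x, y) ∈ A₀ × B₀ : x + y ∈ C})`. -/
theorem ball_symmetrization_inequality (n : ℕ) (hn : 0 < n)
    (A₀ B₀ C : Set (EuclideanSpace ℝ (Fin n)))
    (hA : MeasurableSet A₀) (hB : MeasurableSet B₀) (hC : MeasurableSet C)
    (hAfin : volume A₀ < ⊤) (hBfin : volume B₀ < ⊤) (hCfin : volume C < ⊤)
    (ρ₁ ρ₂ R : ℝ) (hρ₁ : 0 < ρ₁) (hρ₂ : 0 < ρ₂) (hR : 0 < R)
    (hvolA : volume A₀ = volume (Metric.closedBall (0 : EuclideanSpace ℝ (Fin n)) ρ₁))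
    (hvolB : volume B₀ = volume (Metric.closedBall (0 : EuclideanSpace ℝ (Fin n)) ρ₂))
    (hvolC : volume C = volume (Metric.closedBall (0 : EuclideanSpace ℝ (Fin n)) R)) :
    volume {p : EuclideanSpace ℝ (Fin n) × EuclideanSpace ℝ (Fin n) |
        p.1 ∈ A₀ ∧ p.2 ∈ B₀ ∧ p.1 + p.2 ∈ C}
      ≤ volume {p : EuclideanSpace ℝ (Fin n) × EuclideanSpace ℝ (Fin n) |
          ‖p.1‖ ≤ ρ₁ ∧ ‖p.2‖ ≤ ρ₂ ∧ ‖p.1 + p.2‖ ≤ R} ∧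
    (∫ x : EuclideanSpace ℝ (Fin n), ∫ y : EuclideanSpace ℝ (Fin n),
        A₀.indicator (fun _ => (1 : ℝ)) x * B₀.indicator (fun _ => (1 : ℝ)) y *
          C.indicator (fun _ => (1 : ℝ)) (x + y))
      ≤ ∫ x : EuclideanSpace ℝ (Fin n), ∫ y : EuclideanSpace ℝ (Fin n),
          (Metric.closedBall (0 : EuclideanSpace ℝ (Fin n)) ρ₁).indicator
              (fun _ => (1 : ℝ)) x *
            (Metric.closedBall (0 : EuclideanSpace ℝ (Fin n)) ρ₂).indicator
              (fun _ => (1 : ℝ)) y *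
            (Metric.closedBall (0 : EuclideanSpace ℝ (Fin n)) R).indicator
              (fun _ => (1 : ℝ)) (x + y) := by
  obtain ⟨k, rfl⟩ := Nat.exists_eq_succ_of_ne_zero hn.ne'
  have hmeas : ∀ r, MeasurableSet (Metric.closedBall (0 : EuclideanSpace ℝ (Fin (k + 1))) r) :=
    fun _ => Metric.isClosed_closedBall.measurableSet
  have hmain : volume (addTriples A₀ B₀ C) ≤
      volume (addTriples (Metric.closedBall (0 : EuclideanSpace ℝ (Fin (k + 1))) ρ₁)
        (Metric.closedBall 0 ρ₂) (Metric.closedBall 0 R)) := by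
    refine volume_addTriples_le_closedBall (A := ![A₀, B₀, C]) (ρ := ![ρ₁, ρ₂, R]) ?_ ?_ <;>
      intro i <;> fin_cases i
    exacts [hA, hB, hC, hvolA.le, hvolB.le, hvolC.le]
  have hballs : addTriples (Metric.closedBall (0 : EuclideanSpace ℝ (Fin (k + 1))) ρ₁)
      (Metric.closedBall 0 ρ₂) (Metric.closedBall 0 R) =
      {p | ‖p.1‖ ≤ ρ₁ ∧ ‖p.2‖ ≤ ρ₂ ∧ ‖p.1 + p.2‖ ≤ R} := by
    simp only [addTriples, mem_closedBall_zero_iff]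
  refine ⟨hballs ▸ hmain, ?_⟩
  rw [integral_integral_indicator_mul_eq hA hB hC hAfin.ne hBfin.ne,
    integral_integral_indicator_mul_eq (hmeas _) (hmeas _) (hmeas _)
      measure_closedBall_lt_top.ne measure_closedBall_lt_top.ne]
  exact ENNReal.toReal_mono
    (volume_addTriples_ne_top measure_closedBall_lt_top.ne measure_closedBall_lt_top.ne) hmain
end
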